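/- arXiv:2308.15416 — 3 statements merged into one kernel-verified Lean document; each statement's English description precedes it below -/
import Mathlib

section
/- For every integer k ≥ 1, the segment number of a k-banana equals ⌊3k/2⌋; that is, every planar straight-line drawing of a k-banana has at least ⌊3k/2⌋ segments, and some planar straight-line drawing of a k-banana has exactly ⌊3k/2⌋ segments. -/
/-!
Write `a`, `b` for the covering vertices and `c i` for the independent ones.

*Lower bound.* In a planar drawing each `c i` takes part in at most one alignment. The decisive case
(`no_double_turn`) is `a` strictly between `c i` and `c j` together with `b` strictly between `c i`
and `c j'`: then the edges `b c j` and `a c j'` are the diagonals of the convex quadrilateral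
`a, b, c j', c j` and cross. All other coincidences put a vertex on a foreign edge. Hence an edge is
aligned with at most one other edge, so every segment consists of one or two edges, and at most one
of the two edges at `c i` lies in a two-edge segment, unless `c i` lies between `a` and `b`, which
happens for at most one `i`. Give an edge weight `1` if it is aligned with another edge and `2`
otherwise. Every segment has total weight at most `2`, while the total weight is at least `3 k - 1`;
so there are at least `⌈(3 k - 1) / 2⌉ = ⌊3 k / 2⌋` segments.

*Upper bound.* Put `a = (0, 0)` and `b = (0, 2)`, and consider the points `(-M, 1)` for `M ≥ 0` and
`(2 / M, -2 / M ^ 2)` for `M ≥ 1`. On either side of the line `a b` the paths `a c i b` are nested, so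
any subset of these points gives a planar drawing. The two points with the same `M ≥ 1` are aligned
at `a`, and the point `(0, 1)` lies between `a` and `b`; it is used exactly when `k` is odd. Then
`⌊3 k / 2⌋` edges represent all segments.
-/

open Set

variable {V : Type*}

/-- A planar straight-line drawing of a simple graph `G` in the plane `ℝ × ℝ`. -/
structure IsPlanarDrawing (G : SimpleGraph V) (ρ : V → ℝ × ℝ) : Prop where
  inj : Function.Injective ρ
  edge_inter : ∀ ⦃u v x y : V⦄, G.Adj u v → G.Adj x y → s(u, v) ≠ s(x, y) →
    ∀ p : ℝ × ℝ, p ∈ segment ℝ (ρ u) (ρ v) → p ∈ segment ℝ (ρ x) (ρ y) →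
      ∃ w : V, (w = u ∨ w = v) ∧ (w = x ∨ w = y) ∧ p = ρ w
  vertex_not_on_edge : ∀ ⦃u v w : V⦄, G.Adj u v → w ≠ u → w ≠ v →
    ρ w ∉ segment ℝ (ρ u) (ρ v)

/-- Two incident edges `e = {u,v}` and `f = {v,w}` are aligned in the drawing `ρ`
if the image of the shared vertex `v` lies strictly between the images of `u` and `w`. -/
def Aligned (G : SimpleGraph V) (ρ : V → ℝ × ℝ) (e f : Sym2 V) : Prop :=
  ∃ u v w : V, u ≠ w ∧ G.Adj u v ∧ G.Adj v w ∧ e = s(u, v) ∧ f = s(v, w) ∧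
    ρ v ∈ openSegment ℝ (ρ u) (ρ w)

/-- The number of (unordered) pairs of incident edges that are aligned in the drawing `ρ`. -/
noncomputable def numAlignedPairs (G : SimpleGraph V) (ρ : V → ℝ × ℝ) : ℕ :=
  Set.ncard {q : Sym2 (Sym2 V) | ∃ e f : Sym2 V, q = s(e, f) ∧ Aligned G ρ e f}

/-- The number of segments of the drawing `ρ`: the number of equivalence classes of edges
under the reflexive-transitive closure of the alignment relation. -/
noncomputable def numSegments (G : SimpleGraph V) (ρ : V → ℝ × ℝ) : ℕ :=
  Set.ncard {S : Set (Sym2 V) |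
    ∃ e ∈ G.edgeSet, S = {f | Relation.ReflTransGen (Aligned G ρ) e f}}

/-- The segment number of `G`: the minimum number of segments over all
planar straight-line drawings of `G`. -/
noncomputable def segNumber (G : SimpleGraph V) : ℕ :=
  sInf {n : ℕ | ∃ ρ : V → ℝ × ℝ, IsPlanarDrawing G ρ ∧ numSegments G ρ = n}

/-- A line in the plane. -/
def IsLine (L : Set (ℝ × ℝ)) : Prop :=
  ∃ a b : ℝ × ℝ, a ≠ b ∧ L = {p : ℝ × ℝ | ∃ t : ℝ, p = a + t • (b - a)}

/-- The line cover number of `G`: the minimum, over all planar straight-line drawings of `G`,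
of the minimum number of lines whose union contains the drawn segments of all edges. -/
noncomputable def linNumber (G : SimpleGraph V) : ℕ :=
  sInf {n : ℕ | ∃ ρ : V → ℝ × ℝ, IsPlanarDrawing G ρ ∧
    ∃ 𝓛 : Finset (Set (ℝ × ℝ)), 𝓛.card = n ∧ (∀ L ∈ 𝓛, IsLine L) ∧
      ∀ ⦃u v : V⦄, G.Adj u v → segment ℝ (ρ u) (ρ v) ⊆ ⋃ L ∈ 𝓛, L}

/-- The `k`-banana: vertices `a = Sum.inl false`, `b = Sum.inl true` (covering vertices) and
`c i = Sum.inr i` for `i : Fin k` (independent vertices); edges `{a, c i}` and `{c i, b}`. -/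
def banana (k : ℕ) : SimpleGraph (Bool ⊕ Fin k) :=
  SimpleGraph.fromRel fun x y =>
    ∃ i : Fin k, (x = Sum.inl false ∨ x = Sum.inl true) ∧ y = Sum.inr i

/-- A connected component of `G` is a path component if its induced subgraph is isomorphic
to a path graph with at least two vertices (i.e., at least one edge). -/
def IsPathComponent (G : SimpleGraph V) (c : G.ConnectedComponent) : Prop :=
  ∃ n : ℕ, 2 ≤ n ∧ Nonempty (G.induce c.supp ≃g SimpleGraph.pathGraph n)

/-! ### Edges and alignment in a banana -/

namespace Banana

/-- The edge of the `k`-banana joining the covering vertex `s` to the `i`-th independent vertex. -/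
def edge {k : ℕ} (s : Bool) (i : Fin k) : Sym2 (Bool ⊕ Fin k) := s(Sum.inl s, Sum.inr i)

/-- The segment of the edge `e`, as the set of all edges reachable from `e` by alignments. -/
def cls {V : Type*} (G : SimpleGraph V) (ρ : V → ℝ × ℝ) (e : Sym2 V) : Set (Sym2 V) :=
  {f | Relation.ReflTransGen (Aligned G ρ) e f}

lemma adj_iff {k : ℕ} (x y : Bool ⊕ Fin k) : (banana k).Adj x y ↔
    (∃ s i, x = Sum.inl s ∧ y = Sum.inr i) ∨ (∃ s i, x = Sum.inr i ∧ y = Sum.inl s) := by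
  rcases x with (_ | _) | i <;> rcases y with (_ | _) | j <;> simp [banana]

lemma adj_lr {k : ℕ} (s : Bool) (i : Fin k) : (banana k).Adj (Sum.inl s) (Sum.inr i) :=
  (adj_iff _ _).2 (Or.inl ⟨s, i, rfl, rfl⟩)

lemma adj_rl {k : ℕ} (s : Bool) (i : Fin k) : (banana k).Adj (Sum.inr i) (Sum.inl s) :=
  (adj_lr s i).symm

lemma edge_inj {k : ℕ} {s s' : Bool} {i j : Fin k} :
    edge s i = edge s' j ↔ s = s' ∧ i = j := by
  simp [edge]

lemma edgeSet_iff {k : ℕ} (e : Sym2 (Bool ⊕ Fin k)) :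
    e ∈ (banana k).edgeSet ↔ ∃ s i, e = edge s i := by
  induction e using Sym2.ind with
  | _ x y =>
    rw [SimpleGraph.mem_edgeSet, adj_iff]
    constructor
    · rintro (⟨s, i, rfl, rfl⟩ | ⟨s, i, rfl, rfl⟩)
      · exact ⟨s, i, rfl⟩
      · exact ⟨s, i, Sym2.eq_swap⟩
    · rintro ⟨s, i, h⟩
      rcases Sym2.eq_iff.1 h with ⟨rfl, rfl⟩ | ⟨rfl, rfl⟩
      · exact Or.inl ⟨s, i, rfl, rfl⟩
      · exact Or.inr ⟨s, i, rfl, rfl⟩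

lemma aligned_symm {V : Type*} {G : SimpleGraph V} {ρ : V → ℝ × ℝ} {e f : Sym2 V}
    (h : Aligned G ρ e f) : Aligned G ρ f e := by
  obtain ⟨u, v, w, h1, h2, h3, h4, h5, h6⟩ := h
  refine ⟨w, v, u, h1.symm, h3.symm, h2.symm, ?_, ?_, ?_⟩
  · rw [h5, Sym2.eq_swap]
  · rw [h4, Sym2.eq_swap]
  · rwa [openSegment_symm]

lemma cls_eq_of_aligned {V : Type*} {G : SimpleGraph V} {ρ : V → ℝ × ℝ} {e f : Sym2 V}
    (h : Aligned G ρ e f) : cls G ρ e = cls G ρ f := by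
  ext g
  exact ⟨fun hg => Relation.ReflTransGen.head (aligned_symm h) hg,
    fun hg => Relation.ReflTransGen.head h hg⟩

/-- Two edges of a banana can be aligned only at a common covering vertex or at a common independent
vertex. -/
lemma aligned_cases {k : ℕ} {ρ : Bool ⊕ Fin k → ℝ × ℝ} {s : Bool} {i : Fin k}
    {f : Sym2 (Bool ⊕ Fin k)} (h : Aligned (banana k) ρ (edge s i) f) :
    (∃ j, i ≠ j ∧ f = edge s j ∧
      ρ (Sum.inl s) ∈ openSegment ℝ (ρ (Sum.inr i)) (ρ (Sum.inr j))) ∨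
    (f = edge (!s) i ∧
      ρ (Sum.inr i) ∈ openSegment ℝ (ρ (Sum.inl s)) (ρ (Sum.inl (!s)))) := by
  obtain ⟨u, v, w, h1, h2, h3, h4, h5, h6⟩ := h
  rcases Sym2.eq_iff.1 h4 with ⟨rfl, rfl⟩ | ⟨rfl, rfl⟩
  · right
    rcases (adj_iff _ _).1 h3 with ⟨s', j, h, rfl⟩ | ⟨s', j, h, rfl⟩
    · simp at h
    · have hs : s' = !s := by
        cases s <;> cases s' <;> simp_all
      subst hs
      exact ⟨by rw [h5, edge, Sym2.eq_swap], h6⟩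
  · left
    rcases (adj_iff _ _).1 h3 with ⟨s', j, h, rfl⟩ | ⟨s', j, h, rfl⟩
    · refine ⟨j, fun hij => h1 (by rw [hij]), ?_, h6⟩
      rw [h5, edge]
    · simp at h

/-! ### Plane geometry -/

lemma mem_segment_of_ray {A C D D' : ℝ × ℝ} (h : A ∈ openSegment ℝ C D)
    (h' : A ∈ openSegment ℝ C D') : D ∈ segment ℝ A D' ∨ D' ∈ segment ℝ A D := by
  -- With `A = x C + y D`, the point `D` is at distance proportional to `x / y` from `A`.
  have key : ∀ {x y x' y' : ℝ} {D D' : ℝ × ℝ}, 0 < x → 0 < y → x + y = 1 → x • C + y • D = A →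
      0 < x' → 0 < y' → x' + y' = 1 → x' • C + y' • D' = A → x * y' ≤ x' * y →
      D ∈ segment ℝ A D' := by
    intro x y x' y' D D' hx hy hxy h hx' hy' hxy' h' hle
    have e1 := congrArg Prod.fst h
    have e2 := congrArg Prod.snd h
    have e3 := congrArg Prod.fst h'
    have e4 := congrArg Prod.snd h'
    simp only [Prod.fst_add, Prod.snd_add, Prod.smul_fst, Prod.smul_snd, smul_eq_mul] at e1 e2 e3 e4
    obtain rfl : y = 1 - x := by linarith
    obtain rfl : y' = 1 - x' := by linarith
    refine ⟨1 - x * (1 - x') / (x' * (1 - x)), x * (1 - x') / (x' * (1 - x)), ?_, by positivity,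
      by ring, ?_⟩
    · rw [sub_nonneg, div_le_one (by positivity)]
      exact hle
    · ext
      · simp only [Prod.fst_add, Prod.smul_fst, smul_eq_mul]
        field_simp
        linear_combination x * e3 - x' * e1
      · simp only [Prod.snd_add, Prod.smul_snd, smul_eq_mul]
        field_simp
        linear_combination x * e4 - x' * e2
  obtain ⟨x, y, hx, hy, hxy, h⟩ := h
  obtain ⟨x', y', hx', hy', hxy', h'⟩ := h'
  rcases le_total (x * y') (x' * y) with hle | hle
  · exact Or.inl (key hx hy hxy h hx' hy' hxy' h' hle)
  · exact Or.inr (key hx' hy' hxy' h' hx hy hxy h hle)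

lemma mem_segment_of_mid {A B C D : ℝ × ℝ} (h : C ∈ openSegment ℝ A B)
    (h' : A ∈ openSegment ℝ C D) : A ∈ segment ℝ B D := by
  obtain ⟨x, y, hx, hy, hxy, h⟩ := h
  obtain ⟨z, w, hz, hw, hzw, h'⟩ := h'
  have e1 := congrArg Prod.fst h
  have e2 := congrArg Prod.snd h
  have e3 := congrArg Prod.fst h'
  have e4 := congrArg Prod.snd h'
  simp only [Prod.fst_add, Prod.snd_add, Prod.smul_fst, Prod.smul_snd, smul_eq_mul] at e1 e2 e3 e4
  have hp : 0 < z * y + w := by positivity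
  obtain rfl : y = 1 - x := by linarith
  obtain rfl : w = 1 - z := by linarith
  refine ⟨z * (1 - x) / (z * (1 - x) + (1 - z)), (1 - z) / (z * (1 - x) + (1 - z)), by positivity,
    by positivity, by field_simp, ?_⟩
  ext
  · simp only [Prod.fst_add, Prod.smul_fst, smul_eq_mul]
    field_simp
    linear_combination e3 + z * e1
  · simp only [Prod.snd_add, Prod.smul_snd, smul_eq_mul]
    field_simp
    linear_combination e4 + z * e2

lemma mem_segment_of_both_mid {A B C D : ℝ × ℝ} (h : C ∈ openSegment ℝ A B)
    (h' : D ∈ openSegment ℝ A B) : C ∈ segment ℝ A D ∨ D ∈ segment ℝ A C := by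
  have key : ∀ {x y x' y' : ℝ} {C D : ℝ × ℝ}, 0 < y → x + y = 1 → x • A + y • B = C →
      0 < y' → x' + y' = 1 → x' • A + y' • B = D → y ≤ y' → C ∈ segment ℝ A D := by
    intro x y x' y' C D hy hxy h hy' hxy' h' hle
    obtain rfl : x = 1 - y := by linarith
    obtain rfl : x' = 1 - y' := by linarith
    refine ⟨1 - y / y', y / y', ?_, by positivity, by ring, ?_⟩
    · rw [sub_nonneg, div_le_one (by positivity)]
      exact hle
    · rw [← h, ← h']
      ext
      · simp only [Prod.fst_add, Prod.smul_fst, smul_eq_mul]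
        field_simp
        ring
      · simp only [Prod.snd_add, Prod.smul_snd, smul_eq_mul]
        field_simp
        ring
  obtain ⟨x, y, hx, hy, hxy, h⟩ := h
  obtain ⟨x', y', hx', hy', hxy', h'⟩ := h'
  rcases le_total y y' with hle | hle
  · exact Or.inl (key hy hxy h hy' hxy' h' hle)
  · exact Or.inr (key hy' hxy' h' hy hxy h hle)

/-- If `A` lies between `C` and `D` and `B` lies between `C` and `D'`, then the segments `B D` and
`A D'` meet, at a point of the second one which is different from `D'` unless `A = D'`. -/
lemma exists_crossing {A B C D D' : ℝ × ℝ} (h : A ∈ openSegment ℝ C D)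
    (h' : B ∈ openSegment ℝ C D') :
    ∃ p, p ∈ segment ℝ B D ∧ p ∈ segment ℝ A D' ∧ (p = D' → A = D') := by
  obtain ⟨x, y, hx, hy, hxy, h⟩ := h
  obtain ⟨x', y', hx', hy', hxy', h'⟩ := h'
  have hp : 0 < x' + x * y' := by positivity
  have hp' : x + x' * y = x' + x * y' := by
    obtain rfl : y = 1 - x := by linarith
    obtain rfl : y' = 1 - x' := by linarith
    ring
  have hq : 0 < x + x' * y := by positivity
  refine ⟨(x' / (x' + x * y')) • A + (x * y' / (x' + x * y')) • D', ?_,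
    ⟨_, _, by positivity, by positivity, by field_simp, rfl⟩, ?_⟩
  · refine ⟨x / (x + x' * y), x' * y / (x + x' * y), by positivity, by positivity,
      by field_simp, ?_⟩
    rw [hp', ← h, ← h']
    ext
    · simp only [Prod.fst_add, Prod.smul_fst, smul_eq_mul]
      field_simp
      ring
    · simp only [Prod.snd_add, Prod.smul_snd, smul_eq_mul]
      field_simp
      ring
  · intro hpD
    have e1 := congrArg Prod.fst hpD
    have e2 := congrArg Prod.snd hpD
    simp only [Prod.fst_add, Prod.snd_add, Prod.smul_fst, Prod.smul_snd, smul_eq_mul] at e1 e2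
    field_simp at e1 e2
    ext
    · refine mul_left_cancel₀ hx'.ne' ?_
      linear_combination e1
    · refine mul_left_cancel₀ hx'.ne' ?_
      linear_combination e2

/-! ### Alignments in a planar drawing -/

section Lower

variable {k : ℕ} {ρ : Bool ⊕ Fin k → ℝ × ℝ}

lemma turn_unique (hρ : IsPlanarDrawing (banana k) ρ) {s : Bool} {i j j' : Fin k}
    (h : ρ (Sum.inl s) ∈ openSegment ℝ (ρ (Sum.inr i)) (ρ (Sum.inr j)))
    (h' : ρ (Sum.inl s) ∈ openSegment ℝ (ρ (Sum.inr i)) (ρ (Sum.inr j'))) : j = j' := by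
  by_contra hne
  rcases mem_segment_of_ray h h' with hm | hm
  · exact hρ.vertex_not_on_edge (adj_lr s j') (by simp) (by simpa using hne) hm
  · exact hρ.vertex_not_on_edge (adj_lr s j) (by simp) (by simpa using Ne.symm hne) hm

/-- An independent vertex cannot be aligned at both covering vertices: the continuations of its two
edges would force a crossing. -/
lemma no_double_turn (hρ : IsPlanarDrawing (banana k) ρ) {s : Bool} {i j j' : Fin k}
    (h : ρ (Sum.inl s) ∈ openSegment ℝ (ρ (Sum.inr i)) (ρ (Sum.inr j)))
    (h' : ρ (Sum.inl (!s)) ∈ openSegment ℝ (ρ (Sum.inr i)) (ρ (Sum.inr j'))) : False := by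
  obtain ⟨p, hp, hp', hD⟩ := exists_crossing h h'
  obtain ⟨w, hw, hw', rfl⟩ := hρ.edge_inter (adj_lr (!s) j) (adj_lr s j')
    (by simp) p hp hp'
  have hwj : w = Sum.inr j' := by
    rcases hw with rfl | rfl <;> rcases hw' with hw' | hw' <;> simp_all
  have := hρ.inj (hD (by rw [hwj]))
  simp at this

lemma no_turn_of_mid (hρ : IsPlanarDrawing (banana k) ρ) {s : Bool} {i j : Fin k}
    (h : ρ (Sum.inr i) ∈ openSegment ℝ (ρ (Sum.inl s)) (ρ (Sum.inl (!s))))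
    (h' : ρ (Sum.inl s) ∈ openSegment ℝ (ρ (Sum.inr i)) (ρ (Sum.inr j))) : False :=
  hρ.vertex_not_on_edge (adj_lr (!s) j) (by simp) (by simp) (mem_segment_of_mid h h')

lemma mid_unique (hρ : IsPlanarDrawing (banana k) ρ) {i j : Fin k}
    (h : ρ (Sum.inr i) ∈ openSegment ℝ (ρ (Sum.inl false)) (ρ (Sum.inl true)))
    (h' : ρ (Sum.inr j) ∈ openSegment ℝ (ρ (Sum.inl false)) (ρ (Sum.inl true))) : i = j := by
  by_contra hne
  rcases mem_segment_of_both_mid h h' with hm | hm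
  · exact hρ.vertex_not_on_edge (adj_lr false j) (by simp) (by simpa using hne) hm
  · exact hρ.vertex_not_on_edge (adj_lr false i) (by simp) (by simpa using Ne.symm hne) hm

lemma aligned_unique (hρ : IsPlanarDrawing (banana k) ρ) {s : Bool} {i : Fin k}
    {f f' : Sym2 (Bool ⊕ Fin k)} (h : Aligned (banana k) ρ (edge s i) f)
    (h' : Aligned (banana k) ρ (edge s i) f') : f = f' := by
  rcases aligned_cases h with ⟨j, -, rfl, hj⟩ | ⟨rfl, hm⟩ <;>
  rcases aligned_cases h' with ⟨j', -, rfl, hj'⟩ | ⟨rfl, hm'⟩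
  · rw [turn_unique hρ hj hj']
  · exact (no_turn_of_mid hρ hm' hj).elim
  · exact (no_turn_of_mid hρ hm hj').elim
  · rfl

lemma aligned_isEdge {s : Bool} {i : Fin k} {f : Sym2 (Bool ⊕ Fin k)}
    (h : Aligned (banana k) ρ (edge s i) f) : ∃ s' j, f = edge s' j := by
  rcases aligned_cases h with ⟨j, -, rfl, -⟩ | ⟨rfl, -⟩
  · exact ⟨_, _, rfl⟩
  · exact ⟨_, _, rfl⟩

/-- Segments of a planar drawing of a banana have at most two edges. -/
lemma mem_cls (hρ : IsPlanarDrawing (banana k) ρ) {s : Bool} {i : Fin k}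
    {f : Sym2 (Bool ⊕ Fin k)} (h : f ∈ cls (banana k) ρ (edge s i)) :
    f = edge s i ∨ Aligned (banana k) ρ (edge s i) f := by
  change Relation.ReflTransGen _ _ _ at h
  induction h with
  | refl => exact Or.inl rfl
  | tail _ hg ih =>
    rcases ih with rfl | ih
    · exact Or.inr hg
    · left
      obtain ⟨s', j, rfl⟩ := aligned_isEdge ih
      exact aligned_unique hρ hg (aligned_symm ih)

/-- The vertex `c i` lies strictly between the two covering vertices. -/
def IsMid (ρ : Bool ⊕ Fin k → ℝ × ℝ) (i : Fin k) : Prop :=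
  ρ (Sum.inr i) ∈ openSegment ℝ (ρ (Sum.inl false)) (ρ (Sum.inl true))

lemma isMid_of_aligned (hρ : IsPlanarDrawing (banana k) ρ) {i : Fin k}
    {f f' : Sym2 (Bool ⊕ Fin k)} (h : Aligned (banana k) ρ (edge false i) f)
    (h' : Aligned (banana k) ρ (edge true i) f') : IsMid ρ i := by
  rcases aligned_cases h with ⟨j, -, rfl, hj⟩ | ⟨rfl, hm⟩
  · rcases aligned_cases h' with ⟨j', -, rfl, hj'⟩ | ⟨rfl, hm'⟩
    · exact (no_double_turn hρ hj hj').elim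
    · rw [openSegment_symm] at hm'
      exact hm'
  · exact hm

lemma numSegments_eq (ρ : Bool ⊕ Fin k → ℝ × ℝ) :
    numSegments (banana k) ρ =
      (Set.range fun e : Bool × Fin k => cls (banana k) ρ (edge e.1 e.2)).ncard := by
  unfold numSegments
  congr 1
  ext S
  constructor
  · rintro ⟨e, he, rfl⟩
    obtain ⟨s, i, rfl⟩ := (edgeSet_iff e).1 he
    exact ⟨(s, i), rfl⟩
  · rintro ⟨⟨s, i⟩, rfl⟩
    exact ⟨edge s i, (edgeSet_iff _).2 ⟨s, i, rfl⟩, rfl⟩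

open Classical in
/-- The weight of an edge: `1` if it is aligned with some edge, and `2` otherwise. -/
noncomputable def wt (ρ : Bool ⊕ Fin k → ℝ × ℝ) (e : Bool × Fin k) : ℕ :=
  if ∃ f, Aligned (banana k) ρ (edge e.1 e.2) f then 1 else 2

open Classical in
/-- The edges of one segment have total weight at most `2`. -/
lemma fiber_weight (hρ : IsPlanarDrawing (banana k) ρ) (S : Set (Sym2 (Bool ⊕ Fin k))) :
    ∑ e : Bool × Fin k with cls (banana k) ρ (edge e.1 e.2) = S, wt ρ e ≤ 2 := by
  set F := Finset.univ.filter fun e : Bool × Fin k => cls (banana k) ρ (edge e.1 e.2) = S with hF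
  rcases F.eq_empty_or_nonempty with h0 | ⟨e₀, he₀⟩
  · simp [h0]
  have hmem : ∀ e ∈ F, e = e₀ ∨ Aligned (banana k) ρ (edge e₀.1 e₀.2) (edge e.1 e.2) := by
    intro e he
    have h1 : cls (banana k) ρ (edge e.1 e.2) = cls (banana k) ρ (edge e₀.1 e₀.2) := by
      rw [(Finset.mem_filter.1 he).2, (Finset.mem_filter.1 he₀).2]
    have h2 : edge e.1 e.2 ∈ cls (banana k) ρ (edge e₀.1 e₀.2) := by
      rw [← h1]
      exact Relation.ReflTransGen.refl
    refine (mem_cls hρ h2).imp_left fun h => ?_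
    exact Prod.ext (edge_inj.1 h).1 (edge_inj.1 h).2
  by_cases hU : ∃ f, Aligned (banana k) ρ (edge e₀.1 e₀.2) f
  · obtain ⟨f, hf⟩ := hU
    obtain ⟨s, j, rfl⟩ := aligned_isEdge hf
    have hsub : F ⊆ {e₀, (s, j)} := by
      intro e he
      rcases hmem e he with h | h
      · simp [h]
      · have := edge_inj.1 (aligned_unique hρ h hf)
        simp [Prod.ext_iff, this]
    calc ∑ e ∈ F, wt ρ e ≤ ∑ e ∈ {e₀, (s, j)}, wt ρ e := Finset.sum_le_sum_of_subset hsub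
      _ ≤ ({e₀, (s, j)} : Finset (Bool × Fin k)).card • 1 := by
          refine Finset.sum_le_card_nsmul _ _ _ fun e he => ?_
          have : ∃ f, Aligned (banana k) ρ (edge e.1 e.2) f := by
            rcases Finset.mem_insert.1 he with rfl | he
            · exact ⟨_, hf⟩
            · rw [Finset.mem_singleton.1 he]
              exact ⟨_, aligned_symm hf⟩
          simp [wt, this]
      _ ≤ 2 := by simpa using Finset.card_le_two
  · have hsub : F ⊆ {e₀} := by
      intro e he
      rcases hmem e he with h | h
      · simp [h]
      · exact (hU ⟨_, h⟩).elim
    calc ∑ e ∈ F, wt ρ e ≤ ∑ e ∈ {e₀}, wt ρ e := Finset.sum_le_sum_of_subset hsub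
      _ ≤ 2 := by simp [wt, hU]

open Classical in
lemma total_weight (hρ : IsPlanarDrawing (banana k) ρ) :
    3 * k ≤ (∑ e : Bool × Fin k, wt ρ e) + 1 := by
  have h1 : ∀ i : Fin k, 3 ≤ wt ρ (true, i) + wt ρ (false, i) + if IsMid ρ i then 1 else 0 := by
    intro i
    by_cases ht : ∃ f, Aligned (banana k) ρ (edge true i) f <;>
    by_cases hf : ∃ f, Aligned (banana k) ρ (edge false i) f
    · have : IsMid ρ i := isMid_of_aligned hρ hf.choose_spec ht.choose_spec
      simp [wt, ht, hf, this]
    all_goals simp only [wt, ht, hf, if_true, if_false]; omega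
  have h2 : ∑ i : Fin k, (if IsMid ρ i then 1 else 0) ≤ 1 := by
    rw [← Finset.card_filter, Finset.card_le_one]
    intro i hi j hj
    exact mid_unique hρ (Finset.mem_filter.1 hi).2 (Finset.mem_filter.1 hj).2
  have h3 : ∑ _i : Fin k, 3 ≤ _ := Finset.sum_le_sum fun i _ => h1 i
  rw [Finset.sum_add_distrib, Finset.sum_add_distrib] at h3
  rw [Fintype.sum_prod_type, Fintype.sum_bool]
  simp only [Finset.sum_const, Finset.card_univ, Fintype.card_fin, smul_eq_mul] at h3
  omega

lemma lower_bound (hρ : IsPlanarDrawing (banana k) ρ) :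
    3 * k / 2 ≤ numSegments (banana k) ρ := by
  classical
  rw [numSegments_eq, ← Set.image_univ, ← Finset.coe_univ, ← Finset.coe_image,
    Set.ncard_coe_finset]
  set I := Finset.univ.image fun e : Bool × Fin k => cls (banana k) ρ (edge e.1 e.2) with hI
  have h1 : ∑ S ∈ I, ∑ e : Bool × Fin k with cls (banana k) ρ (edge e.1 e.2) = S, wt ρ e =
      ∑ e : Bool × Fin k, wt ρ e :=
    Finset.sum_fiberwise_of_maps_to (fun e _ => Finset.mem_image_of_mem _ (Finset.mem_univ e)) _
  have h2 := Finset.sum_le_card_nsmul I _ 2 fun S _ => fiber_weight hρ S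
  have h3 := total_weight hρ
  rw [h1, smul_eq_mul] at h2
  omega

end Lower

/-! ### An optimal drawing -/

/-- Positions of the independent vertices: `(-M, 1)` at index `2 M`, and `(2 / M, -2 / M ^ 2)` at
index `2 M - 1`. For `M ≥ 1` these two points are collinear with the origin. -/
noncomputable def pt (n : ℕ) : ℝ × ℝ :=
  if n % 2 = 0 then (-((n / 2 : ℕ) : ℝ), 1)
  else (2 / ((n / 2 + 1 : ℕ) : ℝ), -2 / ((n / 2 + 1 : ℕ) : ℝ) ^ 2)

/-- The second coordinate of a covering vertex; both have first coordinate `0`. -/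
noncomputable def ht (s : Bool) : ℝ := if s then 2 else 0

/-- The drawing in which the `i`-th independent vertex is placed at `pt (i + d)`. -/
noncomputable def draw (k d : ℕ) : Bool ⊕ Fin k → ℝ × ℝ
  | Sum.inl s => (0, ht s)
  | Sum.inr i => pt (i + d)

lemma left_left {M N t t' : ℝ} {s s' : Bool} (hne : M ≠ N) (ht1 : t ≤ 1) (ht1' : t' ≤ 1)
    (h1 : t * -M = t' * -N) (h2 : ht s + t * (1 - ht s) = ht s' + t' * (1 - ht s')) :
    s = s' ∧ t = 0 ∧ t' = 0 := by
  have hMN : M - N ≠ 0 := sub_ne_zero.2 hne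
  have same : t = t' → t = 0 ∧ t' = 0 := by
    rintro rfl
    have : t * (M - N) = 0 := by linear_combination -h1
    simpa [hMN] using this
  have diff : t + t' = 2 → False := by
    intro h
    obtain rfl : t = 1 := by linarith
    obtain rfl : t' = 1 := by linarith
    exact hne (by linarith)
  cases s <;> cases s' <;> simp only [ht, if_true, Bool.false_eq_true, if_false] at h2
  · exact ⟨rfl, same (by linarith)⟩
  · exact (diff (by linarith)).elim
  · exact (diff (by linarith)).elim
  · exact ⟨rfl, same (by linarith)⟩

lemma left_right {M N t t' y : ℝ} {s s' : Bool} (hM : 0 ≤ M) (hN : 0 < N) (ht0 : 0 ≤ t)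
    (ht0' : 0 ≤ t') (ht1 : t ≤ 1)
    (h1 : t * -M = t' * (2 / N)) (h2 : ht s + t * (1 - ht s) = ht s' + t' * (y - ht s')) :
    s = s' ∧ t = 0 ∧ t' = 0 := by
  have hp : 0 ≤ t' * (2 / N) := by positivity
  have hq : 0 ≤ t * M := by positivity
  have h0 : t' * (2 / N) = 0 := by linarith
  obtain rfl : t' = 0 := by
    rcases mul_eq_zero.1 h0 with h | h
    · exact h
    · exact absurd h (by positivity)
  -- On the axis the left edge has height in `[0, 1]` or `[1, 2]`, so it can only meet its own apex.
  cases s <;> cases s' <;> simp only [ht, if_true, Bool.false_eq_true, if_false] at h2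
  · exact ⟨rfl, by linarith, rfl⟩
  · linarith
  · linarith
  · exact ⟨rfl, by linarith, rfl⟩

lemma right_right {M N t t' : ℝ} {s s' : Bool} (hne : M ≠ N) (hM : 1 ≤ M) (hN : 1 ≤ N)
    (ht0 : 0 ≤ t) (ht1 : t ≤ 1) (ht1' : t' ≤ 1)
    (h1 : t * (2 / M) = t' * (2 / N))
    (h2 : ht s + t * (-2 / M ^ 2 - ht s) = ht s' + t' * (-2 / N ^ 2 - ht s')) :
    s = s' ∧ t = 0 ∧ t' = 0 := by
  have hM0 : 0 < M := by linarith
  have hN0 : 0 < N := by linarith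
  have hMN : 0 < M * N - 1 := by
    rcases lt_or_gt_of_ne hne with h | h <;> nlinarith
  have hMN' : M - N ≠ 0 := sub_ne_zero.2 hne
  -- `τ` is half the first coordinate of the common point.
  obtain ⟨τ, rfl⟩ : ∃ τ, t = τ * M := ⟨t / M, by field_simp⟩
  have h3 : t' = τ * N := by
    field_simp at h1
    linarith
  subst h3
  have hτ : 0 ≤ τ := nonneg_of_mul_nonneg_left ht0 hM0
  have zero : τ = 0 → τ * M = 0 ∧ τ * N = 0 := by
    rintro rfl
    simp
  -- The edge at the lower vertex towards one point avoids the edge at the upper vertex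
  -- towards the other one.
  have cross : ∀ {M N : ℝ}, M ≠ N → 0 < M → 0 < N → 0 < M * N - 1 → τ * M ≤ 1 → τ * N ≤ 1 →
      τ * M * (-2 / M ^ 2) = 2 + τ * N * (-2 / N ^ 2 - 2) → False := by
    intro M N hne hM0 hN0 hMN h1 h1' h
    field_simp at h
    have hk : τ * (M - N) = M * N * (1 - τ * N) := by linarith
    have h5 : 0 ≤ τ * (M - N) := by
      rw [hk]
      have : 0 ≤ 1 - τ * N := by linarith
      positivity
    have hτ0 : 0 < τ := by
      rcases hτ.eq_or_lt with h0 | h0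
      · rw [← h0] at hk
        simp only [zero_mul, sub_zero, mul_one] at hk
        have : 0 < M * N := by positivity
        linarith
      · exact h0
    have h6 : 0 ≤ M - N := nonneg_of_mul_nonneg_right h5 hτ0
    have h7 : 0 < M - N := lt_of_le_of_ne h6 (Ne.symm (sub_ne_zero.2 hne))
    have h8 : τ * (M - N) ≤ 1 - τ * N := by linarith
    have h9 : 0 < 1 - τ * N := by
      have : 0 < M * N * (1 - τ * N) := by
        rw [← hk]
        positivity
      exact pos_of_mul_pos_right this (by positivity)
    nlinarith
  cases s <;> cases s' <;> simp only [ht, if_true, Bool.false_eq_true, if_false] at h2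
  · refine ⟨rfl, zero ?_⟩
    field_simp at h2
    have : τ * (M - N) = 0 := by linarith
    simpa [hMN'] using this
  · exact (cross hne hM0 hN0 hMN ht1 ht1' (by linarith)).elim
  · exact (cross hne.symm hN0 hM0 (by linarith) ht1' ht1 (by linarith)).elim
  · refine ⟨rfl, zero ?_⟩
    field_simp at h2
    have : τ * ((M - N) * (M * N - 1)) = 0 := by linarith
    simpa [hMN', hMN.ne'] using this

/-- Edges towards different independent vertices can only meet in a common covering vertex. -/
lemma edges_disjoint {m n : ℕ} (hmn : m ≠ n) {s s' : Bool} {t t' : ℝ} (ht0 : 0 ≤ t) (ht1 : t ≤ 1)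
    (ht0' : 0 ≤ t') (ht1' : t' ≤ 1) (h1 : t * (pt m).1 = t' * (pt n).1)
    (h2 : ht s + t * ((pt m).2 - ht s) = ht s' + t' * ((pt n).2 - ht s')) :
    s = s' ∧ t = 0 ∧ t' = 0 := by
  have pos : ∀ a : ℕ, (1 : ℝ) ≤ ((a + 1 : ℕ) : ℝ) := fun a => by simp
  by_cases hm : m % 2 = 0 <;> by_cases hn : n % 2 = 0 <;>
    simp only [pt, hm, hn, if_true, if_false] at h1 h2
  · exact left_left (by rw [Ne, Nat.cast_inj]; omega) ht1 ht1' h1 h2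
  · exact left_right (by positivity) (by positivity) ht0 ht0' ht1 h1 h2
  · obtain ⟨h3, h4, h5⟩ :=
      left_right (by positivity) (by positivity) ht0' ht0 ht1' h1.symm h2.symm
    exact ⟨h3.symm, h5, h4⟩
  · exact right_right (by rw [Ne, Nat.cast_inj]; omega) (pos _) (pos _) ht0 ht1 ht1' h1 h2

lemma edges_same {m : ℕ} {t t' : ℝ} (ht1 : t ≤ 1) (ht1' : t' ≤ 1)
    (h1 : t * (pt m).1 = t' * (pt m).1)
    (h2 : t * (pt m).2 = 2 + t' * ((pt m).2 - 2)) : t = 1 ∧ t' = 1 := by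
  by_cases hm : m % 2 = 0 <;> simp only [pt, hm, if_true, if_false] at h1 h2
  · exact ⟨by linarith, by linarith⟩
  · have h0 : (2 / ((m / 2 + 1 : ℕ) : ℝ)) ≠ 0 := by positivity
    obtain rfl := mul_right_cancel₀ h0 h1
    exact ⟨by linarith, by linarith⟩

lemma mem_seg {k d : ℕ} {s : Bool} {i : Fin k} {p : ℝ × ℝ}
    (h : p ∈ segment ℝ (draw k d (Sum.inl s)) (draw k d (Sum.inr i))) :
    ∃ t : ℝ, 0 ≤ t ∧ t ≤ 1 ∧
      p = (t * (pt (i + d)).1, ht s + t * ((pt (i + d)).2 - ht s)) := by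
  obtain ⟨x, y, hx, hy, hxy, rfl⟩ := h
  obtain rfl : x = 1 - y := by linarith
  refine ⟨y, hy, by linarith, ?_⟩
  ext
  · simp [draw]
  · simp only [draw, Prod.snd_add, Prod.smul_snd, smul_eq_mul]
    ring

lemma planar_aux {k d : ℕ} {s s' : Bool} {i j : Fin k} (hne : ¬ (s = s' ∧ i = j)) {p : ℝ × ℝ}
    (h : p ∈ segment ℝ (draw k d (Sum.inl s)) (draw k d (Sum.inr i)))
    (h' : p ∈ segment ℝ (draw k d (Sum.inl s')) (draw k d (Sum.inr j))) :
    (s = s' ∧ p = draw k d (Sum.inl s)) ∨ (i = j ∧ p = draw k d (Sum.inr i)) := by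
  obtain ⟨t, ht0, ht1, rfl⟩ := mem_seg h
  obtain ⟨t', ht0', ht1', he⟩ := mem_seg h'
  rw [Prod.mk.injEq] at he
  by_cases hij : i = j
  · subst hij
    right
    have h1 : t = 1 := by
      cases s <;> cases s'
      · simp at hne
      · exact (edges_same ht1 ht1' he.1 (by simpa [ht] using he.2)).1
      · exact (edges_same ht1' ht1 he.1.symm (by simpa [ht] using he.2.symm)).2
      · simp at hne
    simp [h1, draw]
  · left
    obtain ⟨h3, h4, -⟩ := edges_disjoint (by simpa [Fin.ext_iff] using hij) ht0 ht1 ht0' ht1'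
      he.1 he.2
    exact ⟨h3, by simp [h4, draw]⟩

lemma draw_planar (k d : ℕ) : IsPlanarDrawing (banana k) (draw k d) := by
  have hlr : ∀ (s : Bool) (i : Fin k), draw k d (Sum.inl s) ≠ draw k d (Sum.inr i) := by
    intro s i h
    simp only [draw, Prod.ext_iff] at h
    -- A degenerate edge (parameter `0`) towards an auxiliary point.
    have := edges_disjoint (m := i + d) (n := i + d + 1) (s := s) (s' := s) (t := 1) (t' := 0)
      (by omega) (by norm_num) le_rfl le_rfl (by norm_num) (by simp [← h.1]) (by simp [← h.2])
    simp at this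
  have hvert : ∀ (s : Bool) (i : Fin k) (w : Bool ⊕ Fin k), w ≠ Sum.inl s → w ≠ Sum.inr i →
      draw k d w ∉ segment ℝ (draw k d (Sum.inl s)) (draw k d (Sum.inr i)) := by
    rintro s i (s' | j) hs hi hw
    · obtain ⟨t, ht0, ht1, he⟩ := mem_seg hw
      simp only [draw, Prod.mk.injEq] at he
      have := (edges_disjoint (m := i + d) (n := i + d + 1) (s := s) (s' := s') (t := t) (t' := 0)
        (by omega) ht0 ht1 le_rfl (by norm_num) (by simp [← he.1]) (by simp [← he.2])).1
      exact hs (by rw [this])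
    · have hji : ¬ i = j := fun h => hi (by rw [h])
      rcases planar_aux (s' := s) (fun h => hji h.2) hw (right_mem_segment ℝ _ _) with h | h
      · exact hlr _ _ h.2.symm
      · exact hji h.1
  refine ⟨?_, ?_, ?_⟩
  · rintro (s | i) (s' | j) h
    · cases s <;> cases s' <;> simp [draw, ht] at h ⊢
    · exact (hlr _ _ h).elim
    · exact (hlr _ _ h.symm).elim
    · by_contra hne
      refine hvert false j (Sum.inr i) (by simp) hne ?_
      rw [h]
      exact right_mem_segment ℝ _ _
  · have main : ∀ (s s' : Bool) (i j : Fin k), ¬ (s = s' ∧ i = j) → ∀ p : ℝ × ℝ,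
        p ∈ segment ℝ (draw k d (Sum.inl s)) (draw k d (Sum.inr i)) →
        p ∈ segment ℝ (draw k d (Sum.inl s')) (draw k d (Sum.inr j)) →
        ∃ w : Bool ⊕ Fin k, (w = Sum.inl s ∨ w = Sum.inr i) ∧ (w = Sum.inl s' ∨ w = Sum.inr j) ∧
          p = draw k d w := by
      intro s s' i j hne p h h'
      rcases planar_aux hne h h' with ⟨rfl, hp⟩ | ⟨rfl, hp⟩
      · exact ⟨_, Or.inl rfl, Or.inl rfl, hp⟩
      · exact ⟨_, Or.inr rfl, Or.inr rfl, hp⟩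
    intro u v x y huv hxy hne p hp hp'
    rcases (adj_iff _ _).1 huv with ⟨s, i, rfl, rfl⟩ | ⟨s, i, rfl, rfl⟩ <;>
    rcases (adj_iff _ _).1 hxy with ⟨s', j, rfl, rfl⟩ | ⟨s', j, rfl, rfl⟩
    · exact main s s' i j (fun h => hne (by rw [h.1, h.2])) p hp hp'
    · rw [segment_symm] at hp'
      obtain ⟨w, h1, h2, h3⟩ := main s s' i j
        (fun h => hne (by rw [h.1, h.2, Sym2.eq_swap])) p hp hp'
      exact ⟨w, h1, h2.symm, h3⟩
    · rw [segment_symm] at hp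
      obtain ⟨w, h1, h2, h3⟩ := main s s' i j
        (fun h => hne (by rw [h.1, h.2, Sym2.eq_swap])) p hp hp'
      exact ⟨w, h1.symm, h2, h3⟩
    · rw [segment_symm] at hp hp'
      obtain ⟨w, h1, h2, h3⟩ := main s s' i j (fun h => hne (by rw [h.1, h.2])) p hp hp'
      exact ⟨w, h1.symm, h2.symm, h3⟩
  · intro u v w huv hu hv
    rcases (adj_iff _ _).1 huv with ⟨s, i, rfl, rfl⟩ | ⟨s, i, rfl, rfl⟩
    · exact hvert s i w hu hv
    · rw [segment_symm]
      exact hvert s i w hv hu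

lemma draw_aligned_turn {k d : ℕ} {i j : Fin k} (hi : (i + d : ℕ) % 2 = 1)
    (hj : (j : ℕ) = i + 1) :
    Aligned (banana k) (draw k d) (edge false i) (edge false j) := by
  refine ⟨Sum.inr i, Sum.inl false, Sum.inr j, ?_, adj_rl _ _, adj_lr _ _, Sym2.eq_swap, rfl, ?_⟩
  · intro h
    rw [Sum.inr.inj h] at hj
    omega
  · have h1 : (i + d) % 2 ≠ 0 := by omega
    have h2 : (j + d) % 2 = 0 := by omega
    have h3 : (j + d) / 2 = (i + d) / 2 + 1 := by omega
    simp only [draw, pt, h1, h2, h3, if_true, if_false, ht, Bool.false_eq_true]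
    have hM : (0 : ℝ) < (((i + d) / 2 + 1 : ℕ) : ℝ) := by positivity
    generalize (((i + d) / 2 + 1 : ℕ) : ℝ) = M at hM
    refine ⟨M ^ 2 / (M ^ 2 + 2), 2 / (M ^ 2 + 2), by positivity, by positivity, by field_simp, ?_⟩
    ext
    · simp only [Prod.fst_add, Prod.smul_fst, smul_eq_mul]
      field_simp
      ring
    · simp only [Prod.snd_add, Prod.smul_snd, smul_eq_mul]
      field_simp
      ring

lemma draw_aligned_mid {k d : ℕ} {i : Fin k} (hi : (i + d : ℕ) = 0) :
    Aligned (banana k) (draw k d) (edge false i) (edge true i) := by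
  refine ⟨Sum.inl false, Sum.inr i, Sum.inl true, by simp, adj_lr _ _, adj_rl _ _, rfl,
    Sym2.eq_swap, ?_⟩
  refine ⟨1 / 2, 1 / 2, by norm_num, by norm_num, by norm_num, ?_⟩
  simp [draw, hi, pt, ht]

/-- The shift `1 - k % 2` skips the point `pt 0 = (0, 1)` when `k` is even. -/
lemma upper_bound {k : ℕ} (hk : 1 ≤ k) :
    numSegments (banana k) (draw k (1 - k % 2)) ≤ 3 * k / 2 := by
  classical
  set d := 1 - k % 2 with hd
  -- Representatives: all edges at the upper vertex, and the `k / 2` edges from the lower vertex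
  -- to the points on the left.
  let rep : ℕ → Set (Sym2 (Bool ⊕ Fin k)) := fun r =>
    if h : r < k then cls (banana k) (draw k d) (edge true ⟨r, h⟩)
    else if h' : 2 * (r - k + 1) - d < k then
      cls (banana k) (draw k d) (edge false ⟨2 * (r - k + 1) - d, h'⟩)
    else ∅
  have hup : ∀ i : Fin k, rep i = cls (banana k) (draw k d) (edge true i) := by
    intro i
    simp [rep]
  have heven : ∀ i : Fin k, (i + d : ℕ) % 2 = 0 → (i + d : ℕ) ≠ 0 →
      ∃ r < 3 * k / 2, rep r = cls (banana k) (draw k d) (edge false i) := by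
    intro i h0 h1
    have hik := i.isLt
    refine ⟨k + ((i + d) / 2 - 1), by omega, ?_⟩
    have e2 : 2 * ((i + d) / 2 - 1 + 1) - d = i := by omega
    simp [rep, e2]
  rw [numSegments_eq]
  have hsub : (Set.range fun e : Bool × Fin k => cls (banana k) (draw k d) (edge e.1 e.2)) ⊆
      ((Finset.range (3 * k / 2)).image rep : Finset (Set (Sym2 (Bool ⊕ Fin k)))) := by
    rintro _ ⟨⟨s, i⟩, rfl⟩
    simp only [Finset.coe_image, Set.mem_image, Finset.mem_coe, Finset.mem_range]
    have hik := i.isLt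
    cases s
    · by_cases h0 : (i + d : ℕ) = 0
      · exact ⟨i, by omega, by rw [hup, cls_eq_of_aligned (draw_aligned_mid h0)]⟩
      · by_cases h1 : (i + d : ℕ) % 2 = 0
        · exact heven i h1 h0
        · have hlt : (i : ℕ) + 1 < k := by omega
          rw [cls_eq_of_aligned (draw_aligned_turn (j := ⟨i + 1, hlt⟩) (by omega) rfl)]
          exact heven ⟨i + 1, hlt⟩ (by simp only; omega) (by simp only; omega)
    · exact ⟨i, by omega, hup i⟩
  calc _ ≤ (((Finset.range (3 * k / 2)).image rep : Finset _) : Set _).ncard :=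
        Set.ncard_le_ncard hsub (Finset.finite_toSet _)
    _ ≤ 3 * k / 2 := by
        rw [Set.ncard_coe_finset]
        exact Finset.card_image_le.trans (by simp)

end Banana

/-- For `k ≥ 1`, the segment number of a `k`-banana equals `⌊3k/2⌋`:
every planar straight-line drawing has at least `⌊3k/2⌋` segments and some drawing
attains exactly `⌊3k/2⌋` segments. -/
theorem banana_segment_number (k : ℕ) (hk : 1 ≤ k) :
    segNumber (banana k) = 3 * k / 2 ∧
    (∀ ρ : Bool ⊕ Fin k → ℝ × ℝ, IsPlanarDrawing (banana k) ρ →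
      3 * k / 2 ≤ numSegments (banana k) ρ) ∧
    (∃ ρ : Bool ⊕ Fin k → ℝ × ℝ, IsPlanarDrawing (banana k) ρ ∧
      numSegments (banana k) ρ = 3 * k / 2) := by
  have hlow : ∀ ρ : Bool ⊕ Fin k → ℝ × ℝ, IsPlanarDrawing (banana k) ρ →
      3 * k / 2 ≤ numSegments (banana k) ρ := fun ρ hρ => Banana.lower_bound hρ
  have hpl := Banana.draw_planar k (1 - k % 2)
  have hex : numSegments (banana k) (Banana.draw k (1 - k % 2)) = 3 * k / 2 :=
    le_antisymm (Banana.upper_bound hk) (hlow _ hpl)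
  refine ⟨le_antisymm (Nat.sInf_le ⟨_, hpl, hex⟩) (le_csInf ⟨_, _, hpl, hex⟩ ?_), hlow, _, hpl, hex⟩
  rintro n ⟨ρ, hρ, rfl⟩
  exact hlow ρ hρ
end

section
/- Let B be the banana path of length ℓ ≥ 1 with multiplicities k_1,…,k_ℓ ≥ 1. Set a_0 = a_ℓ = 1 and a_i = min(k_i, k_{i+1}) for 1 ≤ i ≤ ℓ−1, and set s_i = max(k_i − a_{i−1}, k_i − a_i) for 1 ≤ i ≤ ℓ. Then the segment number of B equals ∑_{i=1}^{ℓ} (2·k_i − 1 − ⌊s_i/2⌋) − ∑_{i=1}^{ℓ−1} min(k_i, k_{i+1}). -/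
/-! The segments of a drawing are the components of the *alignment graph* on the edges
(`numSegments_eq`), so the claim says that a drawing with as many alignments as possible has
`ℓ + ∑ ⌊s i / 2⌋ + ∑ min (k i) (k (i + 1))` of them.

*Lower bound.* A graph on `n` nodes with degree sum `d` has at least `n - d / 2` components
(`two_mul_card_le`), so alignments are counted. At most one path of a banana is straight
(`straight_unique`). An edge has at most one continuation through a covering vertex, inside its own
banana or in the neighbouring one; continuations inside the banana pair up its edges, so their number
is even. A straight path has no continuation inside its banana (`straight_not_opposite`). The
essential point is `no_two_bends`: a banana with covering vertices `a`, `b` cannot have an aligned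
pair of its own edges at `a` and another one at `b`. Indeed, let `p` and `q` be the cotangents of the
angles that a path makes with `ab` at its two ends. On one side of `ab` the paths are nested, so that
`p` and `q` are ordered in the same way, and `p + q > 0`. Being aligned at `a` or at `b` means having
opposite cotangents there on opposite sides of `ab`. With nesting this makes the same sum of two
cotangents positive on one side of `ab` and negative on the other. Hence each banana uses its surplus
of edges over the neighbouring banana at one end only, which yields `⌊s i / 2⌋` (`lower_arith`).

*Upper bound.* The covering vertices are placed at `(i, 0)`, one path of each banana is straight, and
the others lie alternately above and below the axis (`layout`). Cotangents that decrease along each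
banana give a planar drawing as soon as the bananas stay apart (`Admissible`, `layout_planar`).
Nearly all cotangents are the large numbers `M - j`, so that paths with the same index `j` in
neighbouring bananas are aligned. At the end of a banana with the larger surplus, the surplus
edges have cotangents from an arithmetic progression symmetric about `0`, so they pair up in opposite
edges (`endCot`, `cot_opposite`). -/

open Set

variable {V : Type*}

/-- The banana path of length `ℓ` with multiplicities `k 1, …, k ℓ`: covering vertices
`v_0, …, v_ℓ` (the `Sum.inl` vertices) where the edge `{v_{i-1}, v_i}` of the path is
replaced by a `k i`-banana whose independent vertices are the `Sum.inr ⟨i-1, j⟩`. -/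
def bananaPath (ℓ : ℕ) (k : ℕ → ℕ) :
    SimpleGraph (Fin (ℓ + 1) ⊕ Σ i : Fin ℓ, Fin (k ((i : ℕ) + 1))) :=
  SimpleGraph.fromRel fun x y =>
    ∃ (i : Fin ℓ) (j : Fin (k ((i : ℕ) + 1))),
      (x = Sum.inl i.castSucc ∨ x = Sum.inl i.succ) ∧ y = Sum.inr ⟨i, j⟩

/-! ### Counting in graphs and matchings -/

section Generic

open Classical in
/-- A graph with `c` components has at least `|E| - c` edges, in degree-sum form. -/
lemma two_mul_card_le {E : Type*} [Fintype E] (H : SimpleGraph E) (d : E → ℕ)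
    (hd : ∀ e, (H.neighborFinset e).card ≤ d e) :
    2 * Fintype.card E ≤ ∑ e, d e + 2 * Nat.card H.ConnectedComponent := by
  rw [Nat.card_eq_fintype_card]
  have key : ∀ c : H.ConnectedComponent,
      2 * (Finset.univ.filter (fun e => H.connectedComponentMk e = c)).card ≤
        ∑ e ∈ Finset.univ.filter (fun e => H.connectedComponentMk e = c), d e + 2 := by
    intro c
    have h1 := (c.connected_toSimpleGraph).card_vert_le_card_edgeSet_add_one
    have h2 := c.toSimpleGraph.sum_degrees_eq_twice_card_edges
    rw [Nat.card_eq_fintype_card, Nat.card_eq_fintype_card, ← SimpleGraph.edgeFinset_card] at h1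
    have h3 : Fintype.card c = (Finset.univ.filter (fun e => H.connectedComponentMk e = c)).card := by
      rw [← Fintype.card_subtype]
      exact Fintype.card_congr (Equiv.refl _)
    have h4 : ∑ v : c, c.toSimpleGraph.degree v ≤
        ∑ e ∈ Finset.univ.filter (fun e => H.connectedComponentMk e = c), d e := by
      rw [← Finset.sum_subtype_eq_sum_filter, Finset.subtype_univ]
      refine Finset.sum_le_sum (fun v _ => ?_)
      refine le_trans ?_ (hd v)
      rw [← SimpleGraph.card_neighborFinset_eq_degree]
      refine Finset.card_le_card_of_injOn (fun w => (w : E)) ?_ ?_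
      · intro w hw
        have hw' : c.toSimpleGraph.Adj v w := by simpa using hw
        have hw2 : H.Adj v w := by simpa [SimpleGraph.ConnectedComponent.toSimpleGraph] using hw'
        simpa using hw2
      · intro x _ y _ hxy
        exact Subtype.ext hxy
    omega
  have h5 := Finset.sum_le_sum (fun c (_ : c ∈ Finset.univ) => key c)
  rw [← Finset.mul_sum, Finset.sum_add_distrib] at h5
  have h6 := Finset.card_eq_sum_card_fiberwise (f := H.connectedComponentMk)
    (s := Finset.univ) (t := Finset.univ) (fun _ _ => Finset.mem_coe.2 (Finset.mem_univ _))
  have h7 := Finset.sum_fiberwise (Finset.univ : Finset E) H.connectedComponentMk d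
  rw [← h6, h7] at h5
  simp at h5
  omega

open Classical in
/-- If every vertex of `S` has a neighbour of larger rank, then every component contains a
vertex outside `S`. -/
lemma card_components_add_le {E : Type*} [Fintype E] (H : SimpleGraph E) (S : Finset E)
    (r : E → ℕ) (hS : ∀ e ∈ S, ∃ f, H.Adj e f ∧ r e < r f) :
    Nat.card H.ConnectedComponent + S.card ≤ Fintype.card E := by
  rw [Nat.card_eq_fintype_card]
  have hne : ∀ c : H.ConnectedComponent, ∃ e, e ∉ S ∧ H.connectedComponentMk e = c := by
    intro c
    obtain ⟨e0, he0⟩ := c.exists_rep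
    obtain ⟨e, he, hmax⟩ := Finset.exists_max_image
      (Finset.univ.filter (fun e => H.connectedComponentMk e = c)) r ⟨e0, by
        simp only [Finset.mem_filter, Finset.mem_univ, true_and]; exact he0⟩
    refine ⟨e, fun heS => ?_, by simpa using he⟩
    obtain ⟨f, hf, hr⟩ := hS e heS
    have : H.connectedComponentMk f = c := by
      rw [← (by simpa using he : H.connectedComponentMk e = c)]
      exact (SimpleGraph.ConnectedComponent.sound hf.reachable).symm
    have := hmax f (by simpa using this)
    omega
  choose g hg1 hg2 using hne
  have h1 : Fintype.card H.ConnectedComponent ≤ (Sᶜ).card := by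
    rw [← Finset.card_univ]
    refine Finset.card_le_card_of_injOn g (fun c _ => by simpa using hg1 c) ?_
    intro x _ y _ hxy
    rw [← hg2 x, ← hg2 y, hxy]
  have := Finset.card_add_card_compl S
  omega

open Classical in
/-- A symmetric irreflexive relation in which every element has at most one partner matches
an even number of elements. -/
lemma even_card_partial_matching {J : Type*} [Fintype J] (R : J → J → Prop)
    (hs : ∀ x y, R x y → R y x) (hi : ∀ x, ¬ R x x) (hu : ∀ x y z, R x y → R x z → y = z) :
    Even (Finset.univ.filter (fun x => ∃ y, R x y)).card := by
  let G : SimpleGraph J := { Adj := R, symm := ⟨hs⟩, loopless := ⟨hi⟩ }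
  have h := G.even_card_odd_degree_vertices
  convert h using 3 with x
  constructor
  · rintro ⟨y, hy⟩
    have : G.neighborFinset x = {y} := by
      ext z
      simp only [SimpleGraph.mem_neighborFinset, Finset.mem_singleton]
      exact ⟨fun hz => hu _ _ _ hz hy, fun hz => hz ▸ hy⟩
    rw [← SimpleGraph.card_neighborFinset_eq_degree, this]
    simp
  · intro ho
    have : 0 < G.degree x := ho.pos
    obtain ⟨y, hy⟩ := (G.degree_pos_iff_exists_adj x).1 this
    exact ⟨y, hy⟩

end Generic

/-! ### Edges of a banana path and the alignment graph -/

section Encoding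

/-- Indices of the independent vertices of a banana path. -/
abbrev BIdx (ℓ : ℕ) (k : ℕ → ℕ) : Type := Σ i : Fin ℓ, Fin (k ((i : ℕ) + 1))

/-- Vertices of a banana path. -/
abbrev BVert (ℓ : ℕ) (k : ℕ → ℕ) : Type := Fin (ℓ + 1) ⊕ BIdx ℓ k

/-- The covering vertex at the left (`false`) or right (`true`) end of the `i`-th banana. -/
def endV {ℓ : ℕ} (i : Fin ℓ) (b : Bool) : Fin (ℓ + 1) := if b then i.succ else i.castSucc

lemma endV_val {ℓ : ℕ} (i : Fin ℓ) (b : Bool) :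
    (endV i b : ℕ) = (i : ℕ) + (if b then 1 else 0) := by
  cases b <;> simp [endV]

lemma endV_inj {ℓ : ℕ} {i : Fin ℓ} {b b' : Bool} (h : endV i b = endV i b') : b = b' := by
  have h' := congrArg Fin.val h
  rw [endV_val, endV_val] at h'
  cases b <;> cases b' <;> simp at h' ⊢

/-- The edge joining the independent vertex `e.1` to the left or right end of its banana;
every edge of the banana path has exactly one such code `e`. -/
def edgeOf {ℓ : ℕ} {k : ℕ → ℕ} (e : BIdx ℓ k × Bool) : Sym2 (BVert ℓ k) :=
  s(Sum.inl (endV e.1.1 e.2), Sum.inr e.1)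

lemma edgeOf_injective {ℓ : ℕ} {k : ℕ → ℕ} :
    Function.Injective (edgeOf : BIdx ℓ k × Bool → Sym2 (BVert ℓ k)) := by
  rintro ⟨x, b⟩ ⟨y, b'⟩ h
  simp only [edgeOf, Sym2.eq_iff, Sum.inl.injEq, Sum.inr.injEq, reduceCtorEq, and_self,
    or_false] at h
  obtain ⟨h1, rfl⟩ := h
  rw [endV_inj h1]

lemma bananaPath_adj {ℓ : ℕ} {k : ℕ → ℕ} (u v : BVert ℓ k) :
    (bananaPath ℓ k).Adj u v ↔ ∃ (x : BIdx ℓ k) (b : Bool),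
      (u = Sum.inl (endV x.1 b) ∧ v = Sum.inr x) ∨
        (u = Sum.inr x ∧ v = Sum.inl (endV x.1 b)) := by
  unfold bananaPath
  rw [SimpleGraph.fromRel_adj]
  constructor
  · rintro ⟨-, ⟨i, j, h | h, h'⟩ | ⟨i, j, h | h, h'⟩⟩
    · exact ⟨⟨i, j⟩, false, Or.inl ⟨by simpa [endV] using h, h'⟩⟩
    · exact ⟨⟨i, j⟩, true, Or.inl ⟨by simpa [endV] using h, h'⟩⟩
    · exact ⟨⟨i, j⟩, false, Or.inr ⟨h', by simpa [endV] using h⟩⟩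
    · exact ⟨⟨i, j⟩, true, Or.inr ⟨h', by simpa [endV] using h⟩⟩
  · rintro ⟨⟨i, j⟩, b, ⟨rfl, rfl⟩ | ⟨rfl, rfl⟩⟩
    · exact ⟨by simp, Or.inl ⟨i, j, by cases b <;> simp [endV], rfl⟩⟩
    · exact ⟨by simp, Or.inr ⟨i, j, by cases b <;> simp [endV], rfl⟩⟩

lemma adj_end {ℓ : ℕ} {k : ℕ → ℕ} (x : BIdx ℓ k) (b : Bool) :
    (bananaPath ℓ k).Adj (Sum.inl (endV x.1 b)) (Sum.inr x) :=
  (bananaPath_adj _ _).2 ⟨x, b, Or.inl ⟨rfl, rfl⟩⟩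

lemma mem_edgeSet_iff {ℓ : ℕ} {k : ℕ → ℕ} (s : Sym2 (BVert ℓ k)) :
    s ∈ (bananaPath ℓ k).edgeSet ↔ ∃ e, edgeOf e = s := by
  induction s with | _ u v =>
  rw [SimpleGraph.mem_edgeSet, bananaPath_adj]
  constructor
  · rintro ⟨x, b, ⟨rfl, rfl⟩ | ⟨rfl, rfl⟩⟩
    · exact ⟨(x, b), rfl⟩
    · exact ⟨(x, b), Sym2.eq_swap⟩
  · rintro ⟨⟨x, b⟩, h⟩
    refine ⟨x, b, ?_⟩
    rcases Sym2.eq_iff.1 h with ⟨h1, h2⟩ | ⟨h1, h2⟩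
    · exact Or.inl ⟨h1.symm, h2.symm⟩
    · exact Or.inr ⟨h2.symm, h1.symm⟩

lemma aligned_symm {W : Type*} {G : SimpleGraph W} {ρ : W → ℝ × ℝ} {e f : Sym2 W}
    (h : Aligned G ρ e f) : Aligned G ρ f e := by
  obtain ⟨u, v, w, h1, h2, h3, rfl, rfl, h4⟩ := h
  exact ⟨w, v, u, h1.symm, h3.symm, h2.symm, Sym2.eq_swap, Sym2.eq_swap,
    by rwa [openSegment_symm]⟩

lemma not_aligned_self {W : Type*} {G : SimpleGraph W} {ρ : W → ℝ × ℝ} {e : Sym2 W} :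
    ¬ Aligned G ρ e e := by
  rintro ⟨u, v, w, h1, h2, h3, h4, h5, h6⟩
  rw [h4, Sym2.eq_iff] at h5
  rcases h5 with ⟨rfl, rfl⟩ | ⟨h, -⟩
  · exact h1 rfl
  · exact h1 h

/-- The alignment relation as a graph on the edge codes. Its components are the segments. -/
def alignGraph {ℓ : ℕ} {k : ℕ → ℕ} (ρ : BVert ℓ k → ℝ × ℝ) : SimpleGraph (BIdx ℓ k × Bool) where
  Adj e f := Aligned (bananaPath ℓ k) ρ (edgeOf e) (edgeOf f)
  symm := ⟨fun _ _ h => aligned_symm h⟩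
  loopless := ⟨fun _ h => not_aligned_self h⟩

/-- Two edges are aligned either as the two halves of a straight path, or at a common covering
vertex. -/
lemma aligned_edgeOf_iff {ℓ : ℕ} {k : ℕ → ℕ} (ρ : BVert ℓ k → ℝ × ℝ)
    (x y : BIdx ℓ k) (b b' : Bool) :
    Aligned (bananaPath ℓ k) ρ (edgeOf (x, b)) (edgeOf (y, b')) ↔
      (x = y ∧ b' = !b ∧ ρ (Sum.inr x) ∈
        openSegment ℝ (ρ (Sum.inl (endV x.1 b))) (ρ (Sum.inl (endV x.1 b')))) ∨
      (x ≠ y ∧ endV x.1 b = endV y.1 b' ∧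
        ρ (Sum.inl (endV x.1 b)) ∈ openSegment ℝ (ρ (Sum.inr x)) (ρ (Sum.inr y))) := by
  constructor
  · rintro ⟨u, v, w, h1, h2, h3, h4, h5, h6⟩
    simp only [edgeOf, Sym2.eq_iff] at h4 h5
    rcases h4 with ⟨rfl, rfl⟩ | ⟨rfl, rfl⟩
    · left
      rcases h5 with ⟨h, -⟩ | ⟨rfl, h⟩
      · simp at h
      · rw [Sum.inr.injEq] at h
        subst h
        refine ⟨rfl, ?_, h6⟩
        cases b <;> cases b' <;> simp at h1 ⊢
    · right
      rcases h5 with ⟨h, rfl⟩ | ⟨h, h'⟩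
      · rw [Sum.inl.injEq] at h
        exact ⟨fun h' => h1 (by rw [h']), h.symm, h6⟩
      · simp at h'
  · rintro (⟨rfl, rfl, h⟩ | ⟨h1, h2, h3⟩)
    · refine ⟨_, _, _, ?_, adj_end x b, (adj_end x (!b)).symm, rfl, Sym2.eq_swap, h⟩
      intro hh
      rw [Sum.inl.injEq] at hh
      have := endV_inj hh
      cases b <;> simp at this
    · refine ⟨_, _, _, ?_, (adj_end x b).symm, ?_, Sym2.eq_swap, ?_, h3⟩
      · intro hh
        exact h1 (Sum.inr.inj hh)
      · rw [h2]; exact adj_end y b'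
      · rw [h2]; rfl

/-- The segments of a drawing are the components of its alignment graph. -/
lemma numSegments_eq {ℓ : ℕ} {k : ℕ → ℕ} (ρ : BVert ℓ k → ℝ × ℝ) :
    numSegments (bananaPath ℓ k) ρ = Nat.card (alignGraph ρ).ConnectedComponent := by
  have hrtg : ∀ (e : BIdx ℓ k × Bool) (s : Sym2 (BVert ℓ k)),
      Relation.ReflTransGen (Aligned (bananaPath ℓ k) ρ) (edgeOf e) s ↔
        ∃ f, edgeOf f = s ∧ (alignGraph ρ).Reachable e f := by
    intro e s
    constructor
    · intro h
      induction h with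
      | refl => exact ⟨e, rfl, SimpleGraph.Reachable.refl _⟩
      | tail _ hbc ih =>
        obtain ⟨f, rfl, hf⟩ := ih
        rename_i c _
        have hc : c ∈ (bananaPath ℓ k).edgeSet := by
          obtain ⟨u, v, w, h1, h2, h3, h4, h5, h6⟩ := hbc
          rw [h5]; exact h3
        obtain ⟨g, rfl⟩ := (mem_edgeSet_iff c).1 hc
        exact ⟨g, rfl, hf.trans (SimpleGraph.Adj.reachable hbc)⟩
    · rintro ⟨f, rfl, hf⟩
      rw [SimpleGraph.reachable_iff_reflTransGen] at hf
      exact hf.lift edgeOf (fun _ _ h => h)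
  unfold numSegments
  rw [← Nat.card_coe_set_eq]
  let F : (alignGraph ρ).ConnectedComponent → Set (Sym2 (BVert ℓ k)) :=
    fun c => edgeOf '' c.supp
  have hF : ∀ e, F ((alignGraph ρ).connectedComponentMk e) =
      {f | Relation.ReflTransGen (Aligned (bananaPath ℓ k) ρ) (edgeOf e) f} := by
    intro e
    ext s
    simp only [F, Set.mem_image, SimpleGraph.ConnectedComponent.mem_supp_iff,
      SimpleGraph.ConnectedComponent.eq, Set.mem_ofPred_eq, hrtg]
    exact ⟨fun ⟨f, h1, h2⟩ => ⟨f, h2, h1.symm⟩, fun ⟨f, h1, h2⟩ => ⟨f, h2.symm, h1⟩⟩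
  have hFinj : Function.Injective F := by
    intro c d h
    exact SimpleGraph.ConnectedComponent.supp_injective
      (Set.image_injective.2 edgeOf_injective h)
  have hrange : {S : Set (Sym2 (BVert ℓ k)) | ∃ e ∈ (bananaPath ℓ k).edgeSet,
      S = {f | Relation.ReflTransGen (Aligned (bananaPath ℓ k) ρ) e f}} = Set.range F := by
    ext S
    constructor
    · rintro ⟨e, he, rfl⟩
      obtain ⟨e, rfl⟩ := (mem_edgeSet_iff e).1 he
      exact ⟨_, hF e⟩
    · rintro ⟨c, rfl⟩
      obtain ⟨e, rfl⟩ := c.exists_rep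
      exact ⟨edgeOf e, (mem_edgeSet_iff _).2 ⟨e, rfl⟩, hF e⟩
  rw [hrange]
  exact Nat.card_range_of_injective hFinj

end Encoding

/-! ### Plane geometry of two banana paths -/

section Geometry

lemma mem_segment_coords (p u w : ℝ × ℝ) :
    p ∈ segment ℝ u w ↔ ∃ t : ℝ, 0 ≤ t ∧ t ≤ 1 ∧ p.1 = u.1 + t * (w.1 - u.1) ∧
      p.2 = u.2 + t * (w.2 - u.2) := by
  constructor
  · rintro ⟨a, b, ha, hb, hab, rfl⟩
    refine ⟨b, hb, by linarith, ?_, ?_⟩ <;> obtain rfl : a = 1 - b := by linarith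
    · simp; ring
    · simp; ring
  · rintro ⟨t, h0, h1, h2, h3⟩
    refine ⟨1 - t, t, by linarith, h0, by ring, ?_⟩
    ext
    · simp; rw [h2]; ring
    · simp; rw [h3]; ring

lemma mem_openSegment_coords (v u w : ℝ × ℝ) :
    v ∈ openSegment ℝ u w ↔ ∃ m : ℝ, 0 < m ∧ w.1 - v.1 = -m * (u.1 - v.1) ∧
      w.2 - v.2 = -m * (u.2 - v.2) := by
  constructor
  · rintro ⟨a, b, ha, hb, hab, rfl⟩
    refine ⟨a / b, by positivity, ?_, ?_⟩ <;> obtain rfl : a = 1 - b := by linarith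
    · simp; field_simp; ring
    · simp; field_simp; ring
  · rintro ⟨m, hm, h1, h2⟩
    refine ⟨m / (m + 1), 1 / (m + 1), by positivity, by positivity, by field_simp, ?_⟩
    have hm' : m + 1 ≠ 0 := by positivity
    have h1' : w.1 = v.1 - m * (u.1 - v.1) := by linarith
    have h2' : w.2 = v.2 - m * (u.2 - v.2) := by linarith
    ext
    · simp; rw [h1']; field_simp; ring
    · simp; rw [h2']; field_simp; ring

variable {W : Type*} {G : SimpleGraph W} {ρ : W → ℝ × ℝ}

/-- Two edges at `v` cannot leave `v` in the same direction. -/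
lemma same_direction (hρ : IsPlanarDrawing G ρ) {v u w : W} (hu : G.Adj v u) (hw : G.Adj v w)
    {m : ℝ} (hm : 0 < m) (h1 : (ρ w).1 - (ρ v).1 = m * ((ρ u).1 - (ρ v).1))
    (h2 : (ρ w).2 - (ρ v).2 = m * ((ρ u).2 - (ρ v).2)) : u = w := by
  by_contra hne
  rcases le_total m 1 with hm1 | hm1
  · refine hρ.vertex_not_on_edge hu hw.ne' (Ne.symm hne) ((mem_segment_coords _ _ _).2 ?_)
    exact ⟨m, hm.le, hm1, by linarith, by linarith⟩
  · refine hρ.vertex_not_on_edge hw hu.ne' hne ((mem_segment_coords _ _ _).2 ?_)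
    refine ⟨1 / m, by positivity, by rw [div_le_one hm]; exact hm1, ?_, ?_⟩
    · rw [h1]; field_simp; ring
    · rw [h2]; field_simp; ring

/-- An edge has at most one continuation through the vertex `v`. -/
lemma opposite_unique (hρ : IsPlanarDrawing G ρ) {v u w w' : W} (hw : G.Adj v w)
    (hw' : G.Adj v w') (h : ρ v ∈ openSegment ℝ (ρ u) (ρ w))
    (h' : ρ v ∈ openSegment ℝ (ρ u) (ρ w')) : w = w' := by
  obtain ⟨m, hm, h1, h2⟩ := (mem_openSegment_coords _ _ _).1 h
  obtain ⟨m', hm', h1', h2'⟩ := (mem_openSegment_coords _ _ _).1 h'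
  refine same_direction hρ hw hw' (m := m' / m) (by positivity) ?_ ?_
  · rw [h1, h1']; field_simp
  · rw [h2, h2']; field_simp

/-- At most one path of a banana is straight. -/
lemma straight_unique (hρ : IsPlanarDrawing G ρ) {a b c c' : W} (hc : G.Adj a c)
    (hc' : G.Adj a c') (h : ρ c ∈ openSegment ℝ (ρ a) (ρ b))
    (h' : ρ c' ∈ openSegment ℝ (ρ a) (ρ b)) : c = c' := by
  obtain ⟨s, t, hs, ht, hst, h⟩ := h
  obtain ⟨s', t', hs', ht', hst', h'⟩ := h'
  obtain rfl : s = 1 - t := by linarith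
  obtain rfl : s' = 1 - t' := by linarith
  refine same_direction hρ hc hc' (m := t' / t) (by positivity) ?_ ?_
  · rw [← h, ← h']; simp; field_simp; ring
  · rw [← h, ← h']; simp; field_simp; ring

/-- If `c` lies on the segment from `a` to `b`, the edge `ac` cannot be continued through `a`
to a common neighbour of `a` and `b`. -/
lemma straight_not_opposite (hρ : IsPlanarDrawing G ρ) {a b c c' : W} (hab : a ≠ b)
    (hac' : G.Adj a c') (hbc' : G.Adj b c') (h : ρ c ∈ openSegment ℝ (ρ a) (ρ b))
    (h' : ρ a ∈ openSegment ℝ (ρ c) (ρ c')) : False := by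
  obtain ⟨s, t, hs, ht, hst, h⟩ := h
  obtain rfl : s = 1 - t := by linarith
  obtain ⟨m, hm, h1, h2⟩ := (mem_openSegment_coords _ _ _).1 h'
  have e1 : (ρ c).1 - (ρ a).1 = t * ((ρ b).1 - (ρ a).1) := by rw [← h]; simp; ring
  have e2 : (ρ c).2 - (ρ a).2 = t * ((ρ b).2 - (ρ a).2) := by rw [← h]; simp; ring
  rw [e1] at h1
  rw [e2] at h2
  refine hρ.vertex_not_on_edge hbc' hab hac'.ne ((mem_segment_coords _ _ _).2 ?_)
  have hmt : 0 < m * t := by positivity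
  refine ⟨1 / (1 + m * t), by positivity, ?_, ?_, ?_⟩
  · rw [div_le_one (by positivity)]; linarith
  · have : (ρ c').1 = (ρ a).1 - m * t * ((ρ b).1 - (ρ a).1) := by linarith
    rw [this]; field_simp; ring
  · have : (ρ c').2 = (ρ a).2 - m * t * ((ρ b).2 - (ρ a).2) := by linarith
    rw [this]; field_simp; ring

/-- Nesting: paths `a c b` and `a c' b` on the same side of `ab` do not cross. In the frame with
`a` at the origin and `b - a` as first unit vector, `c = (p y, y)` with `y > 0` and
`1 - p y = q y`, so `p`, `q` are the cotangents of the base angles of the triangle `a b c`; the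
sign `σ` selects the side of `ab`. -/
lemma nested (hρ : IsPlanarDrawing G ρ) {a b c c' : W} (hab : a ≠ b) (hcc' : c ≠ c')
    (hac : G.Adj a c) (hbc' : G.Adj b c') (hac' : a ≠ c') (hbc : b ≠ c)
    {p q y p' q' y' σ d1 d2 : ℝ} (hy : 0 < y) (hy' : 0 < y')
    (hq : (p + q) * y = 1) (hq' : (p' + q') * y' = 1)
    (hb1 : (ρ b).1 = (ρ a).1 + d1) (hb2 : (ρ b).2 = (ρ a).2 + d2)
    (hc1 : (ρ c).1 = (ρ a).1 + p * y * d1 - σ * y * d2)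
    (hc2 : (ρ c).2 = (ρ a).2 + p * y * d2 + σ * y * d1)
    (hc1' : (ρ c').1 = (ρ a).1 + p' * y' * d1 - σ * y' * d2)
    (hc2' : (ρ c').2 = (ρ a).2 + p' * y' * d2 + σ * y' * d1)
    (h1 : q ≤ q') (h2 : p' ≤ p) : False := by
  have hpq : 0 < p + q := by
    by_contra h
    nlinarith
  have hpq' : 0 < p' + q' := by
    by_contra h
    nlinarith
  have hz : 0 < p + q' := by linarith
  -- the first edge `ac` meets the second edge `bc'` at height `1 / (p + q')`
  have hy1 : y = 1 / (p + q) := by field_simp; linarith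
  have hy1' : y' = 1 / (p' + q') := by field_simp; linarith
  obtain ⟨w, hw1, hw2, -⟩ := hρ.edge_inter hac hbc' (by
      rw [Ne, Sym2.eq_iff]; rintro (⟨h, -⟩ | ⟨h, -⟩)
      · exact hab h
      · exact hac' h)
    ((ρ a).1 + p / (p + q') * d1 - σ / (p + q') * d2, (ρ a).2 + p / (p + q') * d2 + σ / (p + q') * d1)
    ((mem_segment_coords _ _ _).2 ⟨(p + q) / (p + q'), by positivity, by
      rw [div_le_one hz]; linarith, by simp only [hc1, hy1]; field_simp; ring, by
      simp only [hc2, hy1]; field_simp; ring⟩)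
    ((mem_segment_coords _ _ _).2 ⟨(p' + q') / (p + q'), by positivity, by
      rw [div_le_one hz]; linarith, by simp only [hc1', hb1, hy1']; field_simp; ring, by
      simp only [hc2', hb2, hy1']; field_simp; ring⟩)
  rcases hw1 with rfl | rfl <;> rcases hw2 with h | h
  · exact hab h
  · exact hac' h
  · exact hbc h.symm
  · exact hcc' h

/-- Coordinates with respect to `B - A` and its quarter turn. -/
lemma exists_frame (A B C : ℝ × ℝ) (hAB : A ≠ B) : ∃ x y : ℝ,
    C.1 = A.1 + x * (B.1 - A.1) - y * (B.2 - A.2) ∧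
    C.2 = A.2 + x * (B.2 - A.2) + y * (B.1 - A.1) := by
  have hD : 0 < (B.1 - A.1) ^ 2 + (B.2 - A.2) ^ 2 := by
    by_contra h
    have h1 : B.1 - A.1 = 0 := by nlinarith [sq_nonneg (B.1 - A.1), sq_nonneg (B.2 - A.2)]
    have h2 : B.2 - A.2 = 0 := by nlinarith [sq_nonneg (B.1 - A.1), sq_nonneg (B.2 - A.2)]
    exact hAB (Prod.ext (by linarith) (by linarith))
  refine ⟨((C.1 - A.1) * (B.1 - A.1) + (C.2 - A.2) * (B.2 - A.2)) /
      ((B.1 - A.1) ^ 2 + (B.2 - A.2) ^ 2),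
    ((C.2 - A.2) * (B.1 - A.1) - (C.1 - A.1) * (B.2 - A.2)) /
      ((B.1 - A.1) ^ 2 + (B.2 - A.2) ^ 2), ?_, ?_⟩
  · field_simp; ring
  · field_simp; ring

end Geometry

/-! ### Aligned pairs within one banana -/

section Bends

variable {W : Type*} {G : SimpleGraph W} {ρ : W → ℝ × ℝ}

lemma frame_zero {u v d1 d2 : ℝ} (hd : d1 ≠ 0 ∨ d2 ≠ 0) (h1 : u * d1 - v * d2 = 0)
    (h2 : u * d2 + v * d1 = 0) : u = 0 ∧ v = 0 := by
  have hD : 0 < d1 ^ 2 + d2 ^ 2 := by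
    rcases hd with h | h <;> positivity
  have e1 : u * (d1 ^ 2 + d2 ^ 2) = 0 := by linear_combination d1 * h1 + d2 * h2
  have e2 : v * (d1 ^ 2 + d2 ^ 2) = 0 := by linear_combination d1 * h2 - d2 * h1
  exact ⟨(mul_eq_zero.1 e1).resolve_right hD.ne', (mul_eq_zero.1 e2).resolve_right hD.ne'⟩

/-- Two paths `a c b`, `a c' b` on the same side of `ab` are nested. -/
lemma nested_total (hρ : IsPlanarDrawing G ρ) {a b : W} (hab : a ≠ b) {X Y : W → ℝ}
    (hX : ∀ c, (ρ c).1 = (ρ a).1 + X c * ((ρ b).1 - (ρ a).1) - Y c * ((ρ b).2 - (ρ a).2))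
    (hY : ∀ c, (ρ c).2 = (ρ a).2 + X c * ((ρ b).2 - (ρ a).2) + Y c * ((ρ b).1 - (ρ a).1))
    {c c' : W} (hac : G.Adj a c) (hbc : G.Adj b c) (hac' : G.Adj a c') (hbc' : G.Adj b c')
    (σ : ℝ) (hσ : σ * σ = 1) (hc : 0 < σ * Y c) (hc' : 0 < σ * Y c') :
    (X c / (σ * Y c) ≤ X c' / (σ * Y c') ∧ (1 - X c) / (σ * Y c) ≤ (1 - X c') / (σ * Y c')) ∨
    (X c' / (σ * Y c') ≤ X c / (σ * Y c) ∧ (1 - X c') / (σ * Y c') ≤ (1 - X c) / (σ * Y c)) := by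
  by_cases hcc : c = c'
  · subst hcc; exact Or.inl ⟨le_rfl, le_rfl⟩
  have hmain : ∀ c c' : W, c ≠ c' → G.Adj a c → G.Adj b c → G.Adj a c' → G.Adj b c' →
      0 < σ * Y c → 0 < σ * Y c' → (1 - X c) / (σ * Y c) ≤ (1 - X c') / (σ * Y c') →
      X c' / (σ * Y c') ≤ X c / (σ * Y c) → False := by
    intro c c' hcc hac hbc hac' hbc' hc hc' h1 h2
    have e1 : X c / (σ * Y c) * (σ * Y c) = X c := div_mul_cancel₀ _ hc.ne'
    have e2 : X c' / (σ * Y c') * (σ * Y c') = X c' := div_mul_cancel₀ _ hc'.ne'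
    have e3 : (1 - X c) / (σ * Y c) * (σ * Y c) = 1 - X c := div_mul_cancel₀ _ hc.ne'
    have e4 : (1 - X c') / (σ * Y c') * (σ * Y c') = 1 - X c' := div_mul_cancel₀ _ hc'.ne'
    have e5 : ∀ c, σ * (σ * Y c) = Y c := fun c => by rw [← mul_assoc, hσ, one_mul]
    refine nested hρ hab hcc hac hbc' hac'.ne hbc.ne (σ := σ)
      (d1 := (ρ b).1 - (ρ a).1) (d2 := (ρ b).2 - (ρ a).2) hc hc'
      (by rw [add_mul, e1, e3]; ring) (by rw [add_mul, e2, e4]; ring) (by ring) (by ring)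
      ?_ ?_ ?_ ?_ h1 h2
    · rw [e1, e5]; exact hX c
    · rw [e1, e5]; exact hY c
    · rw [e2, e5]; exact hX c'
    · rw [e2, e5]; exact hY c'
  have n1 := hmain c c' hcc hac hbc hac' hbc' hc hc'
  have n2 := hmain c' c (Ne.symm hcc) hac' hbc' hac hbc hc' hc
  rcases le_total (X c / (σ * Y c)) (X c' / (σ * Y c')) with h | h
  · left
    refine ⟨h, ?_⟩
    by_contra h'
    exact n2 (le_of_lt (not_le.1 h')) h
  · right
    refine ⟨h, ?_⟩
    by_contra h'
    exact n1 (le_of_lt (not_le.1 h')) h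

/-- A banana drawing cannot contain an aligned pair `c₁ a c₂` at one covering vertex `a` and an
aligned pair `c₃ b c₄` at the other one. In terms of the cotangents of the base angles over `ab`,
alignment gives `p₂ = -p₁` and `q₄ = -q₃`; nesting above `ab` forces `p₁ + q₃ > 0`, while
nesting below `ab` forces `p₁ + q₃ < 0`. -/
lemma no_two_bends (hρ : IsPlanarDrawing G ρ) {a b c₁ c₂ c₃ c₄ : W} (hab : a ≠ b)
    (ha1 : G.Adj a c₁) (hb1 : G.Adj b c₁) (ha2 : G.Adj a c₂) (hb2 : G.Adj b c₂)
    (ha3 : G.Adj a c₃) (hb3 : G.Adj b c₃) (ha4 : G.Adj a c₄) (hb4 : G.Adj b c₄)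
    (h12 : ρ a ∈ openSegment ℝ (ρ c₁) (ρ c₂)) (h34 : ρ b ∈ openSegment ℝ (ρ c₃) (ρ c₄)) :
    False := by
  have hρab : ρ a ≠ ρ b := fun h => hab (hρ.inj h)
  have hd : (ρ b).1 - (ρ a).1 ≠ 0 ∨ (ρ b).2 - (ρ a).2 ≠ 0 := by
    by_contra! h
    exact hρab (Prod.ext (by linarith [h.1]) (by linarith [h.2]))
  choose X Y hX hY using fun c => exists_frame (ρ a) (ρ b) (ρ c) hρab
  have hopp : ∀ c c' : W, ρ a ∈ openSegment ℝ (ρ c) (ρ c') →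
      ∃ m : ℝ, 0 < m ∧ X c' = -m * X c ∧ Y c' = -m * Y c := by
    intro c c' h
    obtain ⟨m, hm, h1, h2⟩ := (mem_openSegment_coords _ _ _).1 h
    rw [hX c, hX c'] at h1
    rw [hY c, hY c'] at h2
    obtain ⟨e1, e2⟩ := frame_zero (u := X c' + m * X c) (v := Y c' + m * Y c) hd
      (by linarith) (by linarith)
    exact ⟨m, hm, by linarith, by linarith⟩
  have hopp' : ∀ c c' : W, ρ b ∈ openSegment ℝ (ρ c) (ρ c') →
      ∃ m : ℝ, 0 < m ∧ 1 - X c' = -m * (1 - X c) ∧ Y c' = -m * Y c := by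
    intro c c' h
    obtain ⟨m, hm, h1, h2⟩ := (mem_openSegment_coords _ _ _).1 h
    rw [hX c, hX c'] at h1
    rw [hY c, hY c'] at h2
    obtain ⟨e1, e2⟩ := frame_zero (u := X c' - 1 + m * (X c - 1)) (v := Y c' + m * Y c) hd
      (by linarith) (by linarith)
    exact ⟨m, hm, by linarith, by linarith⟩
  -- a common neighbour on the line `ab` lies between `a` and `b`
  have hflat : ∀ c, G.Adj a c → G.Adj b c → Y c = 0 → 0 < X c ∧ X c < 1 := by
    intro c hac hbc hy
    have k1 := hX c
    have k2 := hY c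
    rw [hy] at k1 k2
    have hne0 : X c ≠ 0 := by
      intro h
      rw [h] at k1 k2
      exact hac.ne (hρ.inj (Prod.ext (by linarith) (by linarith)))
    have hne1 : 1 - X c ≠ 0 := by
      intro h
      have : X c = 1 := by linarith
      rw [this] at k1 k2
      exact hbc.ne (hρ.inj (Prod.ext (by linarith) (by linarith)))
    constructor
    · by_contra h
      have h : X c < 0 := lt_of_le_of_ne (not_lt.1 h) hne0
      refine hρ.vertex_not_on_edge hbc hab hac.ne ((mem_segment_coords _ _ _).2 ?_)
      have : 0 < 1 - X c := by linarith
      refine ⟨1 / (1 - X c), by positivity, by rw [div_le_one this]; linarith, ?_, ?_⟩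
      · rw [k1]; field_simp; ring
      · rw [k2]; field_simp; ring
    · by_contra h
      have h : 1 < X c := lt_of_le_of_ne (not_lt.1 h) (fun h => hne1 (by linarith))
      refine hρ.vertex_not_on_edge hac hab.symm hbc.ne ((mem_segment_coords _ _ _).2 ?_)
      have : 0 < X c := by linarith
      refine ⟨1 / X c, by positivity, by rw [div_le_one this]; linarith, ?_, ?_⟩
      · rw [k1]; field_simp; ring
      · rw [k2]; field_simp; ring
  have hmain : ∀ c₁ c₂ c₃ c₄ : W, G.Adj a c₁ → G.Adj b c₁ → G.Adj a c₂ → G.Adj b c₂ →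
      G.Adj a c₃ → G.Adj b c₃ → G.Adj a c₄ → G.Adj b c₄ →
      ρ a ∈ openSegment ℝ (ρ c₁) (ρ c₂) → ρ b ∈ openSegment ℝ (ρ c₃) (ρ c₄) →
      0 < Y c₁ → 0 < Y c₃ → False := by
    intro c₁ c₂ c₃ c₄ ha1 hb1 ha2 hb2 ha3 hb3 ha4 hb4 h12 h34 hy1 hy3
    obtain ⟨m, hm, hm1, hm2⟩ := hopp _ _ h12
    obtain ⟨n, hn, hn1, hn2⟩ := hopp' _ _ h34
    have N1 := nested_total hρ hab hX hY ha1 hb1 ha3 hb3 1 (by norm_num) (by linarith) (by linarith)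
    have hy2 : 0 < -1 * Y c₂ := by rw [hm2]; nlinarith
    have hy4 : 0 < -1 * Y c₄ := by rw [hn2]; nlinarith
    have N2 := nested_total hρ hab hX hY ha2 hb2 ha4 hb4 (-1) (by norm_num) hy2 hy4
    have s1 : 0 < X c₁ / (1 * Y c₁) + (1 - X c₁) / (1 * Y c₁) := by
      rw [← add_div, add_sub_cancel]; positivity
    have s3 : 0 < X c₃ / (1 * Y c₃) + (1 - X c₃) / (1 * Y c₃) := by
      rw [← add_div, add_sub_cancel]; positivity
    have s2 : 0 < X c₂ / (-1 * Y c₂) + (1 - X c₂) / (-1 * Y c₂) := by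
      rw [← add_div, add_sub_cancel]; positivity
    have s4 : 0 < X c₄ / (-1 * Y c₄) + (1 - X c₄) / (-1 * Y c₄) := by
      rw [← add_div, add_sub_cancel]; positivity
    have p2 : X c₂ / (-1 * Y c₂) = -(X c₁ / (1 * Y c₁)) := by
      rw [hm1, hm2]; field_simp
    have q4 : (1 - X c₄) / (-1 * Y c₄) = -((1 - X c₃) / (1 * Y c₃)) := by
      rw [hn1, hn2]; field_simp
    rcases N1 with ⟨u1, u2⟩ | ⟨u1, u2⟩ <;> rcases N2 with ⟨v1, v2⟩ | ⟨v1, v2⟩ <;> linarith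
  obtain ⟨m, hm, hm1, hm2⟩ := hopp _ _ h12
  obtain ⟨n, hn, hn1, hn2⟩ := hopp' _ _ h34
  have h21 : ρ a ∈ openSegment ℝ (ρ c₂) (ρ c₁) := by rwa [openSegment_symm]
  have h43 : ρ b ∈ openSegment ℝ (ρ c₄) (ρ c₃) := by rwa [openSegment_symm]
  have hz1 : Y c₁ ≠ 0 := by
    intro h
    have t1 := hflat c₁ ha1 hb1 h
    have t2 := hflat c₂ ha2 hb2 (by rw [hm2, h, mul_zero])
    nlinarith
  have hz3 : Y c₃ ≠ 0 := by
    intro h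
    have t1 := hflat c₃ ha3 hb3 h
    have t2 := hflat c₄ ha4 hb4 (by rw [hn2, h, mul_zero])
    nlinarith
  rcases lt_or_gt_of_ne hz1 with g1 | g1 <;> rcases lt_or_gt_of_ne hz3 with g3 | g3
  · exact hmain _ _ _ _ ha2 hb2 ha1 hb1 ha4 hb4 ha3 hb3 h21 h43 (by nlinarith) (by nlinarith)
  · exact hmain _ _ _ _ ha2 hb2 ha1 hb1 ha3 hb3 ha4 hb4 h21 h34 (by nlinarith) g3
  · exact hmain _ _ _ _ ha1 hb1 ha2 hb2 ha4 hb4 ha3 hb3 h12 h43 g1 (by nlinarith)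
  · exact hmain _ _ _ _ ha1 hb1 ha2 hb2 ha3 hb3 ha4 hb4 h12 h34 g1 g3

end Bends

/-! ### Counting alignments in an arbitrary drawing -/

section LowerCount

/-- The optimization behind the lower bound. For the `i`-th banana, `t i` counts straight paths,
`wl i` and `wr i` the edges aligned within the banana at its left and right end, and `xl i`, `xr i`
those aligned with the neighbouring banana. At an interior covering vertex, twice the number of
edges of the smaller side plus the even part of the surplus of the other side bounds the count; a banana can use its surplus at one
end only, hence the term `s (i + 1) / 2`. -/
lemma lower_arith (m : ℕ) (k a s t wl wr xl xr : ℕ → ℕ)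
    (hk : ∀ i, i ≤ m → 1 ≤ k (i + 1)) (ha0 : a 0 = 1) (ham : a (m + 1) = 1)
    (ha : ∀ i, i < m → a (i + 1) = min (k (i + 1)) (k (i + 1 + 1)))
    (hs : ∀ i, i ≤ m → s (i + 1) = max (k (i + 1) - a i) (k (i + 1) - a (i + 1)))
    (ht : ∀ i, i ≤ m → t i ≤ 1)
    (htl : ∀ i, i ≤ m → t i + wl i ≤ k (i + 1)) (htr : ∀ i, i ≤ m → t i + wr i ≤ k (i + 1))
    (hl : ∀ i, i ≤ m → wl i + xl i ≤ k (i + 1)) (hr : ∀ i, i ≤ m → wr i + xr i ≤ k (i + 1))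
    (hel : ∀ i, i ≤ m → Even (wl i)) (her : ∀ i, i ≤ m → Even (wr i))
    (h0 : ∀ i, i ≤ m → wl i = 0 ∨ wr i = 0)
    (hx : ∀ i, i < m → xr i = xl (i + 1)) (hx0 : xl 0 = 0) (hxm : xr m = 0) :
    ∑ i ∈ Finset.range (m + 1), (2 * t i + wl i + wr i + xl i + xr i) ≤
      2 * ((m + 1) + ∑ i ∈ Finset.range (m + 1), s (i + 1) / 2 +
        ∑ i ∈ Finset.range m, a (i + 1)) := by
  -- excess available at the left and at the right end, if it is used there
  let FL : ℕ → ℕ := fun i => if wl i = 0 then 0 else (k (i + 1) - a i) / 2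
  let FR : ℕ → ℕ := fun i => if wr i = 0 then 0 else (k (i + 1) - a (i + 1)) / 2
  have hF : ∀ i ∈ Finset.range (m + 1), FL i + FR i ≤ s (i + 1) / 2 := by
    intro i hi
    have hi : i ≤ m := by simpa [Nat.lt_succ_iff] using hi
    have h1 := hs i hi
    have h2 := h0 i hi
    simp only [FL, FR]
    split_ifs <;> omega
  have hv : ∀ i ∈ Finset.range m,
      (xr i + wr i) + (wl (i + 1) + xl (i + 1)) ≤ 2 * a (i + 1) + (2 * FR i + 2 * FL (i + 1)) := by
    intro i hi
    have hi : i < m := by simpa using hi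
    have h1 := ha i hi
    have h2 := hx i hi
    have h3 := hr i hi.le
    have h4 := hl (i + 1) hi
    obtain ⟨u, hu⟩ := her i hi.le
    obtain ⟨v, hv⟩ := hel (i + 1) hi
    simp only [FL, FR]
    split_ifs <;> omega
  have hvs := Finset.sum_le_sum hv
  have hFs := Finset.sum_le_sum hF
  have hL0 : 2 * t 0 + wl 0 ≤ 2 + 2 * FL 0 := by
    have := htl 0 (by omega)
    have := ht 0 (by omega)
    have := hk 0 (by omega)
    obtain ⟨v, hv⟩ := hel 0 (by omega)
    simp only [FL]
    split_ifs <;> (try simp only [zero_add] at *) <;> omega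
  have hRm : 2 * t m + wr m ≤ 2 + 2 * FR m := by
    have := htr m (by omega)
    have := ht m (by omega)
    have := hk m (by omega)
    obtain ⟨v, hv⟩ := her m (by omega)
    simp only [FR]
    split_ifs <;> omega
  have hends : ∑ i ∈ Finset.range (m + 1), 2 * t i + wl 0 + wr m ≤
      2 * (m + 1) + 2 * FL 0 + 2 * FR m := by
    rcases m with _ | m
    · have := h0 0 (by omega)
      have := ht 0 (by omega)
      simp only [zero_add, Finset.sum_range_one]
      rcases h0 0 (by omega) with h | h <;> omega
    · rw [Finset.sum_range_succ, Finset.sum_range_succ']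
      have : ∑ i ∈ Finset.range m, 2 * t (i + 1) ≤ ∑ i ∈ Finset.range m, 2 :=
        Finset.sum_le_sum (fun i hi => by
          have := ht (i + 1) (by have := Finset.mem_range.1 hi; omega)
          omega)
      simp only [Finset.sum_const, Finset.card_range, smul_eq_mul] at this
      omega
  have e1 : ∑ i ∈ Finset.range (m + 1), (2 * t i + wl i + wr i + xl i + xr i) =
      ∑ i ∈ Finset.range (m + 1), 2 * t i + ∑ i ∈ Finset.range (m + 1), (wl i + xl i) +
        ∑ i ∈ Finset.range (m + 1), (xr i + wr i) := by
    rw [← Finset.sum_add_distrib, ← Finset.sum_add_distrib]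
    exact Finset.sum_congr rfl (fun i _ => by ring)
  rw [e1, Finset.sum_range_succ' (fun i => wl i + xl i), Finset.sum_range_succ (fun i => xr i + wr i)]
  rw [Finset.sum_add_distrib, Finset.sum_range_succ' FL, Finset.sum_range_succ FR] at hFs
  rw [Finset.sum_add_distrib, Finset.sum_add_distrib (f := fun i => 2 * a (i + 1)),
    Finset.sum_add_distrib (f := fun i => 2 * FR i), ← Finset.mul_sum, ← Finset.mul_sum,
    ← Finset.mul_sum] at hvs
  omega

open Classical

variable {ℓ : ℕ} {k : ℕ → ℕ} (ρ : BVert ℓ k → ℝ × ℝ)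

/-- Paths of the `i`-th banana that are straight at their independent vertex. -/
noncomputable def straightSet (i : Fin ℓ) : Finset (Fin (k ((i : ℕ) + 1))) :=
  Finset.univ.filter fun j => ρ (Sum.inr ⟨i, j⟩) ∈
    openSegment ℝ (ρ (Sum.inl (endV i false))) (ρ (Sum.inl (endV i true)))

/-- Edges of the `i`-th banana aligned at the end `b` with an edge of the same banana. -/
noncomputable def withinSet (i : Fin ℓ) (b : Bool) : Finset (Fin (k ((i : ℕ) + 1))) :=
  Finset.univ.filter fun j => ∃ j', j ≠ j' ∧ ρ (Sum.inl (endV i b)) ∈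
    openSegment ℝ (ρ (Sum.inr ⟨i, j⟩)) (ρ (Sum.inr ⟨i, j'⟩))

/-- Edges of the `i`-th banana aligned at the end `b` with an edge of the neighbouring banana. -/
noncomputable def crossSet (i : Fin ℓ) (b : Bool) : Finset (Fin (k ((i : ℕ) + 1))) :=
  Finset.univ.filter fun j => ∃ y : BIdx ℓ k, y.1 ≠ i ∧ endV y.1 (!b) = endV i b ∧
    ρ (Sum.inl (endV i b)) ∈ openSegment ℝ (ρ (Sum.inr ⟨i, j⟩)) (ρ (Sum.inr y))

variable {ρ}

lemma endV_inj_left {i i' : Fin ℓ} {b : Bool} (h : endV i b = endV i' b) : i = i' := by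
  have h' := congrArg Fin.val h
  rw [endV_val, endV_val] at h'
  exact Fin.ext (by omega)

lemma adj_end' {x : BIdx ℓ k} {v : Fin (ℓ + 1)} {b : Bool} (h : endV x.1 b = v) :
    (bananaPath ℓ k).Adj (Sum.inl v) (Sum.inr x) := h ▸ adj_end x b

/-- An edge has at most one aligned edge at its independent vertex, and at most one at its covering
vertex `b`, either in the same or in the neighbouring banana. -/
lemma degree_bound (hρ : IsPlanarDrawing (bananaPath ℓ k) ρ) (i : Fin ℓ)
    (j : Fin (k ((i : ℕ) + 1))) (b : Bool) :
    ((alignGraph ρ).neighborFinset (⟨i, j⟩, b)).card ≤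
      (if j ∈ straightSet ρ i then 1 else 0) + (if j ∈ withinSet ρ i b then 1 else 0) +
        (if j ∈ crossSet ρ i b then 1 else 0) := by
  set N := (alignGraph ρ).neighborFinset (⟨i, j⟩, b) with hN
  have hmem : ∀ y b', (y, b') ∈ N ↔
      ((⟨i, j⟩ : BIdx ℓ k) = y ∧ b' = !b ∧ ρ (Sum.inr ⟨i, j⟩) ∈
        openSegment ℝ (ρ (Sum.inl (endV i b))) (ρ (Sum.inl (endV i b')))) ∨
      ((⟨i, j⟩ : BIdx ℓ k) ≠ y ∧ endV i b = endV y.1 b' ∧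
        ρ (Sum.inl (endV i b)) ∈ openSegment ℝ (ρ (Sum.inr ⟨i, j⟩)) (ρ (Sum.inr y))) := by
    intro y b'
    rw [hN, SimpleGraph.mem_neighborFinset]
    exact aligned_edgeOf_iff ρ _ _ _ _
  rw [← Finset.card_filter_add_card_filter_not (s := N) (fun f => f.1 = ⟨i, j⟩), add_assoc]
  refine add_le_add ?_ ?_
  · by_cases h : j ∈ straightSet ρ i
    · rw [if_pos h, Finset.card_le_one]
      rintro ⟨y, b'⟩ hy ⟨z, b''⟩ hz
      rw [Finset.mem_filter, hmem] at hy hz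
      obtain ⟨hy | hy, hy'⟩ := hy
      · obtain ⟨hz | hz, hz'⟩ := hz
        · rw [hy.2.1, hz.2.1, ← hy.1, ← hz.1]
        · exact absurd hz'.symm hz.1
      · exact absurd hy'.symm hy.1
    · rw [if_neg h, Nat.le_zero, Finset.card_eq_zero, Finset.filter_eq_empty_iff]
      rintro ⟨y, b'⟩ hy hy'
      rw [hmem] at hy
      rcases hy with ⟨-, rfl, hy⟩ | hy
      · refine h (Finset.mem_filter.2 ⟨Finset.mem_univ _, ?_⟩)
        cases b
        · exact hy
        · rw [openSegment_symm]; exact hy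
      · exact hy.1 hy'.symm
  · have hone : (N.filter (fun f => ¬ f.1 = ⟨i, j⟩)).card ≤ 1 := by
      rw [Finset.card_le_one]
      rintro ⟨y, b'⟩ hy ⟨z, b''⟩ hz
      rw [Finset.mem_filter, hmem] at hy hz
      obtain ⟨hy | hy, hy'⟩ := hy
      · exact absurd hy.1.symm hy'
      obtain ⟨hz | hz, hz'⟩ := hz
      · exact absurd hz.1.symm hz'
      have := opposite_unique hρ (adj_end' hy.2.1.symm) (adj_end' hz.2.1.symm) hy.2.2 hz.2.2
      obtain rfl := Sum.inr.inj this
      rw [endV_inj (hy.2.1.symm.trans hz.2.1)]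
    rcases Finset.eq_empty_or_nonempty (N.filter (fun f => ¬ f.1 = ⟨i, j⟩)) with he | ⟨⟨⟨i', j'⟩, b'⟩, hy⟩
    · rw [he]; simp
    · refine hone.trans ?_
      rw [Finset.mem_filter, hmem] at hy
      obtain ⟨hy | ⟨h1, h2, h3⟩, hy'⟩ := hy
      · exact absurd hy.1.symm hy'
      by_cases hi : i' = i
      · subst hi
        have : j ∈ withinSet ρ i' b :=
          Finset.mem_filter.2 ⟨Finset.mem_univ _, j', fun h => h1 (by rw [h]), h3⟩
        rw [if_pos this]; omega
      · have hb : b' = !b := by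
          by_contra hb
          have hb : b' = b := by cases b <;> cases b' <;> simp at hb ⊢
          subst hb
          exact hi (endV_inj_left h2).symm
        subst hb
        have : j ∈ crossSet ρ i b :=
          Finset.mem_filter.2 ⟨Finset.mem_univ _, ⟨i', j'⟩, hi, h2.symm, h3⟩
        rw [if_pos this]; omega

lemma straight_card (hρ : IsPlanarDrawing (bananaPath ℓ k) ρ) (i : Fin ℓ) :
    (straightSet ρ i).card ≤ 1 := by
  rw [Finset.card_le_one]
  intro j hj j' hj'
  have := straight_unique hρ (adj_end ⟨i, j⟩ false) (adj_end ⟨i, j'⟩ false)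
    (Finset.mem_filter.1 hj).2 (Finset.mem_filter.1 hj').2
  simpa using this

lemma end_ne (i : Fin ℓ) (b : Bool) :
    (Sum.inl (endV i b) : BVert ℓ k) ≠ Sum.inl (endV i (!b)) := by
  intro h
  have := endV_inj (Sum.inl.inj h)
  cases b <;> simp at this

lemma straight_within (hρ : IsPlanarDrawing (bananaPath ℓ k) ρ) (i : Fin ℓ) (b : Bool) :
    (straightSet ρ i).card + (withinSet ρ i b).card ≤ k ((i : ℕ) + 1) := by
  have hdis : Disjoint (straightSet ρ i) (withinSet ρ i b) := by
    rw [Finset.disjoint_left]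
    intro j hj hj'
    obtain ⟨j', -, h⟩ := (Finset.mem_filter.1 hj').2
    refine straight_not_opposite hρ (end_ne i b) (adj_end ⟨i, j'⟩ b) (adj_end ⟨i, j'⟩ (!b)) ?_ h
    have := (Finset.mem_filter.1 hj).2
    cases b
    · exact this
    · rw [openSegment_symm]; exact this
  rw [← Finset.card_union_of_disjoint hdis]
  exact (Finset.card_le_univ _).trans (by simp)

lemma within_cross (hρ : IsPlanarDrawing (bananaPath ℓ k) ρ) (i : Fin ℓ) (b : Bool) :
    (withinSet ρ i b).card + (crossSet ρ i b).card ≤ k ((i : ℕ) + 1) := by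
  have hdis : Disjoint (withinSet ρ i b) (crossSet ρ i b) := by
    rw [Finset.disjoint_left]
    intro j hj hj'
    obtain ⟨j', -, h⟩ := (Finset.mem_filter.1 hj).2
    obtain ⟨y, hy, hy', h'⟩ := (Finset.mem_filter.1 hj').2
    have := opposite_unique hρ (adj_end ⟨i, j'⟩ b) (adj_end' hy') h h'
    exact hy (by rw [← Sum.inr.inj this])
  rw [← Finset.card_union_of_disjoint hdis]
  exact (Finset.card_le_univ _).trans (by simp)

lemma within_even (hρ : IsPlanarDrawing (bananaPath ℓ k) ρ) (i : Fin ℓ) (b : Bool) :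
    Even (withinSet ρ i b).card := by
  unfold withinSet
  convert even_card_partial_matching (fun j j' : Fin (k ((i : ℕ) + 1)) => j ≠ j' ∧
    ρ (Sum.inl (endV i b)) ∈ openSegment ℝ (ρ (Sum.inr ⟨i, j⟩)) (ρ (Sum.inr ⟨i, j'⟩))) ?_ ?_ ?_
  · rintro x y ⟨h1, h2⟩
    exact ⟨h1.symm, by rwa [openSegment_symm]⟩
  · rintro x ⟨h, -⟩
    exact h rfl
  · rintro x y z ⟨-, h⟩ ⟨-, h'⟩
    have := opposite_unique hρ (adj_end ⟨i, y⟩ b) (adj_end ⟨i, z⟩ b) h h'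
    simpa using this

/-- A banana has aligned pairs of its own edges at one of its ends at most. -/
lemma within_one_end (hρ : IsPlanarDrawing (bananaPath ℓ k) ρ) (i : Fin ℓ) :
    (withinSet ρ i false).card = 0 ∨ (withinSet ρ i true).card = 0 := by
  by_contra! h
  obtain ⟨j1, h1⟩ := Finset.card_ne_zero.1 h.1
  obtain ⟨j3, h3⟩ := Finset.card_ne_zero.1 h.2
  obtain ⟨j2, -, h12⟩ := (Finset.mem_filter.1 h1).2
  obtain ⟨j4, -, h34⟩ := (Finset.mem_filter.1 h3).2
  exact no_two_bends hρ (end_ne i false) (adj_end ⟨i, j1⟩ false) (adj_end ⟨i, j1⟩ true)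
    (adj_end ⟨i, j2⟩ false) (adj_end ⟨i, j2⟩ true) (adj_end ⟨i, j3⟩ false) (adj_end ⟨i, j3⟩ true)
    (adj_end ⟨i, j4⟩ false) (adj_end ⟨i, j4⟩ true) h12 h34

lemma cross_le (hρ : IsPlanarDrawing (bananaPath ℓ k) ρ) {i i' : Fin ℓ} {b : Bool}
    (h : endV i' (!b) = endV i b) : (crossSet ρ i b).card ≤ (crossSet ρ i' (!b)).card := by
  have hne : i ≠ i' := by
    rintro rfl
    have := endV_inj h
    cases b <;> simp at this
  refine Finset.card_le_card_of_forall_subsingleton (fun j j' =>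
    ρ (Sum.inl (endV i b)) ∈ openSegment ℝ (ρ (Sum.inr ⟨i, j⟩)) (ρ (Sum.inr ⟨i', j'⟩))) ?_ ?_
  · intro j hj
    obtain ⟨⟨i'', j'⟩, h1, h2, h3⟩ := (Finset.mem_filter.1 hj).2
    obtain rfl : i'' = i' := endV_inj_left (h2.trans h.symm)
    refine ⟨j', Finset.mem_filter.2 ⟨Finset.mem_univ _, ⟨i, j⟩, hne, ?_, ?_⟩, h3⟩
    · rw [Bool.not_not]; exact h.symm
    · rw [h, openSegment_symm]; exact h3
  · rintro j' - j1 ⟨-, h1⟩ j2 ⟨-, h2⟩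
    rw [openSegment_symm] at h1 h2
    have := opposite_unique hρ (adj_end ⟨i, j1⟩ b) (adj_end ⟨i, j2⟩ b) h1 h2
    simpa using this

lemma cross_first (i : Fin ℓ) (hi : (i : ℕ) = 0) : (crossSet ρ i false).card = 0 := by
  rw [Finset.card_eq_zero, crossSet, Finset.filter_eq_empty_iff]
  rintro j - ⟨y, -, h, -⟩
  have := congrArg Fin.val h
  rw [endV_val, endV_val] at this
  simp at this
  omega

lemma cross_last (i : Fin ℓ) (hi : (i : ℕ) + 1 = ℓ) : (crossSet ρ i true).card = 0 := by
  rw [Finset.card_eq_zero, crossSet, Finset.filter_eq_empty_iff]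
  rintro j - ⟨y, -, h, -⟩
  have := congrArg Fin.val h
  rw [endV_val, endV_val] at this
  simp at this
  have := y.1.isLt
  omega

lemma card_edges : Fintype.card (BIdx ℓ k × Bool) = 2 * ∑ i ∈ Finset.range ℓ, k (i + 1) := by
  rw [Fintype.card_prod, Fintype.card_sigma, Fintype.card_bool, mul_comm,
    ← Fin.sum_univ_eq_sum_range (fun i => k (i + 1))]
  simp

/-- Double count of the alignments of a drawing. -/
lemma lower_count (hρ : IsPlanarDrawing (bananaPath ℓ k) ρ) :
    4 * ∑ i ∈ Finset.range ℓ, k (i + 1) ≤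
      ∑ i : Fin ℓ, (2 * (straightSet ρ i).card + (withinSet ρ i false).card +
        (withinSet ρ i true).card + (crossSet ρ i false).card + (crossSet ρ i true).card) +
      2 * numSegments (bananaPath ℓ k) ρ := by
  have h := two_mul_card_le (alignGraph ρ) (fun e =>
      (if e.1.2 ∈ straightSet ρ e.1.1 then 1 else 0) +
      (if e.1.2 ∈ withinSet ρ e.1.1 e.2 then 1 else 0) +
        (if e.1.2 ∈ crossSet ρ e.1.1 e.2 then 1 else 0))
      (by rintro ⟨⟨i, j⟩, b⟩; convert degree_bound hρ i j b)
  rw [card_edges, ← mul_assoc] at h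
  rw [numSegments_eq]
  refine h.trans (le_of_eq ?_)
  congr 1
  rw [Fintype.sum_prod_type, Fintype.sum_sigma]
  refine Finset.sum_congr rfl (fun i _ => ?_)
  have hb : ∀ (n : ℕ) (S : Finset (Fin n)) [DecidablePred (· ∈ S)],
      (∑ x, if x ∈ S then 1 else 0) = S.card := by
    intro n S _
    rw [Finset.sum_boole]
    simp
  simp only [Fintype.sum_bool, Finset.sum_add_distrib, hb]
  ring

/-- Every planar drawing has at least as many segments as claimed. -/
theorem lower_bound (m : ℕ) (k a s : ℕ → ℕ)
    (hk : ∀ i, i ≤ m → 1 ≤ k (i + 1)) (ha0 : a 0 = 1) (ham : a (m + 1) = 1)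
    (ha : ∀ i, i < m → a (i + 1) = min (k (i + 1)) (k (i + 1 + 1)))
    (hs : ∀ i, i ≤ m → s (i + 1) = max (k (i + 1) - a i) (k (i + 1) - a (i + 1)))
    {ρ : BVert (m + 1) k → ℝ × ℝ} (hρ : IsPlanarDrawing (bananaPath (m + 1) k) ρ) :
    2 * ∑ i ∈ Finset.range (m + 1), k (i + 1) ≤ numSegments (bananaPath (m + 1) k) ρ +
      ((m + 1) + ∑ i ∈ Finset.range (m + 1), s (i + 1) / 2 +
        ∑ i ∈ Finset.range m, a (i + 1)) := by
  have h := lower_count hρ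
  -- functions on banana indices are extended by zero
  obtain ⟨ext, hext'⟩ : ∃ ext : (Fin (m + 1) → ℕ) → ℕ → ℕ,
      ∀ f n (h : n < m + 1), ext f n = f ⟨n, h⟩ :=
    ⟨fun f n => if h : n < m + 1 then f ⟨n, h⟩ else 0, fun f n h => dif_pos h⟩
  have hext : ∀ f (i : Fin (m + 1)), ext f i = f i := fun f i => hext' f i i.isLt
  have e := lower_arith m k a s (ext fun i => (straightSet ρ i).card)
    (ext fun i => (withinSet ρ i false).card) (ext fun i => (withinSet ρ i true).card)
    (ext fun i => (crossSet ρ i false).card) (ext fun i => (crossSet ρ i true).card)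
    hk ha0 ham ha hs
    (fun i hi => by rw [hext' _ i (by omega)]; exact straight_card hρ _)
    (fun i hi => by rw [hext' _ i (by omega), hext' _ i (by omega)]; exact straight_within hρ _ _)
    (fun i hi => by rw [hext' _ i (by omega), hext' _ i (by omega)]; exact straight_within hρ _ _)
    (fun i hi => by rw [hext' _ i (by omega), hext' _ i (by omega)]; exact within_cross hρ _ _)
    (fun i hi => by rw [hext' _ i (by omega), hext' _ i (by omega)]; exact within_cross hρ _ _)
    (fun i hi => by rw [hext' _ i (by omega)]; exact within_even hρ _ _)
    (fun i hi => by rw [hext' _ i (by omega)]; exact within_even hρ _ _)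
    (fun i hi => by rw [hext' _ i (by omega), hext' _ i (by omega)]; exact within_one_end hρ _)
    (fun i hi => by
      rw [hext' _ i (by omega), hext' _ (i + 1) (by omega)]
      exact le_antisymm
        (cross_le (b := true) hρ (Fin.ext (by rw [endV_val, endV_val]; simp)))
        (cross_le (b := false) hρ (Fin.ext (by rw [endV_val, endV_val]; simp))))
    (by rw [hext' _ 0 (by omega)]; exact cross_first _ rfl)
    (by rw [hext' _ m (by omega)]; exact cross_last _ rfl)
  rw [← Fin.sum_univ_eq_sum_range (fun i => 2 * ext (fun i => (straightSet ρ i).card) i +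
    ext (fun i => (withinSet ρ i false).card) i + ext (fun i => (withinSet ρ i true).card) i +
    ext (fun i => (crossSet ρ i false).card) i + ext (fun i => (crossSet ρ i true).card) i)] at e
  simp only [hext] at e
  omega

end LowerCount

/-! ### A family of planar drawings -/

section Layout

variable {ℓ : ℕ} {k : ℕ → ℕ} (p q : ℕ → ℕ → ℝ)

/-- The side of the axis on which the `j`-th path of the `i`-th banana runs; `0` for the
straight path. -/
def side (i j : ℕ) : ℝ := if j = 0 then 0 else (-1) ^ (i + j)

/-- The drawing with covering vertices `(0, 0), (1, 0), …` in which the `j`-th path of the `i`-th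
banana leaves its left end with cotangent `p i j` and its right end with cotangent `q i j`. -/
noncomputable def layout : BVert ℓ k → ℝ × ℝ
  | Sum.inl v => ((v : ℕ), 0)
  | Sum.inr x => ((x.1 : ℕ) + p x.1 x.2 / (p x.1 x.2 + q x.1 x.2),
      side x.1 x.2 / (p x.1 x.2 + q x.1 x.2))

/-- Conditions on the cotangents under which `layout` is a planar drawing. -/
structure Admissible (ℓ : ℕ) (k : ℕ → ℕ) (p q : ℕ → ℕ → ℝ) : Prop where
  eq_zero : ∀ i, i < ℓ → p i 0 = q i 0
  sum_pos : ∀ i j, i < ℓ → j < k (i + 1) → 0 < p i j + q i j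
  left_pos : ∀ i j, i < ℓ → j < k (i + 1) → 0 < 3 * p i j + q i j
  right_pos : ∀ i j, i < ℓ → j < k (i + 1) → 0 < p i j + 3 * q i j
  anti_left : ∀ i j j', i < ℓ → j < j' → j' < k (i + 1) → p i j' < p i j
  anti_right : ∀ i j j', i < ℓ → j < j' → j' < k (i + 1) → q i j' < q i j
  cross : ∀ i j j', i + 1 < ℓ → j < k (i + 1) → j' < k (i + 1 + 1) → 0 < q i j + p (i + 1) j'

variable {p q}

lemma side_zero (i : ℕ) : side i 0 = 0 := if_pos rfl

lemma side_cases (i j : ℕ) : (j = 0 ∧ side i j = 0) ∨ (j ≠ 0 ∧ side i j = 1) ∨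
    (j ≠ 0 ∧ side i j = -1) := by
  unfold side
  split_ifs with h
  · simp [h]
  · rcases neg_one_pow_eq_or ℝ (i + j) with h' | h' <;> simp [h, h']

/-- Points of an edge, in terms of the distance `u` from the axis (a mere parameter if the path
is straight). -/
lemma layout_edge (h : Admissible ℓ k p q) (x : BIdx ℓ k) (b : Bool) (P : ℝ × ℝ)
    (hP : P ∈ segment ℝ (layout p q (Sum.inl (endV x.1 b) : BVert ℓ k)) (layout p q (Sum.inr x))) :
    ∃ u : ℝ, 0 ≤ u ∧ (p x.1 x.2 + q x.1 x.2) * u ≤ 1 ∧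
      P.1 = (if b then (x.1 : ℕ) + 1 - q x.1 x.2 * u else (x.1 : ℕ) + p x.1 x.2 * u) ∧
      P.2 = side x.1 x.2 * u := by
  have hD := h.sum_pos x.1 x.2 x.1.isLt x.2.isLt
  obtain ⟨t, h0, h1, h2, h3⟩ := (mem_segment_coords _ _ _).1 hP
  simp only [layout, endV_val] at h2 h3
  set D := p x.1 x.2 + q x.1 x.2 with hDdef
  refine ⟨t / D, by positivity, ?_, ?_, ?_⟩
  · rw [mul_div_cancel₀ _ hD.ne']; exact h1
  · have hq : q x.1 x.2 = D - p x.1 x.2 := by rw [hDdef]; ring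
    rw [h2, hq]
    cases b
    · simp only [Bool.false_eq_true, if_false, Nat.cast_add, Nat.cast_zero]
      field_simp
      ring
    · simp only [if_true, Nat.cast_add, Nat.cast_one]
      field_simp
      ring
  · rw [h3]; field_simp; ring

/-- Edges of two different paths of a banana at the same end meet on the axis only. Here and in the
next two lemmas, `σ` is the side of a path and `u` the parameter of `layout_edge`. -/
lemma same_banana_same_end {p p' σ σ' u u' : ℝ} {j j' : ℕ} (hu : 0 ≤ u) (hu' : 0 ≤ u')
    (hj : j ≠ j')
    (hσ : (j = 0 ∧ σ = 0) ∨ (j ≠ 0 ∧ σ = 1) ∨ (j ≠ 0 ∧ σ = -1))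
    (hσ' : (j' = 0 ∧ σ' = 0) ∨ (j' ≠ 0 ∧ σ' = 1) ∨ (j' ≠ 0 ∧ σ' = -1))
    (h0 : j = 0 → 0 < p) (h0' : j' = 0 → 0 < p') (hp : p ≠ p')
    (hx : p * u = p' * u') (hy : σ * u = σ' * u') : u = 0 := by
  rcases hσ with ⟨h, rfl⟩ | ⟨h, rfl⟩ | ⟨h, rfl⟩ <;> rcases hσ' with ⟨h', rfl⟩ | ⟨h', rfl⟩ | ⟨h', rfl⟩
  · omega
  · have : u' = 0 := by linarith
    subst this
    simpa [(h0 h).ne'] using hx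
  · have : u' = 0 := by linarith
    subst this
    simpa [(h0 h).ne'] using hx
  · linarith
  · have : u' = u := by linarith
    subst this
    by_contra hne
    exact hp (mul_right_cancel₀ hne hx)
  · linarith
  · linarith
  · linarith
  · have : u' = u := by linarith
    subst this
    by_contra hne
    exact hp (mul_right_cancel₀ hne hx)

/-- Edges of a banana at different ends meet only if they belong to the same path, because the
paths on one side are nested. -/
lemma same_banana_other_end {p q p' q' σ σ' u u' : ℝ} {j j' : ℕ} (hu : 0 ≤ u) (hu' : 0 ≤ u')
    (hσ : (j = 0 ∧ σ = 0) ∨ (j ≠ 0 ∧ σ = 1) ∨ (j ≠ 0 ∧ σ = -1))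
    (hσ' : (j' = 0 ∧ σ' = 0) ∨ (j' ≠ 0 ∧ σ' = 1) ∨ (j' ≠ 0 ∧ σ' = -1))
    (h0 : j = 0 → p = q) (h0' : j' = 0 → p' = q')
    (hp : (j < j' → p' < p ∧ q' < q)) (hp' : j' < j → p < p' ∧ q < q')
    (h1 : (p + q) * u ≤ 1) (h1' : (p' + q') * u' ≤ 1)
    (hx : p * u = 1 - q' * u') (hy : σ * u = σ' * u') : j = j' := by
  have key : u = u' → u ≠ 0 → j = j' := by
    rintro rfl hne
    have hpos : 0 < u := lt_of_le_of_ne hu (Ne.symm hne)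
    rcases lt_trichotomy j j' with h | h | h
    · have := hp h
      nlinarith
    · exact h
    · have := hp' h
      nlinarith
  by_contra hj
  rcases hσ with ⟨h, rfl⟩ | ⟨h, rfl⟩ | ⟨h, rfl⟩ <;> rcases hσ' with ⟨h', rfl⟩ | ⟨h', rfl⟩ | ⟨h', rfl⟩
  · omega
  · have : u' = 0 := by linarith
    subst this
    have := h0 h
    subst this
    linarith
  · have : u' = 0 := by linarith
    subst this
    have := h0 h
    subst this
    linarith
  · have : u = 0 := by linarith
    subst this
    have := h0' h'
    subst this
    linarith
  · exact hj (key (by linarith) (by rintro rfl; have : u' = 0 := by linarith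
                                    subst this; linarith))
  · have : u = 0 := by linarith
    have : u' = 0 := by linarith
    subst_vars; linarith
  · have : u = 0 := by linarith
    subst this
    have := h0' h'
    subst this
    linarith
  · have : u = 0 := by linarith
    have : u' = 0 := by linarith
    subst_vars; linarith
  · exact hj (key (by linarith) (by rintro rfl; have : u' = 0 := by linarith
                                    subst this; linarith))

/-- Edges of neighbouring bananas meet in the common covering vertex only, because all angles at
that vertex between edges of the two bananas on one side are positive. -/
lemma neighbour_banana {q p' σ σ' u u' : ℝ} {j j' : ℕ} (hu : 0 ≤ u) (hu' : 0 ≤ u')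
    (hσ : (j = 0 ∧ σ = 0) ∨ (j ≠ 0 ∧ σ = 1) ∨ (j ≠ 0 ∧ σ = -1))
    (hσ' : (j' = 0 ∧ σ' = 0) ∨ (j' ≠ 0 ∧ σ' = 1) ∨ (j' ≠ 0 ∧ σ' = -1))
    (h0 : j = 0 → 0 < q) (h0' : j' = 0 → 0 < p') (hs : 0 < q + p')
    (hx : q * u + p' * u' ≤ 0) (hy : σ * u = σ' * u') : u = 0 ∧ u' = 0 := by
  have key : u = u' → u = 0 ∧ u' = 0 := by
    rintro rfl
    have : u = 0 := by nlinarith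
    exact ⟨this, this⟩
  rcases hσ with ⟨h, rfl⟩ | ⟨h, rfl⟩ | ⟨h, rfl⟩ <;> rcases hσ' with ⟨h', rfl⟩ | ⟨h', rfl⟩ | ⟨h', rfl⟩
  · have := h0 h
    have := h0' h'
    constructor <;> nlinarith [mul_nonneg (h0 h).le hu, mul_nonneg (h0' h').le hu']
  · have := h0 h
    have : u' = 0 := by linarith
    subst this
    constructor <;> nlinarith
  · have := h0 h
    have : u' = 0 := by linarith
    subst this
    constructor <;> nlinarith
  · have := h0' h'
    have : u = 0 := by linarith
    subst this
    constructor <;> nlinarith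
  · exact key (by linarith)
  · constructor <;> linarith
  · have := h0' h'
    have : u = 0 := by linarith
    subst this
    constructor <;> nlinarith
  · constructor <;> linarith
  · exact key (by linarith)

lemma Admissible.pos_zero (h : Admissible ℓ k p q) {i j : ℕ} (hi : i < ℓ) (hjk : j < k (i + 1))
    (hj : j = 0) : 0 < p i j ∧ 0 < q i j := by
  have h1 := h.sum_pos i j hi hjk
  subst hj
  have h2 := h.eq_zero i hi
  constructor <;> linarith

/-- `layout_inter` for edges `x`, `y` in left-to-right order of their bananas. -/
lemma layout_inter_aux (h : Admissible ℓ k p q) {x y : BIdx ℓ k} {b b' : Bool}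
    (hne : ¬ (x = y ∧ b = b')) (hle : (x.1 : ℕ) ≤ y.1) {P : ℝ × ℝ}
    (hP : P ∈ segment ℝ (layout p q (Sum.inl (endV x.1 b) : BVert ℓ k)) (layout p q (Sum.inr x)))
    (hP' : P ∈ segment ℝ (layout p q (Sum.inl (endV y.1 b') : BVert ℓ k))
      (layout p q (Sum.inr y))) :
    ∃ w : BVert ℓ k, (w = Sum.inl (endV x.1 b) ∨ w = Sum.inr x) ∧
      (w = Sum.inl (endV y.1 b') ∨ w = Sum.inr y) ∧ P = layout p q w := by
  obtain ⟨u, hu, hu1, hx1, hx2⟩ := layout_edge h x b P hP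
  obtain ⟨u', hu', hu1', hy1, hy2⟩ := layout_edge h y b' P hP'
  obtain ⟨i, j⟩ := x
  obtain ⟨i', j'⟩ := y
  dsimp only at *
  have hD := h.sum_pos i j i.isLt j.isLt
  have hR := h.right_pos i j i.isLt j.isLt
  have hL' := h.left_pos i' j' i'.isLt j'.isLt
  have hz : (j : ℕ) = 0 → 0 < p i j ∧ 0 < q i j := h.pos_zero i.isLt j.isLt
  have hz' : (j' : ℕ) = 0 → 0 < p i' j' ∧ 0 < q i' j' := h.pos_zero i'.isLt j'.isLt
  have hs := side_cases i j
  have hs' := side_cases i' j'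
  have hy : side i j * u = side i' j' * u' := hx2.symm.trans hy2
  -- the two edges lie in the cones spanned at the right and left ends of their bananas
  have hc : q i j * u ≤ (i : ℕ) + 1 - P.1 := by
    rw [hx1]; split_ifs <;> linarith
  have hc' : p i' j' * u' ≤ P.1 - (i' : ℕ) := by
    rw [hy1]; split_ifs <;> linarith
  rcases Nat.lt_trichotomy ((i : ℕ) + 1) i' with hlt | heq | hgt
  · exfalso
    have h1 : ((i : ℕ) : ℝ) + 2 ≤ (i' : ℕ) := by exact_mod_cast hlt
    have h2 : -1 ≤ 2 * (q i j * u) := by nlinarith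
    have h3 : -1 ≤ 2 * (p i' j' * u') := by nlinarith
    have h4 : 2 * (q i j * u) = -1 := by linarith
    have h5 : u ≠ 0 := by rintro rfl; norm_num at h4
    have h6 : 0 < u := lt_of_le_of_ne hu (Ne.symm h5)
    nlinarith
  · have h1 : ((i' : ℕ) : ℝ) = (i : ℕ) + 1 := by exact_mod_cast heq.symm
    have hcr : ∀ n, (i : ℕ) + 1 = n → n < ℓ → (j' : ℕ) < k (n + 1) → 0 < q i j + p n j' := by
      rintro _ rfl hn hj'
      exact h.cross i j j' hn j.isLt hj'
    obtain ⟨rfl, rfl⟩ := neighbour_banana (q := q i j) (p' := p i' j') hu hu' hs hs'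
      (fun h => (hz h).2) (fun h => (hz' h).1)
      (hcr i' heq i'.isLt j'.isLt)
      (by linarith) hy
    have hb : b = true := by
      cases b
      · exfalso
        simp only [mul_zero, add_zero, sub_zero, Bool.false_eq_true, if_false] at hx1 hy1
        cases b' <;> simp at hy1 <;> linarith
      · rfl
    subst hb
    have hb : b' = false := by
      cases b'
      · rfl
      · exfalso
        simp only [mul_zero, add_zero, sub_zero, if_true] at hx1 hy1
        linarith
    subst hb
    refine ⟨Sum.inl (endV i true), Or.inl rfl, Or.inl ?_, ?_⟩
    · congr 1
      apply Fin.ext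
      rw [endV_val, endV_val]
      simpa using heq
    · refine Prod.ext ?_ ?_
      · simp [hx1, layout, endV_val]
      · simp [hx2, layout]
  · obtain rfl : i = i' := Fin.ext (by omega)
    by_cases hj : j = j'
    · subst hj
      have hbb : b ≠ b' := fun hb => hne ⟨rfl, hb⟩
      -- the two edges of one path meet in its apex only
      refine ⟨Sum.inr ⟨i, j⟩, Or.inr rfl, Or.inr rfl, ?_⟩
      have hsum : p i j * (if b then u' else u) = 1 - q i j * (if b then u else u') := by
        cases b <;> cases b' <;> simp at hbb hx1 hy1 ⊢ <;> linarith
      have huu : u = u' ∧ (p i j + q i j) * u = 1 := by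
        have huu : u = u' := by
          rcases hs with ⟨h0, h1⟩ | ⟨h0, h1⟩ | ⟨h0, h1⟩
          · have hz := hz h0
            have hpq : p i j = q i j := by rw [h0]; exact h.eq_zero i i.isLt
            rw [hpq] at hsum hu1 hu1' hz
            have h2 : q i j * (u + u') = 1 := by cases b <;> simp at hsum <;> linarith
            have h3 : q i j * (u - u') = 0 := by linarith
            rcases mul_eq_zero.1 h3 with h3 | h3 <;> linarith
          · rw [h1] at hy; linarith
          · rw [h1] at hy; linarith
        subst huu
        refine ⟨rfl, ?_⟩
        cases b <;> simp at hsum <;> linarith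
      obtain ⟨rfl, huD⟩ := huu
      have hu2 : u = 1 / (p i j + q i j) := by field_simp; linarith
      refine Prod.ext ?_ ?_
      · simp only [layout]
        rw [hx1]
        cases b
        · simp only [Bool.false_eq_true, if_false]; rw [hu2]; ring
        · simp only [if_true]
          have : q i j * u = 1 - p i j * u := by linarith
          rw [this, hu2]; ring
      · simp only [layout]
        rw [hx2, hu2]; ring
    · have hjv : (j : ℕ) ≠ j' := fun h => hj (Fin.ext h)
      have hlt : (j : ℕ) < j' → p i j' < p i j ∧ q i j' < q i j := fun hh =>
        ⟨h.anti_left i j j' i.isLt hh j'.isLt, h.anti_right i j j' i.isLt hh j'.isLt⟩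
      have hgt : (j' : ℕ) < j → p i j < p i j' ∧ q i j < q i j' := fun hh =>
        ⟨h.anti_left i j' j i.isLt hh j.isLt, h.anti_right i j' j i.isLt hh j.isLt⟩
      have h0 : (j : ℕ) = 0 → p i j = q i j := fun hh => by rw [hh]; exact h.eq_zero i i.isLt
      have h0' : (j' : ℕ) = 0 → p i j' = q i j' := fun hh => by rw [hh]; exact h.eq_zero i i.isLt
      have hpne : p i j ≠ p i j' := by
        rcases lt_or_gt_of_ne hjv with hh | hh
        · exact (hlt hh).1.ne'
        · exact (hgt hh).1.ne
      have hqne : q i j ≠ q i j' := by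
        rcases lt_or_gt_of_ne hjv with hh | hh
        · exact (hlt hh).2.ne'
        · exact (hgt hh).2.ne
      cases b <;> cases b'
      · simp only [Bool.false_eq_true, if_false] at hx1 hy1
        have := same_banana_same_end hu hu' hjv hs hs' (fun h => (hz h).1) (fun h => (hz' h).1)
          hpne (by linarith) hy
        subst this
        refine ⟨Sum.inl (endV i false), Or.inl rfl, Or.inl rfl, Prod.ext ?_ ?_⟩
        · simp [hx1, layout, endV_val]
        · simp [hx2, layout]
      · simp only [Bool.false_eq_true, if_false, if_true] at hx1 hy1
        exact absurd (same_banana_other_end hu hu' hs hs' h0 h0' hlt hgt hu1 hu1'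
          (by linarith) hy) hjv
      · simp only [Bool.false_eq_true, if_false, if_true] at hx1 hy1
        exact absurd (same_banana_other_end hu' hu hs' hs h0' h0 hgt hlt hu1' hu1
          (by linarith) hy.symm) (Ne.symm hjv)
      · simp only [if_true] at hx1 hy1
        have := same_banana_same_end hu hu' hjv hs hs' (fun h => (hz h).2) (fun h => (hz' h).2)
          hqne (by linarith) hy
        subst this
        refine ⟨Sum.inl (endV i true), Or.inl rfl, Or.inl rfl, Prod.ext ?_ ?_⟩
        · simp [hx1, layout, endV_val]
        · simp [hx2, layout]

/-- Two different edges of an admissible layout meet in common end vertices only. -/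
lemma layout_inter (h : Admissible ℓ k p q) {x y : BIdx ℓ k} {b b' : Bool}
    (hne : ¬ (x = y ∧ b = b')) {P : ℝ × ℝ}
    (hP : P ∈ segment ℝ (layout p q (Sum.inl (endV x.1 b) : BVert ℓ k)) (layout p q (Sum.inr x)))
    (hP' : P ∈ segment ℝ (layout p q (Sum.inl (endV y.1 b') : BVert ℓ k))
      (layout p q (Sum.inr y))) :
    ∃ w : BVert ℓ k, (w = Sum.inl (endV x.1 b) ∨ w = Sum.inr x) ∧
      (w = Sum.inl (endV y.1 b') ∨ w = Sum.inr y) ∧ P = layout p q w := by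
  rcases le_total (x.1 : ℕ) y.1 with hle | hle
  · exact layout_inter_aux h hne hle hP hP'
  · obtain ⟨w, h1, h2, h3⟩ := layout_inter_aux h (fun hh => hne ⟨hh.1.symm, hh.2.symm⟩) hle hP' hP
    exact ⟨w, h2, h1, h3⟩

lemma layout_inl_ne_inr (h : Admissible ℓ k p q) (v : Fin (ℓ + 1)) (x : BIdx ℓ k) :
    layout p q (Sum.inl v : BVert ℓ k) ≠ layout p q (Sum.inr x) := by
  obtain ⟨i, j⟩ := x
  have hD := h.sum_pos i j i.isLt j.isLt
  intro heq
  have h1 := congrArg Prod.fst heq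
  have h2 := congrArg Prod.snd heq
  simp only [layout] at h1 h2
  rcases side_cases i j with ⟨h3, h4⟩ | ⟨h3, h4⟩ | ⟨h3, h4⟩
  · have hpq : p i j = q i j := by rw [h3]; exact h.eq_zero i i.isLt
    rw [hpq] at h1 hD
    have hq : q i j ≠ 0 := by intro hq; rw [hq] at hD; simp at hD
    have h5 : q i j / (q i j + q i j) = 1 / 2 := by field_simp; norm_num
    rw [h5] at h1
    have h6 : (2 * (v : ℕ) : ℝ) = ((2 * (i : ℕ) + 1 : ℕ) : ℝ) := by push_cast; linarith
    have h7 : 2 * (v : ℕ) = 2 * (i : ℕ) + 1 := by exact_mod_cast h6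
    omega
  · rw [h4] at h2
    exact (one_div_pos.2 hD).ne h2
  · rw [h4, neg_div] at h2
    have := one_div_pos.2 hD
    linarith

lemma layout_injective (h : Admissible ℓ k p q) :
    Function.Injective (layout p q : BVert ℓ k → ℝ × ℝ) := by
  rintro (v | x) (v' | y) heq
  · have h1 := congrArg Prod.fst heq
    simp only [layout, Nat.cast_inj] at h1
    rw [Fin.ext h1]
  · exact absurd heq (layout_inl_ne_inr h v y)
  · exact absurd heq.symm (layout_inl_ne_inr h v' x)
  · by_contra hne
    obtain ⟨w, h1, h2, h3⟩ := layout_inter h (x := x) (y := y) (b := false) (b' := false)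
      (fun hh => hne (by rw [hh.1])) (right_mem_segment ℝ _ _) (heq ▸ right_mem_segment ℝ _ _)
    rcases h1 with rfl | rfl
    · exact layout_inl_ne_inr h _ _ h3.symm
    · rcases h2 with h2 | h2
      · exact Sum.inr_ne_inl h2
      · exact hne h2

lemma exists_incident (hk : ∀ i, i < ℓ → 1 ≤ k (i + 1)) (hℓ : 1 ≤ ℓ) (w : BVert ℓ k) :
    ∃ (x : BIdx ℓ k) (b : Bool), w = Sum.inl (endV x.1 b) ∨ w = Sum.inr x := by
  rcases w with v | x
  · by_cases hv : (v : ℕ) = 0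
    · refine ⟨⟨⟨0, hℓ⟩, ⟨0, hk 0 hℓ⟩⟩, false, Or.inl (congrArg _ (Fin.ext ?_))⟩
      rw [endV_val]; simpa using hv
    · have hvl : (v : ℕ) - 1 < ℓ := by have := v.isLt; omega
      refine ⟨⟨⟨v - 1, hvl⟩, ⟨0, hk _ hvl⟩⟩, true, Or.inl (congrArg _ (Fin.ext ?_))⟩
      rw [endV_val]
      simp
      omega
  · exact ⟨x, false, Or.inr rfl⟩

theorem layout_planar (hk : ∀ i, i < ℓ → 1 ≤ k (i + 1)) (hℓ : 1 ≤ ℓ) (h : Admissible ℓ k p q) :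
    IsPlanarDrawing (bananaPath ℓ k) (layout p q) := by
  -- every adjacency is, up to orientation, one of the coded edges
  have hadj : ∀ {u v : BVert ℓ k}, (bananaPath ℓ k).Adj u v → ∃ (x : BIdx ℓ k) (b : Bool),
      s(u, v) = edgeOf (x, b) ∧
      (∀ w, (w = Sum.inl (endV x.1 b) ∨ w = Sum.inr x) ↔ (w = u ∨ w = v)) ∧
      segment ℝ (layout p q u) (layout p q v) =
        segment ℝ (layout p q (Sum.inl (endV x.1 b) : BVert ℓ k)) (layout p q (Sum.inr x)) := by
    intro u v huv
    obtain ⟨x, b, ⟨rfl, rfl⟩ | ⟨rfl, rfl⟩⟩ := (bananaPath_adj u v).1 huv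
    · exact ⟨x, b, rfl, fun w => Iff.rfl, rfl⟩
    · exact ⟨x, b, Sym2.eq_swap, fun w => Or.comm, segment_symm _ _ _⟩
  refine ⟨layout_injective h, ?_, ?_⟩
  · intro u v u' v' huv huv' hne P hP hP'
    obtain ⟨x, b, h1, h2, h3⟩ := hadj huv
    obtain ⟨y, b', h1', h2', h3'⟩ := hadj huv'
    rw [h3] at hP
    rw [h3'] at hP'
    obtain ⟨w, hw, hw', hPw⟩ := layout_inter h
      (fun hh => hne (by rw [h1, h1', hh.1, hh.2])) hP hP'
    exact ⟨w, (h2 w).1 hw, (h2' w).1 hw', hPw⟩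
  · -- an isolated-vertex-free drawing with well-behaved edges has no vertex inside an edge
    intro u v w huv hwu hwv hP
    obtain ⟨x, b, h1, h2, h3⟩ := hadj huv
    obtain ⟨y, b', hw⟩ := exists_incident hk hℓ w
    rw [h3] at hP
    have hP' : layout p q w ∈ segment ℝ (layout p q (Sum.inl (endV y.1 b') : BVert ℓ k))
        (layout p q (Sum.inr y)) := by
      rcases hw with rfl | rfl
      · exact left_mem_segment ℝ _ _
      · exact right_mem_segment ℝ _ _
    obtain ⟨w', hw', -, hPw⟩ := layout_inter h (fun hh => by
      obtain ⟨rfl, rfl⟩ := hh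
      exact ((h2 w).1 hw).elim hwu hwv) hP hP'
    rw [← layout_injective h hPw] at hw'
    exact ((h2 w).1 hw').elim hwu hwv

end Layout

/-! ### The choice of cotangents -/

section Cotangents

/-- Cotangents at an end of a banana where the paths `j < τ` are to be continued by the
neighbouring banana and the remaining paths, up to `K`, are paired up within the banana: they
form an arithmetic progression in which the values with index `τ + t` and
`τ + 2 * ((K - τ) / 2) - 1 - t` are opposite. -/
noncomputable def cot (M : ℝ) (τ K j : ℕ) : ℝ :=
  if j < τ then M - j else 2 * ((K - τ) / 2 : ℕ) - 1 - 2 * ((j : ℝ) - τ)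

lemma cot_of_lt {M : ℝ} {τ K j : ℕ} (h : j < τ) : cot M τ K j = M - j := if_pos h

lemma cot_lower {M T : ℝ} {τ K j : ℕ} (hj : j < K) (hK : (K : ℝ) ≤ T) (hM : 0 ≤ M) :
    -T ≤ cot M τ K j := by
  unfold cot
  have hj' : (j : ℝ) ≤ K := by exact_mod_cast hj.le
  split_ifs with h
  · linarith
  · obtain ⟨d, rfl⟩ := Nat.exists_eq_add_of_le (not_lt.1 h)
    have h1 : 2 * d + 1 ≤ K + 2 * ((K - τ) / 2) := by omega
    have h2 : 2 * (d : ℝ) + 1 ≤ K + 2 * (((K - τ) / 2 : ℕ) : ℝ) := by exact_mod_cast h1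
    push_cast
    linarith

lemma cot_anti {M : ℝ} {τ K j j' : ℕ} (hjj : j < j') (hj : j' < K) (hM : 2 * (K : ℝ) ≤ M) :
    cot M τ K j' < cot M τ K j := by
  have hjj' : (j : ℝ) < j' := by exact_mod_cast hjj
  have hj' : (j' : ℝ) < K := by exact_mod_cast hj
  unfold cot
  split_ifs with h1 h2 h2
  · linarith
  · omega
  · have h3 : 2 * ((K - τ) / 2) ≤ K := by omega
    have h4 : 2 * (((K - τ) / 2 : ℕ) : ℝ) ≤ K := by exact_mod_cast h3
    have h5 : (τ : ℝ) ≤ j' := by exact_mod_cast not_lt.1 h1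
    linarith
  · linarith

lemma cot_opposite {M : ℝ} {τ K t : ℕ} (ht : t < (K - τ) / 2) :
    cot M τ K (τ + (2 * ((K - τ) / 2) - 1 - t)) = -cot M τ K (τ + t) := by
  unfold cot
  rw [if_neg (by omega), if_neg (by omega)]
  have h : 2 * ((K - τ) / 2) - 1 - t + 1 + t = 2 * ((K - τ) / 2) := by omega
  have h' : (((2 * ((K - τ) / 2) - 1 - t : ℕ) : ℝ)) + 1 + t = 2 * (((K - τ) / 2 : ℕ) : ℝ) := by
    exact_mod_cast h
  push_cast
  linarith

/-- Whether the surplus paths of the `i`-th banana are paired up at its right end: this happens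
at the end with the smaller threshold `a`. -/
def bendEnd (a : ℕ → ℕ) (i : ℕ) : Bool := decide (a (i + 1) < a i)

/-- The threshold at the end `bendEnd a i`. -/
def threshold (a : ℕ → ℕ) (i : ℕ) : ℕ := if bendEnd a i then a (i + 1) else a i

/-- The cotangents of the paths of the `i`-th banana at its end `b`. -/
noncomputable def endCot (M : ℝ) (k a : ℕ → ℕ) (b : Bool) (i j : ℕ) : ℝ :=
  if bendEnd a i = b then cot M (threshold a i) (k (i + 1)) j else M - j

variable {M T : ℝ} {k a : ℕ → ℕ}

lemma endCot_lower {b : Bool} {i j : ℕ} (hj : j < k (i + 1)) (hK : (k (i + 1) : ℝ) ≤ T)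
    (hM : 0 ≤ M) : -T ≤ endCot M k a b i j := by
  unfold endCot
  split_ifs
  · exact cot_lower hj hK hM
  · have hj' : (j : ℝ) ≤ k (i + 1) := by exact_mod_cast hj.le
    linarith

lemma endCot_anti {b : Bool} {i j j' : ℕ} (hjj : j < j') (hj : j' < k (i + 1))
    (hM : 2 * (k (i + 1) : ℝ) ≤ M) : endCot M k a b i j' < endCot M k a b i j := by
  unfold endCot
  split_ifs
  · exact cot_anti hjj hj hM
  · have hjj' : (j : ℝ) < j' := by exact_mod_cast hjj
    linarith

lemma endCot_of_lt_left {i j : ℕ} (h : j < a i) : endCot M k a false i j = M - j := by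
  unfold endCot
  split_ifs with hb
  · rw [threshold, hb]; exact cot_of_lt h
  · rfl

lemma endCot_of_lt_right {i j : ℕ} (h : j < a (i + 1)) : endCot M k a true i j = M - j := by
  unfold endCot
  split_ifs with hb
  · rw [threshold, hb]; exact cot_of_lt h
  · rfl

lemma endCot_or {i j : ℕ} :
    endCot M k a false i j = M - j ∨ endCot M k a true i j = M - j := by
  unfold endCot
  rcases h : bendEnd a i <;> simp

/-- For large `M` the cotangents `endCot` are admissible: in each sum
that has to be positive, a small or negative cotangent is accompanied by one of the form `M - j`. -/
lemma admissible_endCot {ℓ : ℕ} (hk : ∀ i, i < ℓ → 1 ≤ k (i + 1))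
    (hkT : ∀ i, i < ℓ → (k (i + 1) : ℝ) ≤ T) (hM : 5 * T ≤ M)
    (ha1 : ∀ i, i ≤ ℓ → 1 ≤ a i)
    (ha : ∀ i, i + 1 < ℓ → a (i + 1) = min (k (i + 1)) (k (i + 1 + 1))) :
    Admissible ℓ k (endCot M k a false) (endCot M k a true) := by
  have hT : ∀ i, i < ℓ → 1 ≤ T := fun i hi =>
    le_trans (by exact_mod_cast hk i hi) (hkT i hi)
  have hlow : ∀ b i j, i < ℓ → j < k (i + 1) → -T ≤ endCot M k a b i j := fun b i j hi hj =>
    endCot_lower hj (hkT i hi) (by linarith [hT i hi])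
  have hjT : ∀ i j, i < ℓ → j < k (i + 1) → (j : ℝ) < T := fun i j hi hj =>
    lt_of_lt_of_le (by exact_mod_cast hj) (hkT i hi)
  refine ⟨?_, ?_, ?_, ?_, ?_, ?_, ?_⟩
  · intro i hi
    rw [endCot_of_lt_left (ha1 i hi.le), endCot_of_lt_right (ha1 (i + 1) hi)]
  · intro i j hi hj
    rcases endCot_or (M := M) (k := k) (a := a) (i := i) (j := j) with h | h <;>
      linarith [hlow false i j hi hj, hlow true i j hi hj, hjT i j hi hj, hT i hi]
  · intro i j hi hj
    rcases endCot_or (M := M) (k := k) (a := a) (i := i) (j := j) with h | h <;>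
      linarith [hlow false i j hi hj, hlow true i j hi hj, hjT i j hi hj, hT i hi]
  · intro i j hi hj
    rcases endCot_or (M := M) (k := k) (a := a) (i := i) (j := j) with h | h <;>
      linarith [hlow false i j hi hj, hlow true i j hi hj, hjT i j hi hj, hT i hi]
  · intro i j j' hi hjj hj
    exact endCot_anti hjj hj (by linarith [hkT i hi, hT i hi])
  · intro i j j' hi hjj hj
    exact endCot_anti hjj hj (by linarith [hkT i hi, hT i hi])
  · intro i j j' hi hj hj'
    -- one of the two bananas has all its paths below the common threshold
    have hmin := ha i hi
    have h1 := hlow true i j (by omega) hj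
    have h2 := hlow false (i + 1) j' hi hj'
    have h3 := hjT i j (by omega) hj
    have h4 := hjT (i + 1) j' hi hj'
    have h5 := hT i (by omega)
    rcases Nat.lt_or_ge j (a (i + 1)) with h | h
    · have := endCot_of_lt_right (M := M) (k := k) h
      linarith
    · have := endCot_of_lt_left (M := M) (k := k) (a := a) (i := i + 1) (j := j') (by omega)
      linarith

end Cotangents

/-! ### Alignments in the constructed drawing -/

section Alignments

variable {ℓ : ℕ} {k : ℕ → ℕ} {p q : ℕ → ℕ → ℝ}

lemma align_straight (h : Admissible ℓ k p q) (i : Fin ℓ) (h0 : 0 < k ((i : ℕ) + 1)) :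
    (alignGraph (layout p q)).Adj ((⟨i, ⟨0, h0⟩⟩ : BIdx ℓ k), false) (⟨i, ⟨0, h0⟩⟩, true) := by
  refine (aligned_edgeOf_iff _ _ _ _ _).2 (Or.inl ⟨rfl, rfl, ?_⟩)
  rw [mem_openSegment_coords]
  have hpq := h.eq_zero i i.isLt
  have hD := h.sum_pos i 0 i.isLt h0
  have hp : p i 0 ≠ 0 := by intro hp; rw [← hpq, hp] at hD; simp at hD
  refine ⟨1, one_pos, ?_, ?_⟩
  · simp only [layout, endV_val, ← hpq]
    simp
    field_simp
    norm_num
  · simp [layout, side_zero]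

lemma side_neg {i j i' j' : ℕ} (hj : j = 0 ↔ j' = 0) (h : (i' + j' + (i + j)) % 2 = 1 ∨ j = 0) :
    side i' j' = -side i j := by
  unfold side
  by_cases h0 : j = 0
  · rw [if_pos h0, if_pos (hj.1 h0), neg_zero]
  · rw [if_neg h0, if_neg (fun h' => h0 (hj.2 h'))]
    have h := h.resolve_right h0
    rcases Nat.even_or_odd (i + j) with he | ho
    · have : Odd (i' + j') := by rw [Nat.odd_iff]; rw [Nat.even_iff] at he; omega
      rw [he.neg_one_pow, this.neg_one_pow]
    · have : Even (i' + j') := by rw [Nat.even_iff]; rw [Nat.odd_iff] at ho; omega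
      rw [ho.neg_one_pow, this.neg_one_pow, neg_neg]

/-- Equal cotangents on opposite sides align edges of neighbouring bananas. -/
lemma align_cross (h : Admissible ℓ k p q) {i i' : Fin ℓ} (hi : (i : ℕ) + 1 = i')
    (j : Fin (k ((i : ℕ) + 1))) (j' : Fin (k ((i' : ℕ) + 1))) (hj : (j : ℕ) = j')
    (hc : p i' j' = q i j) :
    (alignGraph (layout p q)).Adj ((⟨i, j⟩ : BIdx ℓ k), true) (⟨i', j'⟩, false) := by
  have hends : endV i true = endV i' false := Fin.ext (by rw [endV_val, endV_val]; simpa using hi)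
  refine (aligned_edgeOf_iff _ _ _ _ _).2 (Or.inr ⟨?_, hends, ?_⟩)
  · intro hxy
    have := congrArg (fun x : BIdx ℓ k => (x.1 : ℕ)) hxy
    simp only at this
    omega
  rw [mem_openSegment_coords]
  have hD := h.sum_pos i j i.isLt j.isLt
  have hD' := h.sum_pos i' j' i'.isLt j'.isLt
  have hs : side i' j' = -side i j := side_neg (by rw [hj]) (Or.inl (by omega))
  have hcast : ((i' : ℕ) : ℝ) = (i : ℕ) + 1 := by exact_mod_cast hi.symm
  refine ⟨(p i j + q i j) / (p i' j' + q i' j'), div_pos hD hD', ?_, ?_⟩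
  · simp only [layout, endV_val, hcast, hc, if_true, Nat.cast_add, Nat.cast_one]
    rw [hc] at hD'
    field_simp
    ring
  · simp only [layout, hs]
    field_simp
    ring

/-- Opposite cotangents on opposite sides align edges of the same banana. -/
lemma align_within (h : Admissible ℓ k p q) (i : Fin ℓ) (j j' : Fin (k ((i : ℕ) + 1))) (b : Bool)
    (hpar : ((j : ℕ) + j') % 2 = 1) (h0 : (j : ℕ) ≠ 0) (h0' : (j' : ℕ) ≠ 0)
    (hc : (if b then q i j' else p i j') = -(if b then q i j else p i j)) :
    (alignGraph (layout p q)).Adj ((⟨i, j⟩ : BIdx ℓ k), b) (⟨i, j'⟩, b) := by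
  refine (aligned_edgeOf_iff _ _ _ _ _).2 (Or.inr ⟨?_, rfl, ?_⟩)
  · intro hxy
    rw [Sigma.mk.injEq, heq_eq_eq] at hxy
    rw [hxy.2] at hpar
    omega
  rw [mem_openSegment_coords]
  have hD := h.sum_pos i j i.isLt j.isLt
  have hD' := h.sum_pos i j' i.isLt j'.isLt
  have hs : side i j' = -side i j := side_neg (by simp [h0, h0']) (Or.inl (by omega))
  refine ⟨(p i j + q i j) / (p i j' + q i j'), div_pos hD hD', ?_, ?_⟩
  · cases b
    · simp only [Bool.false_eq_true, if_false] at hc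
      simp only [layout, endV_val, hc, Bool.false_eq_true, if_false, Nat.cast_add, Nat.cast_zero]
      rw [hc] at hD'
      field_simp
      ring
    · simp only [if_true] at hc
      simp only [layout, endV_val, hc, if_true, Nat.cast_add, Nat.cast_one]
      rw [hc] at hD'
      field_simp
      ring
  · simp only [layout, hs]
    field_simp
    ring

end Alignments

/-! ### Counting alignments in the constructed drawing -/

section UpperCount

lemma sum_indicator_Ico {K lo e : ℕ} (h : lo + e ≤ K) :
    (∑ j : Fin K, if lo ≤ (j : ℕ) ∧ (j : ℕ) < lo + e then 1 else 0) = e := by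
  rw [Fin.sum_univ_eq_sum_range (fun j => if lo ≤ j ∧ j < lo + e then 1 else 0), Finset.sum_boole]
  have : (Finset.range K).filter (fun j => lo ≤ j ∧ j < lo + e) = Finset.Ico lo (lo + e) := by
    ext j
    simp only [Finset.mem_filter, Finset.mem_range, Finset.mem_Ico]
    omega
  rw [this]
  simp

/-- A planar drawing with at most as many segments as claimed. -/
theorem upper_bound (m : ℕ) (k a s : ℕ → ℕ)
    (hk : ∀ i, i ≤ m → 1 ≤ k (i + 1)) (ha0 : a 0 = 1) (ham : a (m + 1) = 1)
    (ha : ∀ i, i < m → a (i + 1) = min (k (i + 1)) (k (i + 1 + 1)))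
    (hs : ∀ i, i ≤ m → s (i + 1) = max (k (i + 1) - a i) (k (i + 1) - a (i + 1))) :
    ∃ ρ : BVert (m + 1) k → ℝ × ℝ, IsPlanarDrawing (bananaPath (m + 1) k) ρ ∧
      numSegments (bananaPath (m + 1) k) ρ +
        ((m + 1) + ∑ i ∈ Finset.range (m + 1), s (i + 1) / 2 +
          ∑ i ∈ Finset.range m, a (i + 1)) ≤ 2 * ∑ i ∈ Finset.range (m + 1), k (i + 1) := by
  classical
  set N := ∑ i ∈ Finset.range (m + 1), k (i + 1) with hN
  have hkN : ∀ i, i < m + 1 → k (i + 1) ≤ N := fun i hi =>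
    Finset.single_le_sum (f := fun i => k (i + 1)) (fun _ _ => Nat.zero_le _)
      (Finset.mem_range.2 hi)
  have har : ∀ i, i ≤ m → 1 ≤ a (i + 1) ∧ a (i + 1) ≤ k (i + 1) := by
    intro i hi
    have := hk i hi
    rcases Nat.lt_or_ge i m with h | h
    · have := ha i h
      have := hk (i + 1) h
      omega
    · obtain rfl : i = m := le_antisymm hi h
      omega
  have hal : ∀ i, i ≤ m → 1 ≤ a i ∧ a i ≤ k (i + 1) := by
    intro i hi
    have := hk i hi
    rcases i with _ | i
    · omega
    · have := ha i (by omega)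
      have := (har i (by omega)).1
      omega
  have hτ : ∀ i, i ≤ m → 1 ≤ threshold a i ∧ threshold a i ≤ k (i + 1) ∧
      s (i + 1) = k (i + 1) - threshold a i := by
    intro i hi
    have h1 := hal i hi
    have h2 := har i hi
    have h3 := hs i hi
    unfold threshold bendEnd
    by_cases h : a (i + 1) < a i
    · simp only [h, decide_true, if_true]
      omega
    · simp only [h, decide_false, Bool.false_eq_true, if_false]
      omega
  have hadm : Admissible (m + 1) k (endCot (5 * (N : ℝ)) k a false)
      (endCot (5 * (N : ℝ)) k a true) := by
    refine admissible_endCot (T := N) (fun i hi => hk i (by omega))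
      (fun i hi => by exact_mod_cast hkN i hi) le_rfl ?_ (fun i hi => ha i (by omega))
    intro i hi
    rcases Nat.lt_or_ge i (m + 1) with h | h
    · exact (hal i (by omega)).1
    · obtain rfl : i = m + 1 := le_antisymm hi h
      omega
  set ρ : BVert (m + 1) k → ℝ × ℝ := layout (endCot (5 * (N : ℝ)) k a false)
    (endCot (5 * (N : ℝ)) k a true) with hρ
  refine ⟨ρ, layout_planar (fun i hi => hk i (by omega)) (by omega) hadm, ?_⟩
  -- in each aligned pair, the edge of smaller rank
  let S : Finset (BIdx (m + 1) k × Bool) := Finset.univ.filter fun e =>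
    (e.2 = false ∧ (e.1.2 : ℕ) = 0) ∨
    (e.2 = true ∧ (e.1.1 : ℕ) < m ∧ (e.1.2 : ℕ) < a ((e.1.1 : ℕ) + 1)) ∨
    (e.2 = bendEnd a e.1.1 ∧ threshold a e.1.1 ≤ e.1.2 ∧
      (e.1.2 : ℕ) < threshold a e.1.1 + s ((e.1.1 : ℕ) + 1) / 2)
  have hcard : (m + 1) + ∑ i ∈ Finset.range (m + 1), s (i + 1) / 2 +
      ∑ i ∈ Finset.range m, a (i + 1) ≤ S.card := by
    rw [Finset.card_filter, Fintype.sum_prod_type, Fintype.sum_sigma]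
    have hi : ∀ i : Fin (m + 1),
        1 + s ((i : ℕ) + 1) / 2 + (if (i : ℕ) < m then a ((i : ℕ) + 1) else 0) ≤
        ∑ j : Fin (k ((i : ℕ) + 1)), ∑ b : Bool,
          if (b = false ∧ (j : ℕ) = 0) ∨
            (b = true ∧ (i : ℕ) < m ∧ (j : ℕ) < a ((i : ℕ) + 1)) ∨
            (b = bendEnd a i ∧ threshold a i ≤ j ∧
              (j : ℕ) < threshold a i + s ((i : ℕ) + 1) / 2) then 1 else 0 := by
      intro i
      have him : (i : ℕ) ≤ m := by have := i.isLt; omega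
      have h1 := hk i him
      have h2 := hτ i him
      have h3 := har i him
      have h4 := hal i him
      have e1 := sum_indicator_Ico (K := k ((i : ℕ) + 1)) (lo := 0) (e := 1) (by omega)
      have e2 := sum_indicator_Ico (K := k ((i : ℕ) + 1)) (lo := threshold a i)
        (e := s ((i : ℕ) + 1) / 2) (by omega)
      have e3 := sum_indicator_Ico (K := k ((i : ℕ) + 1)) (lo := 0)
        (e := if (i : ℕ) < m then a ((i : ℕ) + 1) else 0) (by split_ifs <;> omega)
      refine le_trans (add_le_add (add_le_add e1.ge e2.ge) e3.ge) ?_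
      rw [← Finset.sum_add_distrib, ← Finset.sum_add_distrib]
      refine Finset.sum_le_sum (fun j _ => ?_)
      rw [Fintype.sum_bool]
      rcases hb : bendEnd a i with _ | _
      · simp only [Bool.false_eq_true, Bool.true_eq_false, false_and, true_and, false_or, or_false]
        split_ifs <;> omega
      · have : threshold a i = a ((i : ℕ) + 1) := by rw [threshold, hb]; rfl
        simp only [Bool.false_eq_true, Bool.true_eq_false, false_and, true_and, false_or, or_false]
        split_ifs <;> omega
    refine le_trans (le_of_eq ?_) (Finset.sum_le_sum fun i _ => hi i)
    rw [Fin.sum_univ_eq_sum_range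
      (fun i => 1 + s (i + 1) / 2 + (if i < m then a (i + 1) else 0))]
    rw [Finset.sum_add_distrib, Finset.sum_add_distrib, Finset.sum_range_succ
      (fun i => if i < m then a (i + 1) else 0), if_neg (lt_irrefl m)]
    rw [Finset.sum_congr rfl (fun i hi => if_pos (Finset.mem_range.1 hi))]
    simp
  -- ranks increase along each chain of aligned edges, from left to right and then in `j`
  have hmain := card_components_add_le (alignGraph ρ) S
    (fun e => (2 * (e.1.1 : ℕ) + (if e.2 then 1 else 0)) * N + e.1.2) ?_
  · rw [card_edges] at hmain
    rw [numSegments_eq]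
    omega
  · rintro ⟨⟨i, j⟩, b⟩ he
    have him : (i : ℕ) ≤ m := by have := i.isLt; omega
    have hjN : (j : ℕ) < N := lt_of_lt_of_le j.isLt (hkN i i.isLt)
    have he := (Finset.mem_filter.1 he).2
    simp only at he
    rcases he with ⟨rfl, h0⟩ | ⟨rfl, hm, hja⟩ | ⟨rfl, h1, h2⟩
    · obtain ⟨j, hj⟩ := j
      dsimp only at h0
      subst h0
      refine ⟨(⟨i, ⟨0, hj⟩⟩, true), align_straight hadm i _, ?_⟩
      simp only [Bool.false_eq_true, if_false, if_true]
      nlinarith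
    · have hj' : (j : ℕ) < k ((i : ℕ) + 1 + 1) := by have := ha i hm; omega
      refine ⟨(⟨⟨(i : ℕ) + 1, by omega⟩, ⟨j, hj'⟩⟩, false),
        align_cross hadm rfl _ _ rfl ?_, ?_⟩
      · rw [endCot_of_lt_right hja]
        exact endCot_of_lt_left hja
      · simp only [Bool.false_eq_true, if_false, if_true]
        nlinarith
    · obtain ⟨h3, h4, h5⟩ := hτ i him
      rw [h5] at h2
      obtain ⟨t, ht⟩ := Nat.exists_eq_add_of_le h1
      have hcot := cot_opposite (M := 5 * (N : ℝ)) (τ := threshold a i) (K := k ((i : ℕ) + 1))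
        (t := t) (by omega)
      set j' := threshold a i + (2 * ((k ((i : ℕ) + 1) - threshold a i) / 2) - 1 - t) with hj'
      have hjj : (j : ℕ) < j' := by omega
      refine ⟨(⟨i, ⟨j', by omega⟩⟩, bendEnd a i),
        align_within hadm i _ _ _ (by dsimp only; omega) (by omega) (by dsimp only; omega) ?_, ?_⟩
      · have hb : ∀ n, (if bendEnd a i then endCot (5 * (N : ℝ)) k a true i n else
            endCot (5 * (N : ℝ)) k a false i n) =
            cot (5 * (N : ℝ)) (threshold a i) (k ((i : ℕ) + 1)) n := by
          intro n
          unfold endCot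
          rcases bendEnd a i <;> simp
        rw [hb, hb, ht]
        exact hcot
      · simpa using hjj

end UpperCount

/-- the segment number of the banana path of length `ℓ ≥ 1` with multiplicities
`k 1, …, k ℓ ≥ 1` equals `∑_{i=1}^{ℓ} (2 k_i − 1 − ⌊s_i/2⌋) − ∑_{i=1}^{ℓ−1} min(k_i, k_{i+1})`,
where `a_0 = a_ℓ = 1`, `a_i = min(k_i, k_{i+1})` for `1 ≤ i ≤ ℓ−1`, and
`s_i = max(k_i − a_{i−1}, k_i − a_i)` for `1 ≤ i ≤ ℓ`. -/
theorem bananaPath_segment_number (ℓ : ℕ) (hℓ : 1 ≤ ℓ) (k : ℕ → ℕ)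
    (hk : ∀ i, 1 ≤ i → i ≤ ℓ → 1 ≤ k i)
    (a s : ℕ → ℕ) (ha0 : a 0 = 1) (haℓ : a ℓ = 1)
    (ha : ∀ i, 1 ≤ i → i ≤ ℓ - 1 → a i = min (k i) (k (i + 1)))
    (hs : ∀ i, 1 ≤ i → i ≤ ℓ → s i = max (k i - a (i - 1)) (k i - a i)) :
    (segNumber (bananaPath ℓ k) : ℤ) =
      (∑ i ∈ Finset.Icc 1 ℓ, (2 * (k i : ℤ) - 1 - ((s i / 2 : ℕ) : ℤ))) -
      ∑ i ∈ Finset.Icc 1 (ℓ - 1), min (k i : ℤ) ((k (i + 1) : ℤ)) := by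
  obtain ⟨m, rfl⟩ := Nat.exists_eq_add_of_le' hℓ
  have hk' : ∀ i, i ≤ m → 1 ≤ k (i + 1) := fun i hi => hk _ (by omega) (by omega)
  have ha' : ∀ i, i < m → a (i + 1) = min (k (i + 1)) (k (i + 1 + 1)) :=
    fun i hi => ha _ (by omega) (by omega)
  have hs' : ∀ i, i ≤ m → s (i + 1) = max (k (i + 1) - a i) (k (i + 1) - a (i + 1)) :=
    fun i hi => hs _ (by omega) (by omega)
  obtain ⟨ρ₀, hρ₀, hup⟩ := upper_bound m k a s hk' ha0 haℓ ha' hs'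
  obtain ⟨ρ₁, hρ₁, hseg⟩ : segNumber (bananaPath (m + 1) k) ∈
      {n : ℕ | ∃ ρ, IsPlanarDrawing (bananaPath (m + 1) k) ρ ∧
        numSegments (bananaPath (m + 1) k) ρ = n} :=
    Nat.sInf_mem ⟨_, ρ₀, hρ₀, rfl⟩
  have hlow := lower_bound m k a s hk' ha0 haℓ ha' hs' hρ₁
  rw [hseg] at hlow
  have hle : segNumber (bananaPath (m + 1) k) ≤ numSegments (bananaPath (m + 1) k) ρ₀ :=
    Nat.sInf_le ⟨ρ₀, hρ₀, rfl⟩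
  have hshift : ∀ (n : ℕ) (f : ℕ → ℤ),
      ∑ i ∈ Finset.Icc 1 n, f i = ∑ i ∈ Finset.range n, f (i + 1) := by
    intro n f
    rw [← Finset.Ico_add_one_right_eq_Icc, Finset.sum_Ico_eq_sum_range, Nat.add_sub_cancel]
    exact Finset.sum_congr rfl fun i _ => by rw [add_comm]
  have e : segNumber (bananaPath (m + 1) k) + ((m + 1) +
      ∑ i ∈ Finset.range (m + 1), s (i + 1) / 2 + ∑ i ∈ Finset.range m, a (i + 1)) =
      2 * ∑ i ∈ Finset.range (m + 1), k (i + 1) := by omega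
  have e' := congrArg (Nat.cast : ℕ → ℤ) e
  have hmin : ∑ i ∈ Finset.range m, min (k (i + 1) : ℤ) (k (i + 1 + 1) : ℤ) =
      ((∑ i ∈ Finset.range m, a (i + 1) : ℕ) : ℤ) := by
    rw [Nat.cast_sum]
    exact Finset.sum_congr rfl fun i hi => by
      rw [ha' i (Finset.mem_range.1 hi), Nat.cast_min]
  rw [hshift, Nat.add_sub_cancel, hshift, hmin, Finset.sum_sub_distrib, Finset.sum_sub_distrib,
    ← Finset.mul_sum, ← Nat.cast_sum, ← Nat.cast_sum]
  simp only [Finset.sum_const, Finset.card_range, nsmul_eq_mul, mul_one]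
  push_cast at e' ⊢
  linarith
end

section
/- Let G be a planar graph, let G_1, …, G_p be its path components, i.e., its connected components that are isomorphic to a path with at least one edge, and let G' be the graph obtained from G by deleting these p components. Then seg(G) = seg(G') + p. -/
/-!
Edges in different components are never aligned, so the segments of a drawing of `G` split into
those of the induced drawing of `G'` and those of the path components (`numSegments_split`).
Each path component contains at least one segment, and choosing one edge in each gives `p`
distinct segments; hence `seg G ≥ seg G' + p`.

Conversely, an optimal drawing of the finite graph `G'` lies strictly below some horizontal line.
Each path component is drawn on its own horizontal line above it, with its vertices at
consecutive integer abscissae (`isPlanarDrawing_extend`).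
All edges of such a component are then joined by chains of aligned pairs, so each component
contributes exactly one segment.
-/

open Set

variable {V : Type*}

namespace SegPaths

/-! ### Segments as equivalence classes of edges -/

/-- The segment (class of edges) through the edge `e`. -/
def cls (G : SimpleGraph V) (ρ : V → ℝ × ℝ) (e : Sym2 V) : Set (Sym2 V) :=
  {f | Relation.ReflTransGen (Aligned G ρ) e f}

lemma aligned_symm {G : SimpleGraph V} {ρ : V → ℝ × ℝ} {e f : Sym2 V}
    (h : Aligned G ρ e f) : Aligned G ρ f e := by
  obtain ⟨u, v, w, huw, huv, hvw, rfl, rfl, h⟩ := h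
  exact ⟨w, v, u, huw.symm, hvw.symm, huv.symm, Sym2.eq_swap, Sym2.eq_swap,
    by rwa [openSegment_symm]⟩

lemma rtg_symm {G : SimpleGraph V} {ρ : V → ℝ × ℝ} {e f : Sym2 V}
    (h : Relation.ReflTransGen (Aligned G ρ) e f) :
    Relation.ReflTransGen (Aligned G ρ) f e := by
  induction h with
  | refl => exact .refl
  | tail _ h ih => exact Relation.ReflTransGen.head (aligned_symm h) ih

lemma cls_eq {G : SimpleGraph V} {ρ : V → ℝ × ℝ} {e f : Sym2 V}
    (h : Relation.ReflTransGen (Aligned G ρ) e f) : cls G ρ e = cls G ρ f := by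
  ext g
  exact ⟨fun hg => (rtg_symm h).trans hg, fun hg => h.trans hg⟩

lemma rtg_comp {G : SimpleGraph V} {ρ : V → ℝ × ℝ} {e f : Sym2 V} {c : G.ConnectedComponent}
    (he : ∀ v ∈ e, G.connectedComponentMk v = c)
    (h : Relation.ReflTransGen (Aligned G ρ) e f) :
    ∀ v ∈ f, G.connectedComponentMk v = c := by
  induction h with
  | refl => exact he
  | tail _ h ih =>
    obtain ⟨u, v, w, -, -, hvw, rfl, rfl, -⟩ := h
    have hv := ih v (by simp)
    have hw : G.connectedComponentMk w = c := by
      rw [← hv]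
      exact (SimpleGraph.ConnectedComponent.connectedComponentMk_eq_of_adj hvw).symm
    intro x hx
    rcases Sym2.mem_iff.1 hx with rfl | rfl
    · exact hv
    · exact hw

/-- On a vertex set closed under adjacency, segments of the restricted drawing are segments of
the whole drawing. -/
lemma cls_restrict {G : SimpleGraph V} {ρ : V → ℝ × ℝ} {s : Set V}
    (hs : ∀ u v, G.Adj u v → u ∈ s → v ∈ s) (e : Sym2 s) :
    cls G ρ (e.map Subtype.val) =
      Sym2.map Subtype.val '' cls (G.induce s) (fun v : s => ρ v) e := by
  ext f
  constructor
  · intro h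
    change Relation.ReflTransGen _ _ _ at h
    induction h with
    | refl => exact ⟨e, .refl, rfl⟩
    | tail _ h ih =>
      obtain ⟨g, hg, rfl⟩ := ih
      obtain ⟨u, v, w, huw, huv, hvw, hu, rfl, h⟩ := h
      have hus : u ∈ s := by
        have : u ∈ Sym2.map Subtype.val g := by rw [hu]; simp
        obtain ⟨x, -, rfl⟩ := Sym2.mem_map.1 this
        exact x.2
      have hvs := hs _ _ huv hus
      have hws := hs _ _ hvw hvs
      have hg' : g = s(⟨u, hus⟩, ⟨v, hvs⟩) := by
        apply Sym2.map.injective Subtype.val_injective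
        rw [hu]; rfl
      refine ⟨s(⟨v, hvs⟩, ⟨w, hws⟩), Relation.ReflTransGen.tail hg ?_, rfl⟩
      exact ⟨⟨u, hus⟩, ⟨v, hvs⟩, ⟨w, hws⟩, by simpa using huw, huv, hvw, hg', rfl, h⟩
  · rintro ⟨f, hf, rfl⟩
    change Relation.ReflTransGen _ _ _ at hf
    refine Relation.ReflTransGen.lift (Sym2.map Subtype.val) ?_ _ _ hf
    rintro _ _ ⟨u, v, w, huw, huv, hvw, rfl, rfl, h⟩
    exact ⟨u, v, w, fun h => huw (Subtype.ext h), huv, hvw, rfl, rfl, h⟩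

/-- Segments through edges that avoid `s`. -/
def outer (G : SimpleGraph V) (ρ : V → ℝ × ℝ) (s : Set V) : Set (Set (Sym2 V)) :=
  {S | ∃ e ∈ G.edgeSet, (∀ v ∈ e, v ∉ s) ∧ S = cls G ρ e}

lemma numSegments_split [Finite V] {G : SimpleGraph V} {ρ : V → ℝ × ℝ} {s : Set V}
    (hs : ∀ u v, G.Adj u v → u ∈ s → v ∈ s) :
    numSegments G ρ =
      numSegments (G.induce s) (fun v : s => ρ v) + (outer G ρ s).ncard := by
  have hinj : Function.Injective
      (fun S : Set (Sym2 s) => (Sym2.map Subtype.val : Sym2 s → Sym2 V) '' S) :=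
    Set.image_injective.2 (Sym2.map.injective Subtype.val_injective)
  unfold numSegments
  rw [← Set.ncard_image_of_injective _ hinj, ← Set.ncard_union_eq]
  · congr 1
    ext S
    constructor
    · rintro ⟨e, he, rfl⟩
      by_cases h : ∀ v ∈ e, v ∉ s
      · exact Or.inr ⟨e, he, h, rfl⟩
      · left
        induction e with
        | h u v =>
          have huv : G.Adj u v := he
          have h2 : u ∈ s ∧ v ∈ s := by
            push Not at h
            obtain ⟨x, hx, hxs⟩ := h
            rcases Sym2.mem_iff.1 hx with rfl | rfl
            · exact ⟨hxs, hs _ _ huv hxs⟩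
            · exact ⟨hs _ _ huv.symm hxs, hxs⟩
          exact ⟨_, ⟨s(⟨u, h2.1⟩, ⟨v, h2.2⟩), huv, rfl⟩,
            (cls_restrict hs s(⟨u, h2.1⟩, ⟨v, h2.2⟩)).symm⟩
    · rintro (⟨_, ⟨e, he, rfl⟩, rfl⟩ | ⟨e, he, -, rfl⟩)
      · refine ⟨e.map Subtype.val, ?_, (cls_restrict hs e).symm⟩
        induction e with
        | h u v => exact he
      · exact ⟨e, he, rfl⟩
  · rw [Set.disjoint_left]
    rintro _ ⟨_, ⟨e, he, rfl⟩, rfl⟩ ⟨f, hf, hfs, h⟩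
    -- the edge `f` belongs to its own segment, which is inside `s`
    have : f ∈ Sym2.map Subtype.val '' {g | Relation.ReflTransGen
        (Aligned (G.induce s) (fun v : s => ρ v)) e g} := by
      change _ = _ at h
      simp only at h
      rw [h]; exact Relation.ReflTransGen.refl
    obtain ⟨g, -, rfl⟩ := this
    induction g with
    | h u v => exact hfs u (by simp) u.2

/-! ### Path components and the segments they contribute -/

/-- A path component can be listed as `p 0, …, p (n - 1)`, consecutive vertices being adjacent. -/
lemma exists_listing {G : SimpleGraph V} {c : G.ConnectedComponent} (h : IsPathComponent G c) :
    ∃ (n : ℕ) (p : ℕ → V) (k : V → ℕ), 2 ≤ n ∧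
      (∀ i < n, G.connectedComponentMk (p i) = c ∧ k (p i) = i) ∧
      (∀ v, G.connectedComponentMk v = c → k v < n ∧ p (k v) = v) ∧
      (∀ i < n, ∀ j < n, (G.Adj (p i) (p j) ↔ i + 1 = j ∨ j + 1 = i)) := by
  classical
  obtain ⟨n, hn, ⟨φ⟩⟩ := h
  have : NeZero n := ⟨by omega⟩
  refine ⟨n, fun i => (φ.symm (Fin.ofNat n i) : c.supp),
    fun v => if h : v ∈ c.supp then (φ ⟨v, h⟩ : ℕ) else 0, hn, ?_, ?_, ?_⟩
  · intro i hi
    refine ⟨(φ.symm (Fin.ofNat n i)).2, ?_⟩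
    simp [Nat.mod_eq_of_lt hi]
  · intro v hv
    have hv' : v ∈ c.supp := hv
    simp [hv']
  · intro i hi j hj
    have := φ.symm.map_adj_iff (v := Fin.ofNat n i) (w := Fin.ofNat n j)
    rw [SimpleGraph.pathGraph_adj] at this
    simpa [Nat.mod_eq_of_lt hi, Nat.mod_eq_of_lt hj] using this

/-- The vertices outside path components. -/
abbrev rest (G : SimpleGraph V) : Set V :=
  {v : V | ¬ IsPathComponent G (G.connectedComponentMk v)}

lemma rest_closed (G : SimpleGraph V) : ∀ u v, G.Adj u v → u ∈ rest G → v ∈ rest G := by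
  intro u v h hu
  have := SimpleGraph.ConnectedComponent.connectedComponentMk_eq_of_adj h
  simpa [rest, ← this] using hu

lemma exists_edge {G : SimpleGraph V} {c : G.ConnectedComponent} (h : IsPathComponent G c) :
    ∃ e ∈ G.edgeSet, ∀ v ∈ e, G.connectedComponentMk v = c := by
  obtain ⟨n, p, k, hn, hp, -, hadj⟩ := exists_listing h
  refine ⟨s(p 0, p 1), (hadj 0 (by omega) 1 (by omega)).2 (Or.inl rfl), ?_⟩
  intro v hv
  rcases Sym2.mem_iff.1 hv with rfl | rfl
  · exact (hp _ (by omega)).1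
  · exact (hp _ (by omega)).1

/-- One edge chosen from each path component. -/
noncomputable def edgeOf (G : SimpleGraph V)
    (c : {c : G.ConnectedComponent // IsPathComponent G c}) : Sym2 V :=
  (exists_edge c.2).choose

lemma edgeOf_mem {G : SimpleGraph V} (c : {c : G.ConnectedComponent // IsPathComponent G c}) :
    edgeOf G c ∈ G.edgeSet := (exists_edge c.2).choose_spec.1

lemma edgeOf_comp {G : SimpleGraph V} (c : {c : G.ConnectedComponent // IsPathComponent G c}) :
    ∀ v ∈ edgeOf G c, G.connectedComponentMk v = c.1 := (exists_edge c.2).choose_spec.2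

lemma cls_edgeOf_injective (G : SimpleGraph V) (ρ : V → ℝ × ℝ) :
    Function.Injective (fun c => cls G ρ (edgeOf G c)) := by
  intro c d h
  have hd : edgeOf G d ∈ cls G ρ (edgeOf G c) := by
    simp only at h
    rw [h]; exact Relation.ReflTransGen.refl
  have h1 := rtg_comp (edgeOf_comp c) hd
  have h2 := edgeOf_comp d
  apply Subtype.ext
  revert h1 h2
  induction edgeOf G d with
  | h u v => intro h1 h2; rw [← h1 u (by simp), h2 u (by simp)]

lemma range_cls_subset (G : SimpleGraph V) (ρ : V → ℝ × ℝ) :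
    range (fun c => cls G ρ (edgeOf G c)) ⊆ outer G ρ (rest G) := by
  rintro _ ⟨c, rfl⟩
  refine ⟨_, edgeOf_mem c, fun v hv => ?_, rfl⟩
  simpa [rest, edgeOf_comp c v hv] using c.2

lemma ncard_range_cls (G : SimpleGraph V) (ρ : V → ℝ × ℝ) :
    (range (fun c => cls G ρ (edgeOf G c))).ncard =
      Nat.card {c : G.ConnectedComponent // IsPathComponent G c} := by
  rw [← Set.image_univ, Set.ncard_image_of_injective _ (cls_edgeOf_injective G ρ),
    Set.ncard_univ]

lemma card_le_outer [Finite V] (G : SimpleGraph V) (ρ : V → ℝ × ℝ) :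
    Nat.card {c : G.ConnectedComponent // IsPathComponent G c} ≤
      (outer G ρ (rest G)).ncard := by
  rw [← ncard_range_cls G ρ]
  exact Set.ncard_le_ncard (range_cls_subset G ρ)

/-- If the edges of each path component all lie on one segment, the path components
contribute exactly one segment each. -/
lemma outer_eq_card {G : SimpleGraph V} {ρ : V → ℝ × ℝ}
    (h : ∀ c, IsPathComponent G c → ∀ e ∈ G.edgeSet, ∀ f ∈ G.edgeSet,
      (∀ v ∈ e, G.connectedComponentMk v = c) → (∀ v ∈ f, G.connectedComponentMk v = c) →
      Relation.ReflTransGen (Aligned G ρ) e f) :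
    (outer G ρ (rest G)).ncard =
      Nat.card {c : G.ConnectedComponent // IsPathComponent G c} := by
  rw [← ncard_range_cls G ρ]
  congr 1
  refine Set.Subset.antisymm ?_ (range_cls_subset G ρ)
  rintro _ ⟨e, he, hes, rfl⟩
  induction e with
  | h u v =>
    have huv : G.Adj u v := he
    have hu : IsPathComponent G (G.connectedComponentMk u) := by
      simpa [rest] using hes u (by simp)
    refine ⟨⟨_, hu⟩, cls_eq (h _ hu _ (edgeOf_mem _) _ he (edgeOf_comp _) ?_)⟩
    intro x hx
    rcases Sym2.mem_iff.1 hx with rfl | rfl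
    · rfl
    · exact (SimpleGraph.ConnectedComponent.connectedComponentMk_eq_of_adj huv).symm

/-! ### Restricting and extending drawings -/

lemma isPlanarDrawing_restrict {G : SimpleGraph V} {ρ : V → ℝ × ℝ} (h : IsPlanarDrawing G ρ)
    (s : Set V) : IsPlanarDrawing (G.induce s) (fun v : s => ρ v) where
  inj u v huv := Subtype.ext (h.inj huv)
  edge_inter u v x y huv hxy hne p hp hq := by
    have hne' : s((u : V), (v : V)) ≠ s((x : V), (y : V)) := fun he =>
      hne (Sym2.map.injective Subtype.val_injective he)
    obtain ⟨w, hw1, hw2, rfl⟩ := h.edge_inter huv hxy hne' p hp hq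
    rcases hw1 with rfl | rfl
    · exact ⟨u, Or.inl rfl, by simpa [Subtype.ext_iff] using hw2, rfl⟩
    · exact ⟨v, Or.inr rfl, by simpa [Subtype.ext_iff] using hw2, rfl⟩
  vertex_not_on_edge u v w huv hu hv :=
    h.vertex_not_on_edge huv (fun e => hu (Subtype.ext e)) (fun e => hv (Subtype.ext e))

lemma snd_lt_of_mem_segment {a b p : ℝ × ℝ} {M : ℝ} (h : p ∈ segment ℝ a b) (ha : a.2 < M)
    (hb : b.2 < M) : p.2 < M :=
  ((convex_halfSpace_lt (f := Prod.snd) (𝕜 := ℝ) (LinearMap.snd ℝ ℝ ℝ).isLinear M).segment_subset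
    ha hb) h

lemma mem_segment_horizontal {a b y : ℝ} {p : ℝ × ℝ} (h : p ∈ segment ℝ (a, y) (b, y)) :
    p.1 ∈ Icc (min a b) (max a b) ∧ p.2 = y := by
  obtain ⟨s, t, hs, ht, hst, rfl⟩ := h
  refine ⟨?_, ?_⟩
  · change _ ∈ Set.uIcc a b
    rw [← segment_eq_uIcc (𝕜 := ℝ) a b]
    exact ⟨s, t, hs, ht, hst, by simp⟩
  · simp [← add_mul, hst]

/-- Data placing the path components on pairwise different horizontal lines: `lev` is the index
of the line of a component and `k` the abscissa of a vertex. -/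
structure Layout (G : SimpleGraph V) (k : V → ℕ) (lev : G.ConnectedComponent → ℕ) : Prop where
  lev_inj : Function.Injective lev
  k_inj : ∀ u v, u ∉ rest G → G.connectedComponentMk u = G.connectedComponentMk v →
    k u = k v → u = v
  adj : ∀ u v, u ∉ rest G → G.Adj u v → k u + 1 = k v ∨ k v + 1 = k u

open Classical in
/-- Extension of a drawing of the rest of `G` by horizontal paths at heights at least `M`. -/
noncomputable def extend (G : SimpleGraph V) (ρ : rest G → ℝ × ℝ) (M : ℝ) (k : V → ℕ)
    (lev : G.ConnectedComponent → ℕ) (v : V) : ℝ × ℝ :=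
  if h : v ∈ rest G then ρ ⟨v, h⟩ else ((k v : ℝ), M + lev (G.connectedComponentMk v))

section extend
variable {G : SimpleGraph V} {ρ : rest G → ℝ × ℝ} {M : ℝ} {k : V → ℕ}
  {lev : G.ConnectedComponent → ℕ}

lemma extend_mem {v : V} (h : v ∈ rest G) : extend G ρ M k lev v = ρ ⟨v, h⟩ := by
  unfold extend; rw [dif_pos h]

lemma extend_not_mem {v : V} (h : v ∉ rest G) :
    extend G ρ M k lev v = ((k v : ℝ), M + lev (G.connectedComponentMk v)) := by
  unfold extend; rw [dif_neg h]

/-- Edges of path components are unit horizontal intervals. -/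
lemma edge_normal (hL : Layout G k lev) {u v : V} (hu : u ∉ rest G) (huv : G.Adj u v) {p : ℝ × ℝ}
    (hp : p ∈ segment ℝ (extend G ρ M k lev u) (extend G ρ M k lev v)) :
    p.2 = M + lev (G.connectedComponentMk u) ∧
      ∃ a b : V, s(a, b) = s(u, v) ∧ k a + 1 = k b ∧ (k a : ℝ) ≤ p.1 ∧ p.1 ≤ k a + 1 := by
  have hv : v ∉ rest G := fun h => hu (rest_closed G _ _ huv.symm h)
  have hc := SimpleGraph.ConnectedComponent.connectedComponentMk_eq_of_adj huv
  rw [extend_not_mem hu, extend_not_mem hv, ← hc] at hp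
  obtain ⟨h1, h2⟩ := mem_segment_horizontal hp
  refine ⟨h2, ?_⟩
  rcases hL.adj u v hu huv with h | h
  · have h' : (k v : ℝ) = k u + 1 := by exact_mod_cast h.symm
    refine ⟨u, v, rfl, h, ?_⟩
    simpa [h'] using h1
  · have h' : (k u : ℝ) = k v + 1 := by exact_mod_cast h.symm
    refine ⟨v, u, Sym2.eq_swap, h, ?_⟩
    simpa [h'] using h1

lemma extend_snd_ge {v : V} (h : v ∉ rest G) : M ≤ (extend G ρ M k lev v).2 := by
  rw [extend_not_mem h]; simp

lemma extend_snd_lt (hM : ∀ v, (ρ v).2 < M) {v : V} (h : v ∈ rest G) :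
    (extend G ρ M k lev v).2 < M := by
  rw [extend_mem h]; exact hM _

lemma edge_snd_lt (hM : ∀ v, (ρ v).2 < M) {u v : V} (hu : u ∈ rest G) (huv : G.Adj u v)
    {p : ℝ × ℝ} (hp : p ∈ segment ℝ (extend G ρ M k lev u) (extend G ρ M k lev v)) : p.2 < M :=
  snd_lt_of_mem_segment hp (extend_snd_lt hM hu)
    (extend_snd_lt hM (rest_closed G _ _ huv hu))

lemma edge_snd_ge (hL : Layout G k lev) {u v : V} (hu : u ∉ rest G) (huv : G.Adj u v) {p : ℝ × ℝ}
    (hp : p ∈ segment ℝ (extend G ρ M k lev u) (extend G ρ M k lev v)) : M ≤ p.2 := by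
  rw [(edge_normal hL hu huv hp).1]; simp

lemma isPlanarDrawing_extend (hρ : IsPlanarDrawing (G.induce (rest G)) ρ)
    (hM : ∀ v, (ρ v).2 < M) (hL : Layout G k lev) :
    IsPlanarDrawing G (extend G ρ M k lev) where
  inj u v huv := by
    by_cases hu : u ∈ rest G <;> by_cases hv : v ∈ rest G
    · rw [extend_mem hu, extend_mem hv] at huv
      exact congrArg Subtype.val (hρ.inj huv)
    · have h1 := extend_snd_lt (k := k) (lev := lev) hM hu
      have h2 := extend_snd_ge (ρ := ρ) (M := M) (k := k) (lev := lev) hv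
      rw [huv] at h1; linarith
    · have h1 := extend_snd_lt (k := k) (lev := lev) hM hv
      have h2 := extend_snd_ge (ρ := ρ) (M := M) (k := k) (lev := lev) hu
      rw [huv] at h2; linarith
    · rw [extend_not_mem hu, extend_not_mem hv] at huv
      simp only [Prod.mk.injEq, Nat.cast_inj, add_right_inj] at huv
      exact hL.k_inj u v hu (hL.lev_inj huv.2) huv.1
  edge_inter u v x y huv hxy hne p hp hq := by
    by_cases hu : u ∈ rest G <;> by_cases hx : x ∈ rest G
    · have hv := rest_closed G _ _ huv hu
      have hy := rest_closed G _ _ hxy hx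
      rw [extend_mem hu, extend_mem hv] at hp
      rw [extend_mem hx, extend_mem hy] at hq
      obtain ⟨w, h1, h2, h3⟩ := hρ.edge_inter (u := ⟨u, hu⟩) (v := ⟨v, hv⟩) (x := ⟨x, hx⟩)
        (y := ⟨y, hy⟩) huv hxy
        (fun h => hne (congrArg (Sym2.map Subtype.val) h)) p hp hq
      refine ⟨w, by simpa [Subtype.ext_iff] using h1, by simpa [Subtype.ext_iff] using h2, ?_⟩
      rw [extend_mem w.2]; exact h3
    · have := edge_snd_lt hM hu huv hp
      have := edge_snd_ge hL hx hxy hq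
      linarith
    · have := edge_snd_lt hM hx hxy hq
      have := edge_snd_ge hL hu huv hp
      linarith
    · obtain ⟨hp2, a, b, hab, hk, h1, h2⟩ := edge_normal hL hu huv hp
      obtain ⟨hq2, c, d, hcd, hk', h3, h4⟩ := edge_normal hL hx hxy hq
      have hcomp : G.connectedComponentMk u = G.connectedComponentMk x := by
        apply hL.lev_inj
        have := hp2.symm.trans hq2
        simpa using this
      have mem_uv : ∀ w, w ∈ s(a, b) → w ∉ rest G ∧
          G.connectedComponentMk w = G.connectedComponentMk u := by
        intro w hw
        rw [hab] at hw
        rcases Sym2.mem_iff.1 hw with rfl | rfl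
        · exact ⟨hu, rfl⟩
        · exact ⟨fun h => hu (rest_closed G _ _ huv.symm h),
            (SimpleGraph.ConnectedComponent.connectedComponentMk_eq_of_adj huv).symm⟩
      have mem_xy : ∀ w, w ∈ s(c, d) →
          G.connectedComponentMk w = G.connectedComponentMk u := by
        intro w hw
        rw [hcd] at hw
        rcases Sym2.mem_iff.1 hw with rfl | rfl
        · exact hcomp.symm
        · rw [hcomp]
          exact (SimpleGraph.ConnectedComponent.connectedComponentMk_eq_of_adj hxy).symm
      have key : ∀ w z, w ∈ s(a, b) → z ∈ s(c, d) → k w = k z → w = z := fun w z hw hz h =>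
        hL.k_inj w z (mem_uv w hw).1 ((mem_uv w hw).2.trans (mem_xy z hz).symm) h
      have fin : ∀ w, w ∈ s(a, b) → w ∈ s(c, d) → (k w : ℝ) = p.1 →
          ∃ w : V, (w = u ∨ w = v) ∧ (w = x ∨ w = y) ∧ p = extend G ρ M k lev w := by
        intro w hw hw' hkw
        refine ⟨w, ?_, ?_, ?_⟩
        · rw [hab] at hw; exact Sym2.mem_iff.1 hw
        · rw [hcd] at hw'; exact Sym2.mem_iff.1 hw'
        · rw [extend_not_mem (mem_uv w hw).1, (mem_uv w hw).2]
          exact Prod.ext hkw.symm hp2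
      have e1 : k a ≤ k c + 1 := by
        have : (k a : ℝ) ≤ k c + 1 := h1.trans h4
        exact_mod_cast this
      have e2 : k c ≤ k a + 1 := by
        have : (k c : ℝ) ≤ k a + 1 := h3.trans h2
        exact_mod_cast this
      rcases (by omega : k a = k c ∨ k a = k d ∨ k b = k c) with h | h | h
      · exfalso
        apply hne
        rw [← hab, ← hcd, key a c (by simp) (by simp) h, key b d (by simp) (by simp) (by omega)]
      · have := key a d (by simp) (by simp) h
        refine fin a (by simp) (by simp [this]) (le_antisymm h1 ?_)
        have : (k a : ℝ) = k c + 1 := by rw [h, ← hk']; push_cast; rfl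
        rw [this]; exact h4
      · have := key b c (by simp) (by simp) h
        refine fin b (by simp) (by simp [this]) (le_antisymm ?_ ?_)
        · rw [h]; exact h3
        · rw [← hk]; push_cast; exact h2
  vertex_not_on_edge u v w huv hwu hwv hw := by
    by_cases hu : u ∈ rest G <;> by_cases hx : w ∈ rest G
    · have hv := rest_closed G _ _ huv hu
      rw [extend_mem hu, extend_mem hv, extend_mem hx] at hw
      exact hρ.vertex_not_on_edge (u := ⟨u, hu⟩) (v := ⟨v, hv⟩) (w := ⟨w, hx⟩) huv
        (by simpa using hwu) (by simpa using hwv) hw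
    · have := edge_snd_lt hM hu huv hw
      have := extend_snd_ge (ρ := ρ) (M := M) (k := k) (lev := lev) hx
      linarith
    · have := edge_snd_ge hL hu huv hw
      have := extend_snd_lt (k := k) (lev := lev) hM hx
      linarith
    · obtain ⟨hp2, a, b, hab, hk, h1, h2⟩ := edge_normal hL hu huv hw
      rw [extend_not_mem hx] at hp2 h1 h2
      simp only [add_right_inj, Nat.cast_inj] at hp2 h1 h2
      have hc := hL.lev_inj hp2
      have h1' : k a ≤ k w := by exact_mod_cast h1
      have h2' : k w ≤ k a + 1 := by exact_mod_cast h2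
      have hcv := SimpleGraph.ConnectedComponent.connectedComponentMk_eq_of_adj huv
      have key : ∀ z, z ∈ s(a, b) → k w ≠ k z := by
        intro z hz h
        rw [hab] at hz
        rcases Sym2.mem_iff.1 hz with rfl | rfl
        · exact hwu (hL.k_inj _ _ hx hc h)
        · exact hwv (hL.k_inj _ _ hx (hc.trans hcv) h)
      have := key a (by simp)
      have := key b (by simp)
      omega

end extend

/-! ### Straight drawings of the path components -/

/-- Edges of a component listed as a path are joined by chains of aligned pairs as soon as
consecutive edges are aligned. -/
lemma rtg_of_listing {G : SimpleGraph V} {ρ : V → ℝ × ℝ} {n : ℕ} {p : ℕ → V}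
    (h : ∀ i, i + 2 < n → Aligned G ρ s(p i, p (i + 1)) s(p (i + 1), p (i + 2))) :
    ∀ i, i + 1 < n → Relation.ReflTransGen (Aligned G ρ) s(p 0, p 1) s(p i, p (i + 1)) := by
  intro i
  induction i with
  | zero => intro _; exact .refl
  | succ i ih => intro hi; exact (ih (by omega)).tail (h i hi)

/-- Any drawing of the rest of `G` extends to a drawing of `G` with one more segment for each
path component. -/
lemma exists_extension [Finite V] (G : SimpleGraph V) {ρ : rest G → ℝ × ℝ}
    (hρ : IsPlanarDrawing (G.induce (rest G)) ρ) :
    ∃ σ : V → ℝ × ℝ, IsPlanarDrawing G σ ∧ numSegments G σ =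
      numSegments (G.induce (rest G)) ρ +
        Nat.card {c : G.ConnectedComponent // IsPathComponent G c} := by
  classical
  obtain ⟨M, hM⟩ : ∃ M : ℝ, ∀ v, (ρ v).2 < M := by
    obtain ⟨B, hB⟩ := (Set.finite_range fun v => (ρ v).2).bddAbove
    exact ⟨B + 1, fun v => lt_of_le_of_lt (hB ⟨v, rfl⟩) (lt_add_one B)⟩
  have : Finite G.ConnectedComponent := Quot.finite _
  obtain ⟨lev, hlev⟩ := Countable.exists_injective_nat G.ConnectedComponent
  have H : ∀ c : G.ConnectedComponent, ∃ (n : ℕ) (p : ℕ → V) (k : V → ℕ), IsPathComponent G c →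
      (∀ i < n, G.connectedComponentMk (p i) = c ∧ k (p i) = i) ∧
      (∀ v, G.connectedComponentMk v = c → k v < n ∧ p (k v) = v) ∧
      (∀ i < n, ∀ j < n, (G.Adj (p i) (p j) ↔ i + 1 = j ∨ j + 1 = i)) := by
    intro c
    by_cases hc : IsPathComponent G c
    · obtain ⟨n, p, k, -, h⟩ := exists_listing hc
      exact ⟨n, p, k, fun _ => h⟩
    · exact ⟨0, fun _ => c.out, fun _ => 0, fun h => absurd h hc⟩
  choose n p k H using H
  set K : V → ℕ := fun v => k (G.connectedComponentMk v) v with hK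
  have hL : Layout G K lev := by
    refine ⟨hlev, ?_, ?_⟩
    · intro u v hu huv h
      obtain ⟨-, h2, -⟩ := H _ (not_not.1 hu)
      have hu' := (h2 u rfl).2
      have hv' := (h2 v huv.symm).2
      simp only [hK] at h
      rw [← huv] at h
      rw [← hu', ← hv', h]
    · intro u v hu huv
      obtain ⟨-, h2, h3⟩ := H _ (not_not.1 hu)
      have hc := SimpleGraph.ConnectedComponent.connectedComponentMk_eq_of_adj huv
      obtain ⟨a1, a2⟩ := h2 u rfl
      obtain ⟨b1, b2⟩ := h2 v hc.symm
      have := h3 _ a1 _ b1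
      rw [a2, b2] at this
      simp only [hK]
      rw [← hc]
      exact this.1 huv
  refine ⟨extend G ρ M K lev, isPlanarDrawing_extend hρ hM hL, ?_⟩
  rw [numSegments_split (rest_closed G), outer_eq_card]
  · congr 2
    funext v
    exact extend_mem v.2
  · intro c hc
    obtain ⟨h1, h2, h3⟩ := H c hc
    have hpos : ∀ i < n c, extend G ρ M K lev (p c i) = ((i : ℝ), M + lev c) := by
      intro i hi
      obtain ⟨q1, q2⟩ := h1 i hi
      rw [extend_not_mem (by simpa [rest, q1] using hc)]
      simp only [hK, q1, q2]
    have hal : ∀ i, i + 2 < n c → Aligned G (extend G ρ M K lev)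
        s(p c i, p c (i + 1)) s(p c (i + 1), p c (i + 2)) := by
      intro i hi
      refine ⟨_, _, _, ?_, (h3 i (by omega) (i + 1) (by omega)).2 (Or.inl rfl),
        (h3 (i + 1) (by omega) (i + 2) hi).2 (Or.inl rfl), rfl, rfl, ?_⟩
      · intro h
        have q1 := (h1 i (by omega)).2
        have q2 := (h1 (i + 2) hi).2
        rw [h] at q1
        omega
      · rw [hpos i (by omega), hpos (i + 1) (by omega), hpos (i + 2) hi]
        refine ⟨1 / 2, 1 / 2, by norm_num, by norm_num, by norm_num, ?_⟩
        ext
        · simp; ring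
        · simp; ring
    have hall : ∀ e ∈ G.edgeSet, (∀ v ∈ e, G.connectedComponentMk v = c) →
        Relation.ReflTransGen (Aligned G (extend G ρ M K lev)) s(p c 0, p c 1) e := by
      intro e he hec
      induction e with
      | h u v =>
        obtain ⟨a1, a2⟩ := h2 u (hec u (by simp))
        obtain ⟨b1, b2⟩ := h2 v (hec v (by simp))
        have huv : G.Adj u v := he
        rw [← a2, ← b2] at huv
        rcases (h3 _ a1 _ b1).1 huv with h | h
        · have := rtg_of_listing hal (k c u) (by omega)
          rwa [h, a2, b2] at this
        · have := rtg_of_listing hal (k c v) (by omega)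
          rwa [h, a2, b2, Sym2.eq_swap (a := v)] at this
    intro e he f hf hec hfc
    exact (rtg_symm (hall e he hec)).trans (hall f hf hfc)

end SegPaths

open SegPaths in
/-- deleting the `p` path components of a planar graph `G` decreases the
segment number by exactly `p`. -/
theorem segNumber_eq_segNumber_del_paths_add {V : Type*} [Fintype V] (G : SimpleGraph V)
    (hG : ∃ ρ : V → ℝ × ℝ, IsPlanarDrawing G ρ) :
    segNumber G =
      segNumber (G.induce {v : V | ¬ IsPathComponent G (G.connectedComponentMk v)}) +
      Nat.card {c : G.ConnectedComponent // IsPathComponent G c} := by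
  obtain ⟨ρ₀, hρ₀⟩ := hG
  apply le_antisymm
  · obtain ⟨ρ, hρ, hn⟩ := Nat.sInf_mem (s := {n : ℕ | ∃ ρ : rest G → ℝ × ℝ,
      IsPlanarDrawing (G.induce (rest G)) ρ ∧ numSegments (G.induce (rest G)) ρ = n})
      ⟨_, _, isPlanarDrawing_restrict hρ₀ _, rfl⟩
    obtain ⟨σ, hσ, hs⟩ := exists_extension G hρ
    rw [hn] at hs
    exact Nat.sInf_le ⟨σ, hσ, hs⟩
  · obtain ⟨ρ, hρ, hn⟩ := Nat.sInf_mem (s := {n : ℕ | ∃ ρ : V → ℝ × ℝ,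
      IsPlanarDrawing G ρ ∧ numSegments G ρ = n}) ⟨_, _, hρ₀, rfl⟩
    have h1 : segNumber (G.induce (rest G)) ≤
        numSegments (G.induce (rest G)) (fun v : rest G => ρ v) :=
      Nat.sInf_le ⟨_, isPlanarDrawing_restrict hρ _, rfl⟩
    have h2 := card_le_outer G ρ
    have h3 := numSegments_split (ρ := ρ) (rest_closed G)
    change numSegments G ρ = segNumber G at hn
    change segNumber (G.induce (rest G)) + _ ≤ _
    omega
end
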